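/- arXiv:1902.07871 — 2 statements merged into one kernel-verified Lean document; each statement's English description precedes it below -/
import Mathlib

section
/- Let ρ be a computable, shift-invariant, ergodic Borel probability measure on 2^ℕ, and let μ be a Borel probability measure with μ ≪_ML ρ. Then lim_n K(μ↾n)/n and lim_n C(μ↾n)/n both exist and both equal the entropy H(ρ). -/
open MeasureTheory Filter

/-- Cantor space: the space of infinite binary sequences. -/
abbrev Cantor : Type := ℕ → Bool

/-- Finite binary strings. -/
abbrev BStr : Type := List Bool

/-- The cylinder set of sequences extending the string `x`. -/
def cyl (x : BStr) : Set Cantor := {Z | ∀ i : Fin x.length, Z i.1 = x.get i}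

/-- The string of the first `n` bits of `Z`. -/
def seg (Z : Cantor) (n : ℕ) : BStr := List.ofFn fun i : Fin n => Z i.1

/-- `lam` is the uniform (fair-coin product) measure: every cylinder `[x]`
has measure `2^{-|x|}`. -/
def IsUniform (lam : Measure Cantor) : Prop :=
  ∀ x : BStr, lam (cyl x) = (2 : ENNReal)⁻¹ ^ x.length

/-- `(G_m)` is a Martin-Löf test with respect to the measure `ρ`:
the sets `G_m` are uniformly effectively open and `ρ (G_m) ≤ 2^{-m}`. -/
def IsMLTest (ρ : Measure Cantor) (G : ℕ → Set Cantor) : Prop :=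
  (∃ σ : ℕ → ℕ → BStr, Computable₂ σ ∧ ∀ m, G m = ⋃ i, cyl (σ m i)) ∧
  ∀ m, ρ (G m) ≤ (2 : ENNReal)⁻¹ ^ m

/-- `μ` is Martin-Löf absolutely continuous in `ρ`: `inf_m μ(G_m) = 0`
for every `ρ`-Martin-Löf test `(G_m)`. -/
def MLAC (μ ρ : Measure Cantor) : Prop :=
  ∀ G : ℕ → Set Cantor, IsMLTest ρ G → ⨅ m, μ (G m) = 0

/-- `Z` is Martin-Löf random with respect to `lam`. -/
def MLRandom (lam : Measure Cantor) (Z : Cantor) : Prop :=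
  ∀ G : ℕ → Set Cantor, IsMLTest lam G → Z ∉ ⋂ m, G m

/-- `ρ` is a computable measure: `ρ [x]` is a computable real, uniformly in `x`. -/
def ComputableMeasure (ρ : Measure Cantor) : Prop :=
  ∃ q : BStr → ℕ → ℚ, Computable₂ q ∧
    ∀ x k, |(q x k : ℝ) - (ρ (cyl x)).toReal| ≤ (2 : ℝ)⁻¹ ^ k

/-- `U` is a universal plain machine. -/
def UniversalPlain (U : BStr →. BStr) : Prop :=
  Partrec U ∧ ∀ M : BStr →. BStr, Partrec M →
    ∃ c : ℕ, ∀ p x, x ∈ M p → ∃ q : BStr, q.length ≤ p.length + c ∧ x ∈ U q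

/-- The domain of `M` is an antichain under the prefix relation. -/
def PrefixFreeDom (M : BStr →. BStr) : Prop :=
  ∀ p q : BStr, (M p).Dom → (M q).Dom → p <+: q → p = q

/-- `U` is a universal prefix-free machine. -/
def UniversalPrefixFree (U : BStr →. BStr) : Prop :=
  Partrec U ∧ PrefixFreeDom U ∧
  ∀ M : BStr →. BStr, Partrec M → PrefixFreeDom M →
    ∃ c : ℕ, ∀ p x, x ∈ M p → ∃ q : BStr, q.length ≤ p.length + c ∧ x ∈ U q

/-- Kolmogorov complexity of the string `x` with respect to the machine `U`:
the minimal length of a `U`-description of `x`. -/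
noncomputable def cpx (U : BStr →. BStr) (x : BStr) : ℕ :=
  sInf {n | ∃ q : BStr, q.length = n ∧ x ∈ U q}

/-- A natural number `n` identified with the string `0^n`. -/
def numStr (n : ℕ) : BStr := List.replicate n false

/-- Complexity of the natural number `n` (i.e., of the string `0^n`). -/
noncomputable def cpxN (U : BStr →. BStr) (n : ℕ) : ℕ := cpx U (numStr n)

/-- The `μ`-average complexity of the strings of length `n`:
`Σ_{|x|=n} cpx(x) · μ[x]`. -/
noncomputable def avgCpx (U : BStr →. BStr) (μ : Measure Cantor) (n : ℕ) : ℝ :=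
  ∑ v : Fin n → Bool, (cpx U (List.ofFn v) : ℝ) * (μ (cyl (List.ofFn v))).toReal

/-- A measure `μ` is trivial for the complexity given by the machine `U`
(e.g. K-trivial when `U` is the universal prefix-free machine, C-trivial
when `U` is the universal plain machine). -/
def MeasTrivial (U : BStr →. BStr) (μ : Measure Cantor) : Prop :=
  ∃ c : ℝ, ∀ n : ℕ, avgCpx U μ n ≤ (cpxN U n : ℝ) + c

/-- The shift operator on Cantor space. -/
def shift (Z : Cantor) : Cantor := fun n => Z (n + 1)

/-- `H_n(ρ) = -(1/n) Σ_{|w|=n} ρ[w] log₂ ρ[w]`, the `n`-th entropy of `ρ`. -/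
noncomputable def entropyAt (ρ : Measure Cantor) (n : ℕ) : ℝ :=
  -(1 / (n : ℝ)) * ∑ v : Fin n → Bool,
    (ρ (cyl (List.ofFn v))).toReal * Real.logb 2 (ρ (cyl (List.ofFn v))).toReal



namespace CT

section Toolkit
variable {α β : Type*} [Primcodable α] [Primcodable β]

theorem add {f g : α → ℕ} (hf : Computable f) (hg : Computable g) :
    Computable fun a => f a + g a := Primrec.nat_add.to_comp.comp hf hg

theorem mul {f g : α → ℕ} (hf : Computable f) (hg : Computable g) :
    Computable fun a => f a * g a := Primrec.nat_mul.to_comp.comp hf hg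

theorem sub {f g : α → ℕ} (hf : Computable f) (hg : Computable g) :
    Computable fun a => f a - g a := Primrec.nat_sub.to_comp.comp hf hg

theorem div {f g : α → ℕ} (hf : Computable f) (hg : Computable g) :
    Computable fun a => f a / g a := Primrec.nat_div.to_comp.comp hf hg

theorem mod {f g : α → ℕ} (hf : Computable f) (hg : Computable g) :
    Computable fun a => f a % g a := Primrec.nat_mod.to_comp.comp hf hg

theorem dle {f g : α → ℕ} (hf : Computable f) (hg : Computable g) :
    Computable fun a => decide (f a ≤ g a) := Primrec.nat_le.decide.to_comp.comp hf hg

theorem dlt {f g : α → ℕ} (hf : Computable f) (hg : Computable g) :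
    Computable fun a => decide (f a < g a) := Primrec.nat_lt.decide.to_comp.comp hf hg

theorem deq [DecidableEq β] {f g : α → β} (hf : Computable f) (hg : Computable g) :
    Computable fun a => decide (f a = g a) := Primrec.eq.decide.to_comp.comp hf hg

theorem band {f g : α → Bool} (hf : Computable f) (hg : Computable g) :
    Computable fun a => (f a && g a) := Primrec.and.to_comp.comp hf hg

theorem bor {f g : α → Bool} (hf : Computable f) (hg : Computable g) :
    Computable fun a => (f a || g a) := Primrec.or.to_comp.comp hf hg

theorem bnot {f : α → Bool} (hf : Computable f) :
    Computable fun a => !(f a) := Primrec.not.to_comp.comp hf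

theorem pow2 {f : α → ℕ} (hf : Computable f) : Computable fun a => 2 ^ f a := by
  have h : Computable fun n : ℕ => 2 ^ n := by
    have h1 : Computable fun n : ℕ => (Nat.rec (motive := fun _ => ℕ) 1 (fun _ y => y * 2) n : ℕ) :=
      Computable.nat_rec Computable.id (Computable.const 1)
        (mul (Computable.snd.comp Computable.snd) (Computable.const 2)).to₂
    refine h1.of_eq fun n => ?_
    induction n with
    | zero => rfl
    | succ n ih => rw [pow_succ, ← ih]
  exact h.comp hf

theorem take {f : α → ℕ} {g : α → List β} (hf : Computable f) (hg : Computable g) :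
    Computable fun a => (g a).take (f a) := Primrec.list_take.to_comp.comp hf hg

theorem drop {f : α → ℕ} {g : α → List β} (hf : Computable f) (hg : Computable g) :
    Computable fun a => (g a).drop (f a) := Primrec.list_drop.to_comp.comp hf hg

theorem length {g : α → List β} (hg : Computable g) :
    Computable fun a => (g a).length := Computable.list_length.comp hg

theorem sum {f : α → ℕ → ℕ} (hf : Computable₂ f) {g : α → ℕ} (hg : Computable g) :
    Computable fun a => ∑ i ∈ Finset.range (g a), f a i := by
  have h1 : Computable fun a : α =>
      (Nat.rec (motive := fun _ => ℕ) 0 (fun i y => y + f a i) (g a) : ℕ) :=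
    Computable.nat_rec hg (Computable.const 0)
      (add (Computable.snd.comp Computable.snd)
        (hf.comp Computable.fst (Computable.fst.comp Computable.snd))).to₂
  refine h1.of_eq fun a => ?_
  induction g a with
  | zero => rfl
  | succ n ih => rw [Finset.sum_range_succ, ← ih]

theorem ball {p : α → ℕ → Bool} (hp : Computable₂ p) {g : α → ℕ} (hg : Computable g) :
    Computable fun a => decide (∀ i < g a, p a i = true) := by
  have h1 : Computable fun a : α =>
      (Nat.rec (motive := fun _ => Bool) true (fun i y => y && p a i) (g a) : Bool) :=
    Computable.nat_rec hg (Computable.const true)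
      (band (Computable.snd.comp Computable.snd)
        (hp.comp Computable.fst (Computable.fst.comp Computable.snd))).to₂
  refine h1.of_eq fun a => ?_
  induction g a with
  | zero => simp
  | succ n ih =>
    show (_ && _) = _
    rw [ih, Bool.eq_iff_iff]
    simp only [Bool.and_eq_true, decide_eq_true_eq]
    constructor
    · rintro ⟨h1, h2⟩ i hi
      rcases Nat.lt_succ_iff_lt_or_eq.1 hi with h | rfl
      · exact h1 i h
      · exact h2
    · intro h
      exact ⟨fun i hi => h i (by omega), h n (by omega)⟩

theorem bex {p : α → ℕ → Bool} (hp : Computable₂ p) {g : α → ℕ} (hg : Computable g) :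
    Computable fun a => decide (∃ i < g a, p a i = true) := by
  have h := bnot (ball (p := fun a i => !(p a i)) (bnot hp) hg)
  refine h.of_eq fun a => ?_
  rw [Bool.eq_iff_iff]
  simp

/-- Unbounded search. -/
theorem search {p : α → ℕ → Bool} (hp : Computable₂ p) (h : ∀ a, ∃ n, p a n = true) :
    ∃ f : α → ℕ, Computable f ∧ ∀ a, p a (f a) = true := by
  have h1 : Partrec fun a => Nat.rfind (fun n => Part.some (p a n)) :=
    Partrec.rfind hp.partrec₂
  refine ⟨fun a => Nat.find (h a), h1.of_eq_tot fun a => ?_, fun a => Nat.find_spec (h a)⟩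
  refine Nat.mem_rfind.2 ⟨by simpa using Nat.find_spec (h a), fun {m} hm => ?_⟩
  simpa using Nat.find_min (h a) hm

/-- Bounded search with an option. -/
theorem bfind {p : α → ℕ → Bool} (hp : Computable₂ p) {g : α → ℕ} (hg : Computable g) :
    ∃ f : α → Option ℕ, Computable f ∧
      (∀ a n, f a = some n → n < g a ∧ p a n = true ∧ ∀ m < n, p a m = false) ∧
      (∀ a, f a = none → ∀ n < g a, p a n = false) := by
  let F : α → ℕ → Option ℕ := fun a k =>
    Nat.rec (motive := fun _ => Option ℕ) none
      (fun i y => Option.casesOn y (bif p a i then some i else none) (fun z => some z)) k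
  have hF : Computable fun a => F a (g a) := by
    refine Computable.nat_rec (σ := Option ℕ) (g := fun _ => none)
      (h := fun a q => Option.casesOn q.2 (bif p a q.1 then some q.1 else none) (fun z => some z))
      hg (Computable.const none) ?_
    refine Computable.option_casesOn (o := fun q : α × ℕ × Option ℕ => q.2.2)
      (f := fun q : α × ℕ × Option ℕ => (bif p q.1 q.2.1 then some q.2.1 else none))
      (g := fun _ z => some z) (Computable.snd.comp Computable.snd) ?_ ?_
    · exact Computable.cond (hp.comp Computable.fst (Computable.fst.comp Computable.snd))
        (Computable.option_some.comp (Computable.fst.comp Computable.snd)) (Computable.const none)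
    · exact (Computable.option_some.comp Computable.snd).to₂
  have key : ∀ a k, (∀ n, F a k = some n → n < k ∧ p a n = true ∧ ∀ m < n, p a m = false) ∧
      (F a k = none → ∀ n < k, p a n = false) := by
    intro a k
    induction k with
    | zero => exact ⟨fun n h => (Option.some_ne_none n h.symm).elim, fun _ n hn => by omega⟩
    | succ k ih =>
      have e : F a (k+1) = Option.casesOn (F a k) (bif p a k then some k else none)
        (fun z => some z) := rfl
      rw [e]
      rcases hk : F a k with _ | z
      · have h0 := ih.2 hk
        rcases hp : p a k with _ | _
        · refine ⟨fun n h => by simp at h, fun _ n hn => ?_⟩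
          rcases Nat.lt_succ_iff_lt_or_eq.1 hn with h | rfl
          · exact h0 n h
          · exact hp
        · refine ⟨fun n h => ?_, fun h => by simp at h⟩
          simp at h
          subst h
          exact ⟨by omega, hp, h0⟩
      · refine ⟨fun n h => ?_, fun h => by simp at h⟩
        simp at h
        subst h
        have := ih.1 _ hk
        exact ⟨by omega, this.2⟩
  exact ⟨fun a => F a (g a), hF, fun a => (key a _).1, fun a => (key a _).2⟩

end Toolkit

/-- All strings of length `n`. -/
def strs : ℕ → List BStr
  | 0 => [[]]
  | n+1 => (strs n).map (List.cons false) ++ (strs n).map (List.cons true)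

theorem primrec_strs : Primrec strs := by
  have h : Primrec (fun n => Nat.rec (motive := fun _ => List BStr) [[]]
    (fun _ l => l.map (List.cons false) ++ l.map (List.cons true)) n) := by
    refine Primrec.nat_rec₁ _ ?_
    refine Primrec.list_append.comp ?_ ?_
    · exact Primrec.list_map Primrec.snd (Primrec.list_cons.comp (Primrec.const _) Primrec.snd).to₂
    · exact Primrec.list_map Primrec.snd (Primrec.list_cons.comp (Primrec.const _) Primrec.snd).to₂
  refine h.of_eq fun n => ?_
  induction n with
  | zero => rfl
  | succ n ih => show _ ++ _ = _; rw [ih]; rfl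

theorem mem_strs {n : ℕ} {x : BStr} : x ∈ strs n ↔ x.length = n := by
  induction n generalizing x with
  | zero => simp [strs]
  | succ n ih =>
    rcases x with _ | ⟨b, x⟩
    · simp [strs]
    · cases b <;> simp [strs, ih]

theorem nodup_strs (n : ℕ) : (strs n).Nodup := by
  induction n with
  | zero => simp [strs]
  | succ n ih =>
    refine List.Nodup.append (ih.map (List.cons_injective)) (ih.map (List.cons_injective)) ?_
    intro x h1 h2
    simp at h1 h2
    obtain ⟨_, _, rfl⟩ := h1
    obtain ⟨_, _, h⟩ := h2
    simp at h

theorem length_strs (n : ℕ) : (strs n).length = 2 ^ n := by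
  induction n with
  | zero => simp [strs]
  | succ n ih => simp [strs, ih, pow_succ, mul_two]

theorem sum_strs {M : Type*} [AddCommMonoid M] (n : ℕ) (f : BStr → M) :
    ((strs n).map f).sum = ∑ v : Fin n → Bool, f (List.ofFn v) := by
  induction n generalizing f with
  | zero => simp [strs]
  | succ n ih =>
    rw [← (Fin.consEquiv (fun _ : Fin (n+1) => Bool)).sum_comp, Fintype.sum_prod_type,
      Fintype.sum_bool]
    simp only [strs, List.map_append, List.map_map, List.sum_append, ih, Function.comp_def]
    rw [add_comm]
    simp [Fin.consEquiv, List.ofFn_succ]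

theorem sum_idx_strs {M : Type*} [AddCommMonoid M] (n : ℕ) (f : BStr → M) :
    ∑ i ∈ Finset.range (2 ^ n), f ((strs n).getD i []) = ∑ v : Fin n → Bool, f (List.ofFn v) := by
  rw [← sum_strs, ← length_strs n]
  generalize strs n = l
  induction l with
  | nil => simp
  | cons a l ih => rw [List.length_cons, Finset.sum_range_succ', List.map_cons, List.sum_cons, ← ih, add_comm]; simp

end CT


namespace CT

/-- the (structural) code of a rational -/
def oldEnc (r : ℚ) : ℕ := @Encodable.encode ℚ Rat.instEncodable r

theorem oldEnc_eq (r : ℚ) : oldEnc r = Nat.pair (Encodable.encode r.num) r.den := rfl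

/-- Boolean test for being a structural code of a rational. -/
def isCode (m : ℕ) : Bool :=
  decide (0 < m.unpair.2) && decide (∀ d < m.unpair.2 + 1,
    (!(decide (((m.unpair.1 + 1) / 2) % d = 0) && decide (m.unpair.2 % d = 0)) || decide (d ≤ 1)) = true)

theorem computable_isCode : Computable isCode := by
  have h1 : Computable fun m : ℕ => m.unpair.1 := Computable.fst.comp Computable.unpair
  have h2 : Computable fun m : ℕ => m.unpair.2 := Computable.snd.comp Computable.unpair
  have c := @Computable.fst ℕ ℕ _ _
  have d := @Computable.snd ℕ ℕ _ _
  refine band (dlt (Computable.const 0) h2) (ball ?_ (add h2 (Computable.const 1)))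
  refine bor (bnot (band ?_ ?_)) (dle d (Computable.const 1))
  · exact deq (mod (div (add (h1.comp c) (Computable.const 1)) (Computable.const 2)) d)
      (Computable.const 0)
  · exact deq (mod (h2.comp c) d) (Computable.const 0)

theorem natAbs_code (z : ℤ) : (Encodable.encode z + 1) / 2 = z.natAbs := by
  rcases z with z | z
  · have : Encodable.encode (Int.ofNat z) = 2 * z := rfl
    rw [this]; simp; omega
  · have : Encodable.encode (Int.negSucc z) = 2 * z + 1 := rfl
    rw [this]; simp [Int.natAbs_negSucc]; omega

theorem encode_int_surj (m : ℕ) : ∃ z : ℤ, Encodable.encode z = m := by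
  rcases Nat.even_or_odd' m with ⟨n, rfl | rfl⟩
  · exact ⟨Int.ofNat n, rfl⟩
  · exact ⟨Int.negSucc n, rfl⟩

theorem coprime_test (a b : ℕ) (hb : 0 < b) :
    Nat.Coprime a b ↔ ∀ d < b + 1, (a % d = 0 ∧ b % d = 0) → d ≤ 1 := by
  constructor
  · rintro h d - ⟨h1, h2⟩
    have := Nat.dvd_gcd (Nat.dvd_of_mod_eq_zero h1) (Nat.dvd_of_mod_eq_zero h2)
    rw [h.gcd_eq_one] at this
    exact Nat.le_of_dvd one_pos this
  · intro h
    have h1 : Nat.gcd a b ≤ b := Nat.gcd_le_right _ hb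
    have h2 := h (Nat.gcd a b) (by omega) ⟨Nat.mod_eq_zero_of_dvd (Nat.gcd_dvd_left _ _),
      Nat.mod_eq_zero_of_dvd (Nat.gcd_dvd_right _ _)⟩
    have h3 : 0 < Nat.gcd a b := Nat.gcd_pos_of_pos_right _ hb
    exact le_antisymm h2 h3

theorem isCode_iff (m : ℕ) : isCode m = true ↔ m ∈ Set.range oldEnc := by
  obtain ⟨z, hz⟩ := encode_int_surj m.unpair.1
  have e : isCode m = true ↔ 0 < m.unpair.2 ∧ Nat.Coprime z.natAbs m.unpair.2 := by
    unfold isCode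
    rw [← natAbs_code, hz]
    simp only [Bool.and_eq_true, decide_eq_true_eq]
    refine and_congr_right fun h => ?_
    rw [coprime_test _ _ h]
    refine forall_congr' fun d => forall_congr' fun _ => ?_
    simp [imp_iff_not_or]
  rw [e]
  constructor
  · rintro ⟨h1, h2⟩
    refine ⟨⟨z, m.unpair.2, h1.ne', h2⟩, ?_⟩
    rw [oldEnc_eq, hz, Nat.pair_unpair]
  · rintro ⟨r, hr⟩
    rw [oldEnc_eq] at hr
    rw [← hr] at hz ⊢
    simp only [Nat.unpair_pair] at hz ⊢
    rw [Encodable.encode_injective hz]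
    exact ⟨r.den_pos, r.reduced⟩

/-- the official code of a rational -/
def newEnc (r : ℚ) : ℕ := @Encodable.encode ℚ Primcodable.toEncodable r

theorem computable_newEnc : Computable newEnc := Computable.encode

theorem newEnc_eq (r : ℚ) : newEnc r =
    (List.range (oldEnc r)).countP isCode := by
  have : newEnc r =
    @List.countP _ (fun m => @decide (m ∈ Set.range oldEnc) 
     (@Encodable.decidableRangeEncode ℚ Rat.instEncodable m)) (List.range (oldEnc r)) := rfl
  rw [this]
  congr 1
  funext m
  rw [Bool.eq_iff_iff, isCode_iff]
  exact @decide_eq_true_iff (m ∈ Set.range oldEnc) (Encodable.decidableRangeEncode ℚ m)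

theorem countP_range (p : ℕ → Bool) (n : ℕ) :
    (List.range n).countP p = ∑ i ∈ Finset.range n, (bif p i then 1 else 0) := by
  induction n with
  | zero => simp
  | succ n ih =>
    rw [List.range_succ, List.countP_append, ih, Finset.sum_range_succ]
    cases h : p n <;> simp [h]

theorem countP_lt (p : ℕ → Bool) {m n : ℕ} (h : m < n) (hm : p m = true) :
    (List.range m).countP p < (List.range n).countP p := by
  rw [countP_range, countP_range]
  have h1 : ∑ i ∈ Finset.range (m+1), (bif p i then 1 else 0) ≤
      ∑ i ∈ Finset.range n, (bif p i then 1 else 0) :=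
    Finset.sum_le_sum_of_subset (by simpa using h)
  rw [Finset.sum_range_succ, hm] at h1
  simp only [cond_true] at h1
  omega

attribute [irreducible] newEnc oldEnc

theorem computable_oldEnc : Computable oldEnc := by
  have hc : Computable fun n : ℕ => (List.range n).countP isCode := by
    refine (sum (f := fun _ i => bif isCode i then 1 else 0) ?_ Computable.id).of_eq
      fun n => (countP_range _ _).symm
    exact (Computable.cond (computable_isCode.comp Computable.snd) (Computable.const 1)
      (Computable.const 0)).to₂
  obtain ⟨f, hf, hf2⟩ := search (α := ℚ)
    (p := fun r m => isCode m && decide ((List.range m).countP isCode = newEnc r)) 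
    (by
      refine band (computable_isCode.comp Computable.snd) (deq (hc.comp Computable.snd) ?_)
      exact computable_newEnc.comp Computable.fst)
    (fun r => ⟨oldEnc r, by
      rw [newEnc_eq]
      simp [(isCode_iff (oldEnc r)).2 ⟨r, rfl⟩]⟩)
  refine hf.of_eq fun r => ?_
  have h1 := hf2 r
  simp only [Bool.and_eq_true, decide_eq_true_eq] at h1
  rw [newEnc_eq] at h1
  have h2 := (isCode_iff (oldEnc r)).2 ⟨r, rfl⟩
  rcases lt_trichotomy (f r) (oldEnc r) with h | h | h
  · have := countP_lt isCode h h1.1; omega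
  · exact h
  · have := countP_lt isCode h h2; omega

theorem computable_floor : Computable₂ fun (r : ℚ) (k : ℕ) => ⌊r * 2 ^ k⌋₊ := by
  have h1 : Computable fun p : ℚ × ℕ => (oldEnc p.1).unpair.1 :=
    Computable.fst.comp (Computable.unpair.comp (computable_oldEnc.comp Computable.fst))
  have h2 : Computable fun p : ℚ × ℕ => (oldEnc p.1).unpair.2 :=
    Computable.snd.comp (Computable.unpair.comp (computable_oldEnc.comp Computable.fst))
  have h3 : Computable fun p : ℚ × ℕ => bif decide ((oldEnc p.1).unpair.1 % 2 = 0) then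
      ((oldEnc p.1).unpair.1 / 2 * 2 ^ p.2) / (oldEnc p.1).unpair.2 else 0 := by
    refine Computable.cond (deq (mod h1 (Computable.const 2)) (Computable.const 0)) ?_ (Computable.const 0)
    exact div (mul (div h1 (Computable.const 2)) (pow2 Computable.snd)) h2
  refine h3.of_eq ?_
  rintro ⟨r, k⟩
  simp only [oldEnc_eq, Nat.unpair_pair]
  rcases hz : r.num with z | z
  · have e : Encodable.encode (Int.ofNat z) = 2 * z := rfl
    have : r * 2 ^ k = ((z * 2 ^ k : ℕ) : ℚ) / (r.den : ℕ) := by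
      conv_lhs => rw [← Rat.num_div_den r, hz]
      push_cast; simp; ring
    rw [e, this, Nat.floor_div_natCast, Nat.floor_natCast]
    simp
  · have e : Encodable.encode (Int.negSucc z) = 2 * z + 1 := rfl
    rw [e]
    have h0 : r < 0 := by rw [← Rat.num_neg, hz]; exact Int.negSucc_lt_zero z
    have : r * 2 ^ k ≤ 0 := mul_nonpos_of_nonpos_of_nonneg h0.le (by positivity)
    rw [Nat.floor_of_nonpos this]
    simp [Nat.add_mod]

/-- dyadic approximation of a computable measure -/
theorem exists_approx {ρ : MeasureTheory.Measure Cantor} (h : ComputableMeasure ρ) :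
    ∃ a : BStr → ℕ → ℕ, Computable₂ a ∧
      ∀ x k, |(a x k : ℝ) / 2 ^ k - (ρ (cyl x)).toReal| ≤ 2 * (2 : ℝ)⁻¹ ^ k := by
  obtain ⟨q, hq, hq2⟩ := h
  refine ⟨fun x k => ⌊q x k * 2 ^ k⌋₊, ?_, fun x k => ?_⟩
  · exact computable_floor.comp (hq.comp Computable.fst Computable.snd) Computable.snd
  · have h1 := hq2 x k
    have h0 : 0 ≤ (ρ (cyl x)).toReal := ENNReal.toReal_nonneg
    set R := (ρ (cyl x)).toReal
    have hp : (0:ℝ) < 2 ^ k := by positivity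
    have e : (2:ℝ)⁻¹ ^ k = 1 / 2 ^ k := by simp
    rw [e] at h1 ⊢
    have hf : (⌊q x k * 2 ^ k⌋₊ : ℝ) = (⌊(q x k : ℝ) * 2 ^ k⌋₊ : ℝ) := by
      have : (⌊((q x k * 2 ^ k : ℚ) : ℝ)⌋₊) = ⌊q x k * 2 ^ k⌋₊ := by
        rw [← Int.floor_toNat, ← Int.floor_toNat, Rat.floor_cast]
      rw [← this]; push_cast; rfl
    rw [hf]
    set Q := (q x k : ℝ)
    rw [abs_le] at h1 ⊢
    have hlt := Nat.lt_floor_add_one (Q * 2 ^ k)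
    have e2 : Q = Q * 2 ^ k / 2 ^ k := by field_simp
    have hsum : ∀ t : ℝ, t < (⌊Q * 2 ^ k⌋₊ : ℝ) + 1 → t / 2 ^ k ≤ (⌊Q * 2 ^ k⌋₊ : ℝ) / 2 ^ k + 1 / 2 ^ k := by
      intro t ht
      rw [← add_div]
      gcongr
    have hs := hsum _ hlt
    rw [← e2] at hs
    have hpos : 0 < 1 / (2:ℝ) ^ k := by positivity
    constructor
    · linarith
    · by_cases hQ : 0 ≤ Q
      · have := Nat.floor_le (a := Q * 2 ^ k) (by positivity)
        have : (⌊Q * 2 ^ k⌋₊ : ℝ) / 2 ^ k ≤ Q := by rw [e2]; gcongr; rw [← e2]; exact this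
        linarith
      · have : Q * 2 ^ k ≤ 0 := mul_nonpos_of_nonpos_of_nonneg (by linarith) hp.le
        rw [Nat.floor_of_nonpos this]
        simp only [Nat.cast_zero, zero_div]
        linarith

end CT


namespace CT
open MeasureTheory

theorem seg_length (Z : Cantor) (n : ℕ) : (seg Z n).length = n := by simp [seg]

theorem mem_cyl {x : BStr} {Z : Cantor} : Z ∈ cyl x ↔ seg Z x.length = x := by
  constructor
  · intro h
    refine List.ext_getElem (by simp [seg]) fun i h1 h2 => ?_
    have := h ⟨i, h2⟩
    simpa [seg] using this
  · intro h i
    have : (seg Z x.length)[i.1]'(by simp [seg]) = x[i.1] := by simp only [h]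
    simpa [seg] using this

theorem mem_cyl_seg (Z : Cantor) (n : ℕ) : Z ∈ cyl (seg Z n) := by
  rw [mem_cyl, seg_length]

theorem mem_cyl_ofFn {n : ℕ} (v : Fin n → Bool) (Z : Cantor) :
    Z ∈ cyl (List.ofFn v) ↔ (fun i : Fin n => Z i.1) = v := by
  rw [mem_cyl, List.length_ofFn, seg, List.ofFn_inj]

theorem measurable_restr (n : ℕ) : Measurable (fun (Z : Cantor) (i : Fin n) => Z i.1) :=
  measurable_pi_lambda _ fun i => measurable_pi_apply _

theorem measurable_seg {β : Type*} [MeasurableSpace β] (F : BStr → β) (n : ℕ) :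
    Measurable fun Z : Cantor => F (seg Z n) := by
  have : (fun Z : Cantor => F (seg Z n)) =
    (fun v : Fin n → Bool => F (List.ofFn v)) ∘ (fun (Z : Cantor) (i : Fin n) => Z i.1) := rfl
  rw [this]
  exact (measurable_of_countable _).comp (measurable_restr n)

theorem measurableSet_seg (P : BStr → Prop) (n : ℕ) : MeasurableSet {Z : Cantor | P (seg Z n)} :=
  measurableSet_setOfPred.2 (measurable_seg P n)

theorem measurableSet_cyl (x : BStr) : MeasurableSet (cyl x) := by
  have : cyl x = {Z | seg Z x.length = x} := by ext Z; exact mem_cyl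
  rw [this]
  exact measurableSet_seg (fun y => y = x) _

theorem integrable_seg (μ : Measure Cantor) [IsProbabilityMeasure μ] (F : BStr → ℝ) (n : ℕ) :
    Integrable (fun Z => F (seg Z n)) μ := by
  refine Integrable.of_bound (measurable_seg F n).aestronglyMeasurable
    (∑ v : Fin n → Bool, |F (List.ofFn v)|) (ae_of_all _ fun Z => ?_)
  exact Finset.single_le_sum (f := fun v : Fin n → Bool => |F (List.ofFn v)|)
    (fun _ _ => abs_nonneg _) (Finset.mem_univ (fun i : Fin n => Z i.1))

theorem integral_seg (μ : Measure Cantor) [IsProbabilityMeasure μ] (F : BStr → ℝ) (n : ℕ) :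
    ∫ Z, F (seg Z n) ∂μ = ∑ v : Fin n → Bool, F (List.ofFn v) * (μ (cyl (List.ofFn v))).toReal := by
  have e : ∀ Z : Cantor, F (seg Z n) = ∑ v : Fin n → Bool,
      (cyl (List.ofFn v)).indicator (fun _ => F (List.ofFn v)) Z := by
    intro Z
    rw [Finset.sum_eq_single (fun i : Fin n => Z i.1)]
    · rw [Set.indicator_of_mem]
      · rfl
      · rw [mem_cyl_ofFn]
    · intro v _ hv
      rw [Set.indicator_of_notMem]
      rw [mem_cyl_ofFn]
      exact hv.symm
    · simp
  simp_rw [e]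
  rw [integral_finsetSum]
  · refine Finset.sum_congr rfl fun v _ => ?_
    rw [integral_indicator (measurableSet_cyl _)]
    simp [Measure.real, mul_comm]
  · intro v _
    exact (integrable_const _).indicator (measurableSet_cyl _)

theorem measurable_shift : Measurable shift :=
  measurable_pi_lambda _ fun i => measurable_pi_apply _

theorem shift_iterate (i : ℕ) (Z : Cantor) (n : ℕ) : (shift^[i] Z) n = Z (n + i) := by
  induction i generalizing Z with
  | zero => rfl
  | succ i ih => rw [Function.iterate_succ_apply, ih, shift]; congr 1

theorem seg_succ (Z : Cantor) (n : ℕ) : seg Z (n+1) = Z 0 :: seg (shift Z) n := by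
  simp [seg, List.ofFn_succ, shift]

theorem seg_take (Z : Cantor) {m n : ℕ} (h : m ≤ n) : (seg Z n).take m = seg Z m := by
  refine List.ext_getElem (by simp [seg, h]) fun i h1 h2 => by simp [seg]

theorem seg_drop (Z : Cantor) (n i : ℕ) : (seg Z n).drop i = seg (shift^[i] Z) (n - i) := by
  refine List.ext_getElem (by simp [seg]) fun j h1 h2 => by simp [seg, shift_iterate, add_comm]

theorem seg_add (Z : Cantor) (n m : ℕ) : seg Z (n+m) = seg Z n ++ seg (shift^[n] Z) m := by
  rw [← List.take_append_drop n (seg Z (n+m)), seg_take _ (by omega), seg_drop]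
  simp

theorem cyl_nil : cyl [] = Set.univ := by
  ext Z; simp [cyl]

theorem mem_cyl_cons {b : Bool} {x : BStr} {Z : Cantor} :
    Z ∈ cyl (b :: x) ↔ Z 0 = b ∧ shift Z ∈ cyl x := by
  rw [mem_cyl, mem_cyl, List.length_cons, seg_succ]
  simp

theorem cyl_cons_add {ρ : Measure Cantor} (h : MeasurePreserving shift ρ ρ) (x : BStr) :
    ρ (cyl (false :: x)) + ρ (cyl (true :: x)) = ρ (cyl x) := by
  rw [← h.measure_preimage (measurableSet_cyl x).nullMeasurableSet, ← measure_union _ (measurableSet_cyl _)]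
  · congr 1
    ext Z
    simp only [Set.mem_union, mem_cyl_cons, Set.mem_preimage]
    cases Z 0 <;> simp
  · rw [Set.disjoint_left]
    intro Z h1 h2
    rw [mem_cyl_cons] at h1 h2
    rw [h1.1] at h2
    simp at h2

/-- prefix monotonicity -/
theorem cyl_subset_of_ext {x y : BStr} (h : x <+: y) : cyl y ⊆ cyl x := by
  intro Z hZ
  rw [mem_cyl] at *
  obtain ⟨t, rfl⟩ := h
  rw [← seg_take Z (show x.length ≤ (x ++ t).length by simp), hZ]
  simp

end CT

namespace CT
open MeasureTheory Filter

/-- the frequency of visits in `A` -/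
noncomputable def freq (A : Set Cantor) (N : ℕ) (Z : Cantor) : ℝ :=
  (N : ℝ)⁻¹ * ∑ j ∈ Finset.range N, A.indicator (fun _ => (1:ℝ)) (shift^[j] Z)

theorem measurable_freq {A : Set Cantor} (hA : MeasurableSet A) (N : ℕ) : Measurable (freq A N) := by
  unfold freq
  refine Measurable.const_mul (Finset.measurable_sum _ fun j _ => ?_) _
  exact (measurable_const.indicator hA).comp (measurable_shift.iterate j)

theorem freq_nonneg (A : Set Cantor) (N : ℕ) (Z : Cantor) : 0 ≤ freq A N Z := by
  unfold freq
  exact mul_nonneg (by positivity) (Finset.sum_nonneg fun j _ => Set.indicator_nonneg (fun _ _ => zero_le_one) _)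

theorem freq_le_one (A : Set Cantor) (N : ℕ) (Z : Cantor) : freq A N Z ≤ 1 := by
  unfold freq
  have : ∑ j ∈ Finset.range N, A.indicator (fun _ => (1:ℝ)) (shift^[j] Z) ≤ N := by
    calc _ ≤ ∑ j ∈ Finset.range N, (1:ℝ) :=
          Finset.sum_le_sum fun j _ => Set.indicator_le_self' (fun _ _ => zero_le_one) _
      _ = N := by simp
  rcases Nat.eq_zero_or_pos N with rfl | h
  · simp
  · have : (0:ℝ) < N := by exact_mod_cast h
    rw [inv_mul_le_iff₀ this]; linarith

theorem integrable_freq {ρ : Measure Cantor} [IsProbabilityMeasure ρ] {A : Set Cantor}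
    (hA : MeasurableSet A) (N : ℕ) : Integrable (freq A N) ρ := by
  refine Integrable.of_bound (measurable_freq hA N).aestronglyMeasurable 1 (ae_of_all _ fun Z => ?_)
  rw [Real.norm_eq_abs, abs_of_nonneg (freq_nonneg _ _ _)]
  exact freq_le_one _ _ _

theorem integral_freq {ρ : Measure Cantor} [IsProbabilityMeasure ρ] (h : MeasurePreserving shift ρ ρ)
    {A : Set Cantor} (hA : MeasurableSet A) {N : ℕ} (hN : 0 < N) :
    ∫ Z, freq A N Z ∂ρ = ρ.real A := by
  unfold freq
  rw [integral_const_mul, integral_finsetSum]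
  · have : ∀ j, ∫ Z, A.indicator (fun _ => (1:ℝ)) (shift^[j] Z) ∂ρ = ρ.real A := by
      intro j
      have e : (fun Z => A.indicator (fun _ => (1:ℝ)) (shift^[j] Z)) =
        ((shift^[j]) ⁻¹' A).indicator (fun _ => (1:ℝ)) := by
        ext Z; simp [Set.indicator]; rfl
      rw [e, integral_indicator ((h.iterate j).measurable hA)]
      simp only [integral_const, smul_eq_mul, mul_one, Measure.real, Measure.restrict_apply_univ]
      rw [(h.iterate j).measure_preimage hA.nullMeasurableSet]
    simp only [this, Finset.sum_const, Finset.card_range, nsmul_eq_mul]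
    rw [← mul_assoc, inv_mul_cancel₀ (by positivity), one_mul]
  · intro j _
    exact (h.iterate j).integrable_comp_of_integrable ((integrable_const (1:ℝ)).indicator hA)

theorem mean_ergodic {ρ : Measure Cantor} [IsProbabilityMeasure ρ] (herg : Ergodic shift ρ)
    {A : Set Cantor} (hA : MeasurableSet A) :
    Tendsto (fun N => ∫ Z, |freq A N Z - ρ.real A| ∂ρ) atTop (nhds 0) := by
  have hmp := herg.toMeasurePreserving
  let T : Lp ℝ 2 ρ →L[ℝ] Lp ℝ 2 ρ := (Lp.compMeasurePreservingₗᵢ ℝ shift hmp).toContinuousLinearMap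
  let f : Lp ℝ 2 ρ := indicatorConstLp 2 hA (measure_ne_top ρ A) 1
  have hT : ‖T‖ ≤ 1 := LinearIsometry.norm_toContinuousLinearMap_le _
  have h1 := T.tendsto_birkhoffAverage_orthogonalProjection hT f
  set g := (((T : Lp ℝ 2 ρ →ₗ[ℝ] Lp ℝ 2 ρ).eqLocus ((1 : Lp ℝ 2 ρ →L[ℝ] Lp ℝ 2 ρ) : Lp ℝ 2 ρ →ₗ[ℝ] Lp ℝ 2 ρ)).orthogonalProjectionOnto f) with hg
  have h2 : T g.1 = g.1 := LinearMap.mem_eqLocus.1 g.2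
  obtain ⟨c, hc⟩ : ∃ c : ℝ, (g.1 : Cantor → ℝ) =ᵐ[ρ] fun _ => c := by
    have h3 : (g.1 : Cantor → ℝ) ∘ shift =ᵐ[ρ] g.1 := by
      have := Lp.coeFn_compMeasurePreserving g.1 hmp
      refine this.symm.trans ?_
      have e : Lp.compMeasurePreserving shift hmp g.1 = g.1 := h2
      rw [e]
    exact herg.ae_eq_const_of_ae_eq_comp_ae (Lp.aestronglyMeasurable g.1) h3
  -- a.e. formula for the average
  have havg : ∀ N, ((birkhoffAverage ℝ T id N f : Lp ℝ 2 ρ) : Cantor → ℝ) =ᵐ[ρ] freq A N := by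
    intro N
    unfold birkhoffAverage birkhoffSum
    have hj : ∀ j, ((T^[j] f : Lp ℝ 2 ρ) : Cantor → ℝ) =ᵐ[ρ]
        fun Z => A.indicator (fun _ => (1:ℝ)) (shift^[j] Z) := by
      intro j
      have e : (T^[j] f : Lp ℝ 2 ρ) = Lp.compMeasurePreserving (shift^[j]) (hmp.iterate j) f := by
        rw [← Lp.compMeasurePreserving_iterate hmp j]; rfl
      rw [e]
      refine (Lp.coeFn_compMeasurePreserving f (hmp.iterate j)).trans ?_
      exact (hmp.iterate j).quasiMeasurePreserving.ae_eq_comp indicatorConstLp_coeFn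
    have hsum : ∀ M, ((∑ j ∈ Finset.range M, id (T^[j] f) : Lp ℝ 2 ρ) : Cantor → ℝ) =ᵐ[ρ]
        fun Z => ∑ j ∈ Finset.range M, A.indicator (fun _ => (1:ℝ)) (shift^[j] Z) := by
      intro M
      induction M with
      | zero => simp only [Finset.range_zero, Finset.sum_empty]; exact Lp.coeFn_zero ℝ 2 ρ
      | succ M ih =>
        rw [Finset.sum_range_succ]
        filter_upwards [Lp.coeFn_add (∑ j ∈ Finset.range M, id (T^[j] f)) (id (T^[M] f)), ih, hj M] with Z a b c
        rw [a, Finset.sum_range_succ, Pi.add_apply, b, ← c]; rfl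
    filter_upwards [Lp.coeFn_smul ((N:ℝ)⁻¹) (∑ j ∈ Finset.range N, id (T^[j] f)), hsum N] with Z a b
    rw [a, Pi.smul_apply, b]; rfl
  have h3 : Tendsto (fun N => ‖(birkhoffAverage ℝ T id N f : Lp ℝ 2 ρ) - g.1‖) atTop (nhds 0) := by
    rw [← tendsto_iff_norm_sub_tendsto_zero]; exact h1
  have h4 : ∀ N, ∫ Z, |freq A N Z - c| ∂ρ ≤ ‖(birkhoffAverage ℝ T id N f : Lp ℝ 2 ρ) - g.1‖ := by
    intro N
    have hae : (((birkhoffAverage ℝ T id N f : Lp ℝ 2 ρ) - g.1 : Lp ℝ 2 ρ) : Cantor → ℝ) =ᵐ[ρ]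
        fun Z => freq A N Z - c := by
      filter_upwards [Lp.coeFn_sub (birkhoffAverage ℝ T id N f : Lp ℝ 2 ρ) g.1, havg N, hc] with Z a b d
      rw [a, Pi.sub_apply, b, d]
    have hm : AEStronglyMeasurable (fun Z => freq A N Z - c) ρ :=
      ((measurable_freq hA N).sub_const c).aestronglyMeasurable
    rw [Lp.norm_def, eLpNorm_congr_ae hae]
    have e1 : ∫ Z, |freq A N Z - c| ∂ρ = (eLpNorm (fun Z => freq A N Z - c) 1 ρ).toReal := by
      rw [eLpNorm_one_eq_lintegral_enorm, ← integral_norm_eq_lintegral_enorm hm]; rfl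
    rw [e1]
    refine ENNReal.toReal_mono ?_ (eLpNorm_le_eLpNorm_of_exponent_le (by norm_num) hm)
    rw [← eLpNorm_congr_ae hae]
    exact Lp.eLpNorm_ne_top _
  have h5 : Tendsto (fun N => ∫ Z, |freq A N Z - c| ∂ρ) atTop (nhds 0) :=
    squeeze_zero (fun N => integral_nonneg fun _ => abs_nonneg _) h4 h3
  have hcA : ρ.real A = c := by
    have : Tendsto (fun N : ℕ => |ρ.real A - c|) atTop (nhds 0) := by
      refine squeeze_zero' (Eventually.of_forall fun _ => abs_nonneg _) ?_ h5
      filter_upwards [eventually_gt_atTop 0] with N hN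
      have e : ρ.real A - c = ∫ Z, (freq A N Z - c) ∂ρ := by
        rw [integral_sub (integrable_freq hA N) (integrable_const _), integral_freq hmp hA hN]; simp
      rw [e]
      exact abs_integral_le_integral_abs
    have := tendsto_nhds_unique this tendsto_const_nhds
    exact sub_eq_zero.1 (abs_eq_zero.1 this.symm)
  rw [hcA]; exact h5
end CT

namespace CT
open MeasureTheory Filter

/-- number of occurrences of `I` in `w` at positions `< N` -/
def cnt (I w : BStr) (N : ℕ) : ℕ :=
  ∑ j ∈ Finset.range N, (if decide ((w.drop j).take I.length = I) then 1 else 0)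

theorem computable_cnt : Computable fun p : (BStr × BStr) × ℕ => cnt p.1.1 p.1.2 p.2 := by
  unfold cnt
  refine sum (f := fun (p : (BStr × BStr) × ℕ) j => if decide ((p.1.2.drop j).take p.1.1.length = p.1.1) then 1 else 0) ?_ Computable.snd
  have hI : Computable fun q : ((BStr × BStr) × ℕ) × ℕ => q.1.1.1 :=
    Computable.fst.comp (Computable.fst.comp Computable.fst)
  have hw : Computable fun q : ((BStr × BStr) × ℕ) × ℕ => q.1.1.2 :=
    Computable.snd.comp (Computable.fst.comp Computable.fst)
  have := Computable.cond (deq (take (length hI) (drop Computable.snd hw)) hI) (Computable.const 1) (Computable.const 0)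
  exact this.of_eq fun q => by rw [Bool.cond_eq_ite]

theorem cnt_le (I w : BStr) (N : ℕ) : cnt I w N ≤ N := by
  unfold cnt
  calc _ ≤ ∑ j ∈ Finset.range N, 1 := Finset.sum_le_sum fun j _ => by split_ifs <;> simp
    _ = N := by simp

theorem freq_cnt (I : BStr) (N : ℕ) (Z : Cantor) :
    freq (cyl I) N Z = (N:ℝ)⁻¹ * (cnt I (seg Z (N + I.length)) N : ℝ) := by
  unfold freq cnt
  push_cast
  congr 1
  refine Finset.sum_congr rfl fun j hj => ?_
  have hj := Finset.mem_range.1 hj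
  rw [seg_drop, seg_take _ (by omega)]
  by_cases h : shift^[j] Z ∈ cyl I
  · rw [Set.indicator_of_mem h, if_pos]; simp; exact mem_cyl.1 h
  · rw [Set.indicator_of_notMem h, if_neg]; simp; exact fun h' => h (mem_cyl.2 h')

/-- one term of the integer approximation of the error term -/
def Tterm (a : BStr → ℕ → ℕ) (I w : BStr) (N k : ℕ) : ℕ :=
  a w k * ((cnt I w N * 2 ^ k - N * a I k) + (N * a I k - cnt I w N * 2 ^ k))

theorem computable_Tterm {a : BStr → ℕ → ℕ} (ha : Computable₂ a) :
    Computable fun p : (BStr × BStr) × (ℕ × ℕ) => Tterm a p.1.1 p.1.2 p.2.1 p.2.2 := by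
  have hI : Computable fun p : (BStr × BStr) × (ℕ × ℕ) => p.1.1 := Computable.fst.comp Computable.fst
  have hw : Computable fun p : (BStr × BStr) × (ℕ × ℕ) => p.1.2 := Computable.snd.comp Computable.fst
  have hN : Computable fun p : (BStr × BStr) × (ℕ × ℕ) => p.2.1 := Computable.fst.comp Computable.snd
  have hk : Computable fun p : (BStr × BStr) × (ℕ × ℕ) => p.2.2 := Computable.snd.comp Computable.snd
  have hc : Computable fun p : (BStr × BStr) × (ℕ × ℕ) => cnt p.1.1 p.1.2 p.2.1 :=
    (computable_cnt.comp (Computable.fst.pair hN) :)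
  have h1 := mul hc (pow2 hk)
  have h2 := mul hN (ha.comp hI hk)
  have h3 := mul (ha.comp hw hk) (add (sub h1 h2) (sub h2 h1))
  exact h3

/-- the i-th string of length n -/
def strAt (n i : ℕ) : BStr := (strs n).getD i []

theorem computable_strAt : Computable₂ strAt := by
  have := (Primrec.list_getD ([] : BStr)).comp (primrec_strs.comp Primrec.fst) (Primrec.snd (α := ℕ) (β := ℕ))
  exact this.to_comp

/-- the integer approximation of the error term -/
def Tsum (a : BStr → ℕ → ℕ) (I : BStr) (N k : ℕ) : ℕ :=
  ∑ i ∈ Finset.range (2 ^ (N + I.length)), Tterm a I (strAt (N + I.length) i) N k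

theorem computable_Tsum {a : BStr → ℕ → ℕ} (ha : Computable₂ a) :
    Computable fun p : (BStr × ℕ) × ℕ => Tsum a p.1.1 p.1.2 p.2 := by
  have hI0 : Computable fun q : (BStr × ℕ) × ℕ => q.1.1 := Computable.fst.comp Computable.fst
  have hN0 : Computable fun q : (BStr × ℕ) × ℕ => q.1.2 := Computable.snd.comp Computable.fst
  have hI : Computable fun q : ((BStr × ℕ) × ℕ) × ℕ => q.1.1.1 := hI0.comp Computable.fst
  have hN : Computable fun q : ((BStr × ℕ) × ℕ) × ℕ => q.1.1.2 := hN0.comp Computable.fst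
  have hk : Computable fun q : ((BStr × ℕ) × ℕ) × ℕ => q.1.2 := Computable.snd.comp Computable.fst
  have hw : Computable fun q : ((BStr × ℕ) × ℕ) × ℕ => strAt (q.1.1.2 + q.1.1.1.length) q.2 :=
    (computable_strAt.comp (add hN (length hI)) Computable.snd :)
  have hf : Computable fun q : ((BStr × ℕ) × ℕ) × ℕ =>
      Tterm a q.1.1.1 (strAt (q.1.1.2 + q.1.1.1.length) q.2) q.1.1.2 q.1.2 :=
    ((computable_Tterm ha).comp ((hI.pair hw).pair (hN.pair hk)) :)
  have hf2 : Computable₂ fun (p : (BStr × ℕ) × ℕ) i =>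
      Tterm a p.1.1 (strAt (p.1.2 + p.1.1.length) i) p.1.2 p.2 := hf
  exact sum hf2 (pow2 (add hN0 (length hI0)))

theorem natdist (x y : ℕ) : (((x - y) + (y - x) : ℕ) : ℝ) = |(x:ℝ) - y| := by
  rcases le_total x y with h | h
  · rw [abs_of_nonpos (by simpa using h), Nat.sub_eq_zero_of_le h, zero_add, Nat.cast_sub h]; ring
  · rw [abs_of_nonneg (by simpa using h), Nat.sub_eq_zero_of_le h, add_zero, Nat.cast_sub h]

theorem Tsum_approx {ρ : Measure Cantor} [IsProbabilityMeasure ρ] {a : BStr → ℕ → ℕ}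
    (h : ∀ x k, |(a x k:ℝ)/2^k - (ρ (cyl x)).toReal| ≤ 2*(2:ℝ)⁻¹^k) (I : BStr) {N : ℕ} (hN : 0 < N) (k : ℕ) :
    |(Tsum a I N k : ℝ) / (N * 2^k * 2^k) - ∫ Z, |freq (cyl I) N Z - ρ.real (cyl I)| ∂ρ|
      ≤ 8 * 2 ^ (N + I.length) * (2:ℝ)⁻¹^k := by
  have hN' : (0:ℝ) < N := by exact_mod_cast hN
  simp_rw [freq_cnt]
  rw [integral_seg ρ (fun x => |(N:ℝ)⁻¹ * (cnt I x N : ℝ) - ρ.real (cyl I)|)]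
  unfold Tsum strAt
  rw [sum_idx_strs (N + I.length) (fun w => Tterm a I w N k)]
  unfold Tterm
  rw [Nat.cast_sum]
  simp only [Nat.cast_mul (a _ _), natdist]
  rw [Finset.sum_div, ← Finset.sum_sub_distrib]
  refine (Finset.abs_sum_le_sum_abs _ _).trans ?_
  have key : ∀ v : Fin (N + I.length) → Bool,
      |(a (List.ofFn v) k : ℝ) * |((cnt I (List.ofFn v) N * 2^k : ℕ) : ℝ) - (N * a I k : ℕ)| / (N * 2^k * 2^k)
        - |(N:ℝ)⁻¹ * (cnt I (List.ofFn v) N : ℝ) - ρ.real (cyl I)| * (ρ (cyl (List.ofFn v))).toReal|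
      ≤ 8 * (2:ℝ)⁻¹^k := by
    intro v
    set c : ℝ := (cnt I (List.ofFn v) N : ℝ) / N with hc
    have c0 : 0 ≤ c := by positivity
    have c1 : c ≤ 1 := by
      rw [hc, div_le_one hN']; exact_mod_cast cnt_le _ _ _
    have e1 : (a (List.ofFn v) k : ℝ) * |((cnt I (List.ofFn v) N * 2^k : ℕ) : ℝ) - (N * a I k : ℕ)| / (N * 2^k * 2^k)
      = (a (List.ofFn v) k / 2^k) * |c - a I k / 2^k| := by
      have : c - a I k / 2^k = (((cnt I (List.ofFn v) N * 2^k : ℕ) : ℝ) - (N * a I k : ℕ)) / (N * 2^k) := by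
        rw [hc]; push_cast; field_simp
      rw [this, abs_div, abs_of_pos (show (0:ℝ) < N * 2^k by positivity)]
      field_simp
    rw [e1, inv_mul_eq_div, ← hc]
    set A := (a (List.ofFn v) k : ℝ) / 2^k
    set B := (a I k : ℝ) / 2^k
    set p := (ρ (cyl (List.ofFn v))).toReal
    set q := ρ.real (cyl I)
    have hA := h (List.ofFn v) k
    have hB := h I k
    have p0 : 0 ≤ p := ENNReal.toReal_nonneg
    have p1 : p ≤ 1 := by
      have := measureReal_le_one (μ := ρ) (s := cyl (List.ofFn v)); exact this
    have q0 : 0 ≤ q := measureReal_nonneg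
    have q1 : q ≤ 1 := measureReal_le_one
    set e := (2:ℝ)⁻¹^k
    have e0 : 0 ≤ e := by positivity
    have e1 : e ≤ 1 := pow_le_one₀ (by norm_num) (by norm_num)
    change |A - p| ≤ _ at hA
    change |B - q| ≤ _ at hB
    have hB0 : 0 ≤ B := by positivity
    have hcB : |c - B| ≤ 3 := by
      rw [abs_le] at *; constructor <;> linarith [hB.2]
    have h3 : |(|c - B| - |c - q|)| ≤ 2 * e := by
      refine (abs_abs_sub_abs_le_abs_sub _ _).trans ?_
      have : c - B - (c - q) = -(B - q) := by ring
      rw [this, abs_neg]; exact hB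
    have : A * |c - B| - |c - q| * p = (A - p) * |c - B| + p * (|c - B| - |c - q|) := by ring
    rw [this]
    refine (abs_add_le _ _).trans ?_
    rw [abs_mul, abs_mul, abs_abs, abs_of_nonneg p0]
    have i1 : |A - p| * |c - B| ≤ (2 * e) * 3 := mul_le_mul hA hcB (abs_nonneg _) (by positivity)
    have i2 : p * |(|c - B| - |c - q|)| ≤ 1 * (2 * e) := mul_le_mul p1 h3 (abs_nonneg _) (by positivity)
    linarith
  refine (Finset.sum_le_sum fun v _ => key v).trans (le_of_eq ?_)
  simp
  ring

/-- precision -/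
def kf (I : BStr) (K n : ℕ) : ℕ := n + 1 + I.length + K + 5

theorem exists_Nf {ρ : Measure Cantor} [IsProbabilityMeasure ρ] (hcomp : ComputableMeasure ρ)
    (herg : Ergodic shift ρ) : ∃ Nf : BStr × ℕ → ℕ, Computable Nf ∧
      ∀ q, 0 < Nf q ∧ ∫ Z, |freq (cyl q.1) (Nf q) Z - ρ.real (cyl q.1)| ∂ρ ≤ (2:ℝ)⁻¹^q.2 := by
  obtain ⟨a, ha, h⟩ := exists_approx hcomp
  have hp : Computable₂ fun (q : BStr × ℕ) n =>
      decide (2 * Tsum a q.1 (n+1) (kf q.1 q.2 n) * 2 ^ q.2 ≤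
        (n + 1) * 2 ^ (kf q.1 q.2 n) * 2 ^ (kf q.1 q.2 n)) := by
    have hI : Computable fun q : (BStr × ℕ) × ℕ => q.1.1 := Computable.fst.comp Computable.fst
    have hK : Computable fun q : (BStr × ℕ) × ℕ => q.1.2 := Computable.snd.comp Computable.fst
    have hn : Computable fun q : (BStr × ℕ) × ℕ => q.2 + 1 := add Computable.snd (Computable.const 1)
    have hk : Computable fun q : (BStr × ℕ) × ℕ => kf q.1.1 q.1.2 q.2 :=
      add (add (add hn (length hI)) hK) (Computable.const 5)
    have h1 := mul (mul (Computable.const 2) ((computable_Tsum ha).comp ((hI.pair hn).pair hk))) (pow2 hK)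
    have h2 := mul (mul hn (pow2 hk)) (pow2 hk)
    exact dle h1 h2
  have hbd : ∀ (I : BStr) (K n : ℕ),
      |(Tsum a I (n+1) (kf I K n) : ℝ) / ((n+1:ℕ) * 2^(kf I K n) * 2^(kf I K n))
        - ∫ Z, |freq (cyl I) (n+1) Z - ρ.real (cyl I)| ∂ρ| ≤ (2:ℝ)⁻¹^K / 4 := by
    intro I K n
    refine (Tsum_approx h I (N := n + 1) (by omega) _).trans (le_of_eq ?_)
    rw [show kf I K n = (n + 1 + I.length) + (K + 5) by unfold kf; ring, pow_add (2:ℝ)⁻¹, ]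
    have : (2:ℝ)^(n+1+I.length) * (2:ℝ)⁻¹^(n+1+I.length) = 1 := by
      rw [← mul_pow]; norm_num
    calc _ = 8 * ((2:ℝ)^(n+1+I.length) * (2:ℝ)⁻¹^(n+1+I.length)) * (2:ℝ)⁻¹^(K+5) := by ring
      _ = _ := by rw [this, pow_add]; norm_num; ring
  have hiff : ∀ (I : BStr) (K n : ℕ),
      (2 * Tsum a I (n+1) (kf I K n) * 2 ^ K ≤
        (n + 1) * 2 ^ (kf I K n) * 2 ^ (kf I K n)) ↔
      (Tsum a I (n+1) (kf I K n) : ℝ) / ((n+1:ℕ) * 2^(kf I K n) * 2^(kf I K n))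
       ≤ (2:ℝ)⁻¹^K / 2 := by
    intro I K n
    rw [div_le_iff₀ (by positivity), ← Nat.cast_le (α := ℝ)]
    push_cast
    rw [inv_pow]
    have : (0:ℝ) < 2 ^ K := by positivity
    rw [show ((2:ℝ)^K)⁻¹ / 2 * ((↑n + 1) * 2 ^ (kf I K n) * 2 ^ (kf I K n))
      = ((↑n + 1) * 2 ^ (kf I K n) * 2 ^ (kf I K n)) / (2 * 2 ^ K) by field_simp]
    rw [le_div_iff₀ (by positivity)]
    rw [show ∀ x : ℝ, x * (2 * 2^K) = 2 * x * 2^K from fun x => by ring]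
  obtain ⟨f, hf, hf2⟩ := search hp (by
    rintro ⟨I, K⟩
    have := (tendsto_add_atTop_iff_nat 1).2 (mean_ergodic herg (measurableSet_cyl I))
    obtain ⟨n, hn⟩ := (this.eventually (gt_mem_nhds (show (0:ℝ) < (2:ℝ)⁻¹^K / 4 by positivity))).exists
    refine ⟨n, ?_⟩
    rw [decide_eq_true_eq]
    refine (hiff I K n).2 ?_
    have := abs_le.1 (hbd I K n)
    linarith)
  refine ⟨fun q => f q + 1, add hf (Computable.const 1), fun q => ⟨Nat.succ_pos _, ?_⟩⟩
  have h1 := (hiff _ _ _).1 (of_decide_eq_true (hf2 q))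
  have h2 := abs_le.1 (hbd q.1 q.2 (f q))
  have : (0:ℝ) ≤ (2:ℝ)⁻¹^q.2 := by positivity
  linarith

end CT

namespace CT
open MeasureTheory Filter

/-- the open set generated by S -/
def opn (S : BStr → Bool) : Set Cantor := {Z | ∃ n, S (seg Z n) = true}

theorem measurableSet_opn (S : BStr → Bool) : MeasurableSet (opn S) := by
  have : opn S = ⋃ n, {Z | S (seg Z n) = true} := by ext Z; simp [opn]
  rw [this]
  exact MeasurableSet.iUnion fun n => measurableSet_seg (fun x => S x = true) n

theorem kucera_ineq {ρ : Measure Cantor} [IsProbabilityMeasure ρ] (h : MeasurePreserving shift ρ ρ)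
    {A V : Set Cantor} (hA : MeasurableSet A) (hV : MeasurableSet V) {N : ℕ} (hN : 0 < N) :
    ρ.real (A ∩ {Z | ∀ n < N, shift^[n] Z ∈ V}) ≤
      ρ.real V * ρ.real A + ∫ Z, |freq A N Z - ρ.real A| ∂ρ := by
  have hN' : (0:ℝ) < N := by exact_mod_cast hN
  set B := A ∩ {Z | ∀ n < N, shift^[n] Z ∈ V} with hB
  have hm : ∀ j, Measurable (shift^[j]) := fun j => measurable_shift.iterate j
  let V' := (shift^[N-1]) ⁻¹' V
  have hV' : MeasurableSet V' := hm _ hV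
  have hV'r : ρ.real V' = ρ.real V := by
    simp only [Measure.real, V']; rw [(h.iterate _).measure_preimage hV.nullMeasurableSet]
  have h1 : ∀ j ∈ Finset.range N, ρ.real B ≤ ρ.real (((shift^[j]) ⁻¹' A) ∩ V') := by
    intro j hj
    have hj := Finset.mem_range.1 hj
    have e : ((shift^[j]) ⁻¹' A) ∩ V' = (shift^[j]) ⁻¹' (A ∩ (shift^[N-1-j]) ⁻¹' V) := by
      ext Z
      simp only [Set.mem_inter_iff, Set.mem_preimage, V', ← Function.iterate_add_apply]
      rw [show N - 1 - j + j = N - 1 by omega]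
    have : ρ.real (((shift^[j]) ⁻¹' A) ∩ V') = ρ.real (A ∩ (shift^[N-1-j]) ⁻¹' V) := by
      rw [e]; simp only [Measure.real]
      rw [(h.iterate _).measure_preimage (hA.inter (hm _ hV)).nullMeasurableSet]
    rw [this]
    refine measureReal_mono (fun Z hZ => ⟨hZ.1, hZ.2 _ (by omega)⟩)
  have h2 : (N:ℝ) * ρ.real B ≤ ∑ j ∈ Finset.range N, ρ.real (((shift^[j]) ⁻¹' A) ∩ V') := by
    have := Finset.sum_le_sum h1
    simpa using this
  have h3 : ∫ Z in V', freq A N Z ∂ρ = (N:ℝ)⁻¹ * ∑ j ∈ Finset.range N, ρ.real (((shift^[j]) ⁻¹' A) ∩ V') := by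
    unfold freq
    rw [integral_const_mul, integral_finsetSum]
    · congr 1
      refine Finset.sum_congr rfl fun j _ => ?_
      have e : (fun Z => A.indicator (fun _ => (1:ℝ)) (shift^[j] Z)) =
        ((shift^[j]) ⁻¹' A).indicator (fun _ => (1:ℝ)) := by
        ext Z; simp [Set.indicator]; rfl
      rw [e, integral_indicator ((hm _) hA)]
      simp [Measure.real, Measure.restrict_apply ((hm _) hA)]
    · intro j _
      exact ((h.iterate j).integrable_comp_of_integrable ((integrable_const (1:ℝ)).indicator hA)).integrableOn
  have hi : Integrable (fun Z => |freq A N Z - ρ.real A|) ρ :=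
    ((integrable_freq hA N).sub (integrable_const _)).abs
  have h4 : ∫ Z in V', freq A N Z ∂ρ ≤ ρ.real V * ρ.real A + ∫ Z, |freq A N Z - ρ.real A| ∂ρ := by
    calc ∫ Z in V', freq A N Z ∂ρ ≤ ∫ Z in V', (ρ.real A + |freq A N Z - ρ.real A|) ∂ρ := by
          refine integral_mono (integrable_freq hA N).integrableOn
            ((integrable_const _).add hi).integrableOn fun Z => ?_
          have := le_abs_self (freq A N Z - ρ.real A)
          show _ ≤ _ + _
          linarith
      _ = ρ.real V * ρ.real A + ∫ Z in V', |freq A N Z - ρ.real A| ∂ρ := by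
          rw [integral_add (integrable_const _).integrableOn hi.integrableOn]
          simp [hV'r]
      _ ≤ _ := by
          have := setIntegral_le_integral (s := V') hi (ae_of_all _ fun _ => abs_nonneg _)
          linarith
  rw [h3] at h4
  refine le_trans ?_ h4
  rw [← div_eq_inv_mul, le_div_iff₀ hN']
  linarith

/-- filler strings -/
theorem exists_fill {ρ : Measure Cantor} [IsProbabilityMeasure ρ] (hcomp : ComputableMeasure ρ) :
    ∃ fill : ℕ → BStr, Computable fill ∧ ∀ m, ρ.real (cyl (fill m)) ≤ (2:ℝ)⁻¹^(m+1) := by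
  obtain ⟨a, ha, h⟩ := exists_approx hcomp
  have hp : Computable₂ fun (m i : ℕ) => decide (a (strAt (m+3) i) (m+5) * 2 ^ (m+2) ≤ 2^(m+5)) := by
    have hm : ∀ c, Computable fun q : ℕ × ℕ => q.1 + c := fun c => add Computable.fst (Computable.const c)
    have h0 := computable_strAt.comp (hm 3) Computable.snd
    exact dle (mul (ha.comp h0 (hm 5)) (pow2 (hm 2))) (pow2 (hm 5))
  have hiff : ∀ m i : ℕ, a (strAt (m+3) i) (m+5) * 2 ^ (m+2) ≤ 2^(m+5) ↔
      (a (strAt (m+3) i) (m+5) : ℝ) / 2^(m+5) ≤ (2:ℝ)⁻¹^(m+2) := by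
    intro m i
    rw [div_le_iff₀ (by positivity), inv_pow, inv_mul_eq_div, le_div_iff₀ (by positivity)]
    exact_mod_cast Iff.rfl
  obtain ⟨f, hf, hf2⟩ := search hp (by
    intro m
    by_contra hcon
    push Not at hcon
    have h1 : ∀ i, (2:ℝ)⁻¹^(m+3) < (ρ (cyl (strAt (m+3) i))).toReal := by
      intro i
      have := hcon i
      have h3 := (hiff m i).not.1 (by simpa using this)
      push Not at h3
      have h4 := abs_le.1 (h (strAt (m+3) i) (m+5))
      have e : (2:ℝ)⁻¹^(m+2) = 8 * (2:ℝ)⁻¹^(m+5) := by rw [pow_add, pow_add]; norm_num; ring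
      have e2 : (2:ℝ)⁻¹^(m+3) = 4 * (2:ℝ)⁻¹^(m+5) := by rw [pow_add, pow_add]; norm_num; ring
      have : (0:ℝ) < (2:ℝ)⁻¹^(m+5) := by positivity
      linarith
    have h2 := Finset.sum_lt_sum_of_nonempty (s := Finset.range (2^(m+3))) (by simp) (fun i _ => h1 i)
    unfold strAt at h2
    rw [sum_idx_strs (m+3) (fun x => (ρ (cyl x)).toReal)] at h2
    have h3 := integral_seg ρ (fun _ => 1) (m+3)
    simp only [one_mul] at h3
    rw [← h3] at h2
    simp at h2)
  refine ⟨fun m => strAt (m+3) (f m), (computable_strAt.comp (add Computable.id (Computable.const 3)) hf :), fun m => ?_⟩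
  have h3 := (hiff m _).1 (of_decide_eq_true (hf2 m))
  have h4 := abs_le.1 (h (strAt (m+3) (f m)) (m+5))
  have e : (2:ℝ)⁻¹^(m+2) = 8 * (2:ℝ)⁻¹^(m+5) := by rw [pow_add, pow_add]; norm_num; ring
  have e2 : (2:ℝ)⁻¹^(m+1) = 16 * (2:ℝ)⁻¹^(m+5) := by rw [pow_add, pow_add]; norm_num; ring
  have : (0:ℝ) < (2:ℝ)⁻¹^(m+5) := by positivity
  show (ρ (cyl _)).toReal ≤ _
  linarith

end CT

namespace CT
open MeasureTheory Filter
open scoped ENNReal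

section Kucera
variable (Nf : BStr × ℕ → ℕ) (S : BStr → Bool)

/-- all short shifts of `y` are in `S` -/
def Pc (j : ℕ) (x y : BStr) : Bool :=
  decide (∀ n < Nf (x, Encodable.encode x + j), S (y.drop n) = true)

/-- minimality -/
def Pmin (j : ℕ) (x y : BStr) : Bool :=
  decide (∀ l < y.length, (decide (l < x.length) || !(Pc Nf S j x (y.take l))) = true)

/-- one step of the stopping time construction -/
def stp (j : ℕ) (x y : BStr) : Bool :=
  decide (y.take x.length = x) && (Pc Nf S j x y && Pmin Nf S j x y)

/-- the strings at stage `j` -/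
def VV : ℕ → Set BStr
  | 0 => {[]}
  | j+1 => ⋃ x ∈ VV j, {y | stp Nf S j x y = true}

/-- validity of a chain -/
def chainOK (j : ℕ) (c : List BStr) : Bool :=
  decide (c.getD 0 [] = []) &&
    decide (∀ i < j, stp Nf S i (c.getD i []) (c.getD (i+1) []) = true)

variable {Nf S}

theorem computable_Pc (hN : Computable Nf) (hS : Computable S) :
    Computable fun p : ℕ × BStr × BStr => Pc Nf S p.1 p.2.1 p.2.2 := by
  have hx : Computable fun p : ℕ × BStr × BStr => p.2.1 := Computable.fst.comp Computable.snd
  have hy : Computable fun p : (ℕ × BStr × BStr) × ℕ => p.1.2.2 :=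
    Computable.snd.comp (Computable.snd.comp Computable.fst)
  have h1 := hS.comp (drop Computable.snd hy)
  have h2 := hN.comp (hx.pair (add (Computable.encode.comp hx) Computable.fst))
  have h3 : Computable₂ fun (p : ℕ × BStr × BStr) (n : ℕ) => S (p.2.2.drop n) := h1
  exact (ball h3 h2 :)

theorem computable_Pmin (hN : Computable Nf) (hS : Computable S) :
    Computable fun p : ℕ × BStr × BStr => Pmin Nf S p.1 p.2.1 p.2.2 := by
  have hx : Computable fun p : (ℕ × BStr × BStr) × ℕ => p.1.2.1 :=
    Computable.fst.comp (Computable.snd.comp Computable.fst)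
  have hy : Computable fun p : (ℕ × BStr × BStr) × ℕ => p.1.2.2 :=
    Computable.snd.comp (Computable.snd.comp Computable.fst)
  have hj : Computable fun p : (ℕ × BStr × BStr) × ℕ => p.1.1 := Computable.fst.comp Computable.fst
  have h1 := (computable_Pc hN hS).comp (hj.pair (hx.pair (take Computable.snd hy)))
  have h2 := bor (dlt Computable.snd (length hx)) (bnot h1)
  have h3 : Computable₂ fun (p : ℕ × BStr × BStr) (l : ℕ) =>
    (decide (l < p.2.1.length) || !(Pc Nf S p.1 p.2.1 (p.2.2.take l))) := h2
  exact (ball h3 (length (Computable.snd.comp Computable.snd)) :)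

theorem computable_stp (hN : Computable Nf) (hS : Computable S) :
    Computable fun p : ℕ × BStr × BStr => stp Nf S p.1 p.2.1 p.2.2 := by
  have hx : Computable fun p : ℕ × BStr × BStr => p.2.1 := Computable.fst.comp Computable.snd
  have hy : Computable fun p : ℕ × BStr × BStr => p.2.2 := Computable.snd.comp Computable.snd
  exact (band (deq (take (length hx) hy) hx) (band (computable_Pc hN hS) (computable_Pmin hN hS)) :)

theorem computable_chainOK (hN : Computable Nf) (hS : Computable S) :
    Computable fun p : ℕ × List BStr => chainOK Nf S p.1 p.2 := by
  have hg : Computable₂ fun (c : List BStr) (i : ℕ) => c.getD i [] := (Primrec.list_getD ([] : BStr)).to_comp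
  have hc : Computable fun p : (ℕ × List BStr) × ℕ => p.1.2 := Computable.snd.comp Computable.fst
  have h1 := hg.comp hc Computable.snd
  have h2 := hg.comp hc (add Computable.snd (Computable.const 1))
  have h3 := (computable_stp hN hS).comp (Computable.snd.pair (h1.pair h2))
  have h4 : Computable₂ fun (p : ℕ × List BStr) (i : ℕ) => stp Nf S i (p.2.getD i []) (p.2.getD (i+1) []) := h3
  exact (band (deq (hg.comp Computable.snd (Computable.const 0)) (Computable.const [])) (ball h4 Computable.fst) :)

theorem mem_VV_of_chain {j : ℕ} {c : List BStr} (h : chainOK Nf S j c = true) : c.getD j [] ∈ VV Nf S j := by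
  induction j with
  | zero =>
    simp only [chainOK, Bool.and_eq_true, decide_eq_true_eq] at h
    exact h.1
  | succ j ih =>
    simp only [chainOK, Bool.and_eq_true, decide_eq_true_eq] at h ih
    have := ih ⟨h.1, fun i hi => h.2 i (by omega)⟩
    simp only [VV, Set.mem_iUnion]
    exact ⟨_, this, h.2 j (by omega)⟩

theorem chain_of_mem_VV {j : ℕ} {y : BStr} (h : y ∈ VV Nf S j) :
    ∃ c : List BStr, chainOK Nf S j c = true ∧ c.getD j [] = y := by
  have key : ∀ j y, y ∈ VV Nf S j → ∃ c : ℕ → BStr, c 0 = [] ∧ (∀ i < j, stp Nf S i (c i) (c (i+1)) = true) ∧ c j = y := by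
    intro j
    induction j with
    | zero => intro y hy; exact ⟨fun _ => [], rfl, fun i hi => by omega, hy.symm⟩
    | succ j ih =>
      intro y hy
      simp only [VV, Set.mem_iUnion] at hy
      obtain ⟨x, hx, hxy⟩ := hy
      obtain ⟨c, h0, h1, h2⟩ := ih x hx
      refine ⟨fun i => if i ≤ j then c i else y, by simp [h0], fun i hi => ?_, by simp⟩
      rcases Nat.lt_or_ge i j with hij | hij
      · simpa [hij.le, Nat.succ_le_of_lt hij] using h1 i hij
      · have : i = j := by omega
        subst this
        simpa [h2] using hxy
  obtain ⟨c, h0, h1, h2⟩ := key j y h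
  have e : ∀ i ≤ j, ((List.range (j+1)).map c).getD i [] = c i := by
    intro i hi
    rw [List.getD_eq_getElem _ _ (by simp; omega)]
    simp
  refine ⟨(List.range (j+1)).map c, ?_, by rw [e j le_rfl, h2]⟩
  simp only [chainOK, Bool.and_eq_true, decide_eq_true_eq]
  refine ⟨by rw [e 0 (by omega), h0], fun i hi => ?_⟩
  rw [e i (by omega), e (i+1) (by omega)]
  exact h1 i hi

theorem cover (hmono : ∀ x y : BStr, x <+: y → S x = true → S y = true) {Z : Cantor}
    (hZ : ∀ i, shift^[i] Z ∈ opn S) (j : ℕ) : ∃ y ∈ VV Nf S j, Z ∈ cyl y := by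
  induction j with
  | zero => exact ⟨[], rfl, by rw [cyl_nil]; trivial⟩
  | succ j ih =>
    obtain ⟨x, hx, hxZ⟩ := ih
    have hxe := mem_cyl.1 hxZ
    choose L hL using hZ
    have hex : ∃ l, x.length ≤ l ∧ Pc Nf S j x (seg Z l) = true := by
      refine ⟨x.length + ∑ n ∈ Finset.range (Nf (x, Encodable.encode x + j)), (n + L n), by omega, ?_⟩
      simp only [Pc, decide_eq_true_eq]
      intro n hn
      rw [seg_drop]
      have h1 := Finset.single_le_sum (f := fun n => n + L n) (fun _ _ => Nat.zero_le _) (Finset.mem_range.2 hn)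
      refine hmono (seg (shift^[n] Z) (L n)) _ ?_ (hL n)
      rw [← seg_take (shift^[n] Z) (m := L n)]
      · exact ⟨_, List.take_append_drop _ _⟩
      · omega
    classical
    obtain ⟨h1, h2⟩ := Nat.find_spec hex
    refine ⟨seg Z (Nat.find hex), ?_, mem_cyl_seg _ _⟩
    simp only [VV, Set.mem_iUnion]
    refine ⟨x, hx, ?_⟩
    simp only [stp, Bool.and_eq_true, decide_eq_true_eq, Set.mem_ofPred_eq]
    refine ⟨by rw [seg_take _ h1, hxe], h2, ?_⟩
    simp only [Pmin, decide_eq_true_eq]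
    intro l hl
    rw [seg_length] at hl
    rw [seg_take _ hl.le]
    have := Nat.find_min hex hl
    rw [Bool.or_eq_true, decide_eq_true_eq, Bool.not_eq_true']
    rcases Nat.lt_or_ge l x.length with h | h
    · exact Or.inl h
    · right
      by_contra h'
      exact this ⟨h, by simpa using h'⟩

theorem stp_disjoint (j : ℕ) (x : BStr) : {y | stp Nf S j x y = true}.PairwiseDisjoint cyl := by
  have key : ∀ y y' : BStr, stp Nf S j x y = true → stp Nf S j x y' = true → ∀ Z, Z ∈ cyl y → Z ∈ cyl y' →
      ¬ y.length < y'.length := by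
    intro y y' h h' Z hZ hZ' hlt
    simp only [stp, Pmin, Bool.and_eq_true, decide_eq_true_eq] at h h'
    have e : y'.take y.length = y := by
      rw [← mem_cyl.1 hZ', seg_take _ hlt.le, mem_cyl.1 hZ]
    have h1 := h'.2.2 y.length hlt
    rw [e, h.2.1] at h1
    simp at h1
    have := congrArg List.length h.1
    simp at this
    omega
  intro y hy y' hy' hne
  rw [Function.onFun, Set.disjoint_left]
  intro Z hZ hZ'
  have h1 := key y y' hy hy' Z hZ hZ'
  have h2 := key y' y hy' hy Z hZ' hZ
  have : y.length = y'.length := by omega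
  apply hne
  rw [← mem_cyl.1 hZ, ← mem_cyl.1 hZ', this]

theorem stp_measure {ρ : Measure Cantor} [IsProbabilityMeasure ρ] (h : MeasurePreserving shift ρ ρ)
    (hNf : ∀ q, 0 < Nf q ∧ ∫ Z, |freq (cyl q.1) (Nf q) Z - ρ.real (cyl q.1)| ∂ρ ≤ (2:ℝ)⁻¹^q.2)
    (j : ℕ) (x : BStr) :
    ∑' y : {y | stp Nf S j x y = true}, ρ (cyl y) ≤
      ρ (opn S) * ρ (cyl x) + (2:ℝ≥0∞)⁻¹ ^ (Encodable.encode x + j) := by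
  rw [← measure_biUnion (Set.to_countable _) (stp_disjoint j x) (fun y _ => measurableSet_cyl y)]
  set q : BStr × ℕ := (x, Encodable.encode x + j) with hq
  have h1 := kucera_ineq h (measurableSet_cyl x) (measurableSet_opn S) (hNf q).1
  have h2 : (⋃ y ∈ {y | stp Nf S j x y = true}, cyl y) ⊆
      cyl x ∩ {Z | ∀ n < Nf q, shift^[n] Z ∈ opn S} := by
    intro Z hZ
    simp only [Set.mem_iUnion] at hZ
    obtain ⟨y, hy, hZ⟩ := hZ
    simp only [stp, Pc, Bool.and_eq_true, decide_eq_true_eq, Set.mem_ofPred_eq] at hy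
    refine ⟨?_, fun n hn => ?_⟩
    · refine cyl_subset_of_ext ?_ hZ
      rw [← hy.1]; exact ⟨_, List.take_append_drop _ _⟩
    · have := hy.2.1 n hn
      rw [← mem_cyl.1 hZ, seg_drop] at this
      exact ⟨_, this⟩
  refine (measure_mono h2).trans ?_
  rw [← ENNReal.toReal_le_toReal (measure_ne_top _ _) (by
    refine ENNReal.add_ne_top.2 ⟨ENNReal.mul_ne_top (measure_ne_top _ _) (measure_ne_top _ _), ?_⟩
    exact ENNReal.pow_ne_top (by simp))]
  rw [ENNReal.toReal_add (ENNReal.mul_ne_top (measure_ne_top _ _) (measure_ne_top _ _))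
    (ENNReal.pow_ne_top (by simp)), ENNReal.toReal_mul, ENNReal.toReal_pow, ENNReal.toReal_inv]
  have := (hNf q).2
  simp only [Measure.real] at h1 this ⊢
  refine h1.trans ?_
  have e : (2:ℝ≥0∞).toReal = 2 := by simp
  rw [e]
  exact add_le_add le_rfl this

theorem tsum_encode (j : ℕ) : ∑' x : BStr, (2:ℝ≥0∞)⁻¹ ^ (Encodable.encode x + j) ≤ 2 * (2:ℝ≥0∞)⁻¹^j := by
  calc _ ≤ ∑' n : ℕ, (2:ℝ≥0∞)⁻¹ ^ (n + j) :=
        ENNReal.tsum_comp_le_tsum_of_injective Encodable.encode_injective (fun n => (2:ℝ≥0∞)⁻¹ ^ (n + j))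
    _ = 2 * (2:ℝ≥0∞)⁻¹^j := by
      simp_rw [pow_add]
      rw [ENNReal.tsum_mul_right, ENNReal.tsum_geometric, ENNReal.one_sub_inv_two, inv_inv]

theorem VV_succ_measure {ρ : Measure Cantor} [IsProbabilityMeasure ρ] (h : MeasurePreserving shift ρ ρ)
    (hNf : ∀ q, 0 < Nf q ∧ ∫ Z, |freq (cyl q.1) (Nf q) Z - ρ.real (cyl q.1)| ∂ρ ≤ (2:ℝ)⁻¹^q.2)
    (j : ℕ) :
    ∑' y : VV Nf S (j+1), ρ (cyl y) ≤ ρ (opn S) * ∑' y : VV Nf S j, ρ (cyl y) + 2 * (2:ℝ≥0∞)⁻¹^j := by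
  have h1 := ENNReal.tsum_biUnion_le_tsum (fun y => ρ (cyl y)) (VV Nf S j) (fun x => {y | stp Nf S j x y = true})
  refine h1.trans ((ENNReal.tsum_le_tsum fun x : VV Nf S j => stp_measure h hNf j x.1).trans ?_)
  rw [ENNReal.tsum_add, ENNReal.tsum_mul_left]
  refine add_le_add le_rfl (le_trans ?_ (tsum_encode j))
  exact ENNReal.tsum_comp_le_tsum_of_injective Subtype.val_injective
    (fun x : BStr => (2:ℝ≥0∞)⁻¹ ^ (Encodable.encode x + j))

theorem VV_measure {ρ : Measure Cantor} [IsProbabilityMeasure ρ] (h : MeasurePreserving shift ρ ρ)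
    (hNf : ∀ q, 0 < Nf q ∧ ∫ Z, |freq (cyl q.1) (Nf q) Z - ρ.real (cyl q.1)| ∂ρ ≤ (2:ℝ)⁻¹^q.2)
    (hS : ρ (opn S) < 1) : ∃ C q : ℝ, 0 < C ∧ 0 < q ∧ q < 1 ∧
      ∀ j, ∑' y : VV Nf S j, ρ (cyl y) ≤ ENNReal.ofReal (C * q ^ j) := by
  set r := ρ.real (opn S)
  have hr : r < 1 := by
    have := (ENNReal.toReal_lt_toReal (measure_ne_top _ _) (by simp)).2 hS
    rw [ENNReal.toReal_one] at this
    exact this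
  have r0 : 0 ≤ r := measureReal_nonneg
  set q := (1 + r) / 2
  have hq : 0 < q - r := by simp only [q]; linarith
  have hq2 : 2⁻¹ ≤ q := by simp only [q]; linarith
  have hre : ρ (opn S) = ENNReal.ofReal r := by simp [r]
  set C := 2 / (q - r) + 1
  have hC : 2 ≤ C * (q - r) := by
    simp only [C]; rw [add_mul, div_mul_cancel₀ _ hq.ne']; linarith
  have hC1 : 1 ≤ C := by simp only [C]; have : 0 ≤ 2 / (q - r) := by positivity
                         linarith
  refine ⟨C, q, by linarith, by linarith, by simp only [q]; linarith, fun j => ?_⟩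
  induction j with
  | zero =>
    have : ∑' y : VV Nf S 0, ρ (cyl y) = ρ (cyl []) := by
      show ∑' y : ({[]} : Set BStr), ρ (cyl y) = _
      rw [tsum_singleton [] (fun y => ρ (cyl y))]
    rw [this, cyl_nil, measure_univ]
    simpa using hC1
  | succ j ih =>
    refine (VV_succ_measure h hNf j).trans ?_
    refine (add_le_add (mul_le_mul_right ih _) le_rfl).trans ?_
    have e : 2 * (2:ℝ≥0∞)⁻¹^j = ENNReal.ofReal (2 * (2:ℝ)⁻¹^j) := by
      rw [ENNReal.ofReal_mul (by norm_num), ENNReal.ofReal_pow (by norm_num), ENNReal.ofReal_inv_of_pos (by norm_num)]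
      simp
    have hqj : (2:ℝ)⁻¹^j ≤ q^j := pow_le_pow_left₀ (by norm_num) hq2 j
    have h0 : (0:ℝ) ≤ (2:ℝ)⁻¹^j := by positivity
    rw [e, hre, ← ENNReal.ofReal_mul r0, ← ENNReal.ofReal_add (by positivity) (by positivity)]
    refine ENNReal.ofReal_le_ofReal ?_
    rw [pow_succ]
    nlinarith [mul_le_mul_of_nonneg_right hC (h0.trans hqj)]

end Kucera

theorem kucera {ρ μ : Measure Cantor} [IsProbabilityMeasure ρ] (hcomp : ComputableMeasure ρ)
    (herg : Ergodic shift ρ) (hml : MLAC μ ρ) {S : BStr → Bool} (hS : Computable S)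
    (hmono : ∀ x y : BStr, x <+: y → S x = true → S y = true) (hlt : ρ (opn S) < 1) :
    μ {Z | ∀ i, shift^[i] Z ∈ opn S} = 0 := by
  obtain ⟨Nf, hNfc, hNf⟩ := exists_Nf hcomp herg
  obtain ⟨fill, hfc, hfill⟩ := exists_fill hcomp
  obtain ⟨C, q, hC, hq0, hq1, hM⟩ := VV_measure (S := S) herg.toMeasurePreserving hNf hlt
  obtain ⟨A, hA⟩ := exists_pow_lt_of_lt_one (show (0:ℝ) < 2⁻¹ by norm_num) hq1
  obtain ⟨B, hB⟩ := exists_pow_lt_of_lt_one (show (0:ℝ) < 2⁻¹ / C by positivity) hq1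
  let cc : ℕ → List BStr := fun i => (Encodable.decode (α := List BStr) i).getD []
  have hcc : Computable cc := (Primrec.option_getD.to_comp.comp (Computable.decode (α := List BStr)) (Computable.const ([] : List BStr)) :)
  have hccs : ∀ c, ∃ i, cc i = c := fun c => ⟨Encodable.encode c, by simp [cc]⟩
  let σ : ℕ → ℕ → BStr := fun m i =>
    bif chainOK Nf S (A * m + B) (cc i) then (cc i).getD (A * m + B) [] else fill m
  have hσ : Computable₂ σ := by
    have hg : Computable₂ fun (c : List BStr) (i : ℕ) => c.getD i [] := (Primrec.list_getD ([] : BStr)).to_comp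
    have hi : Computable fun p : ℕ × ℕ => A * p.1 + B :=
      add (mul (Computable.const A) Computable.fst) (Computable.const B)
    have h1 := (computable_chainOK hNfc hS).comp (hi.pair (hcc.comp Computable.snd))
    have h2 := hg.comp (hcc.comp Computable.snd) hi
    exact (Computable.cond h1 h2 (hfc.comp Computable.fst) :)
  have hsub1 : ∀ m, (⋃ i, cyl (σ m i)) ⊆ (⋃ y ∈ VV Nf S (A * m + B), cyl y) ∪ cyl (fill m) := by
    intro m
    refine Set.iUnion_subset fun i => ?_
    simp only [σ]
    rcases h : chainOK Nf S (A * m + B) (cc i) with _ | _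
    · exact Set.subset_union_right
    · refine Set.subset_union_of_subset_left ?_ _
      exact Set.subset_biUnion_of_mem (u := cyl) (mem_VV_of_chain h)
  have htest : IsMLTest ρ (fun m => ⋃ i, cyl (σ m i)) := by
    refine ⟨⟨σ, hσ, fun _ => rfl⟩, fun m => ?_⟩
    refine (measure_mono (hsub1 m)).trans ((measure_union_le _ _).trans ?_)
    have h1 : ρ (⋃ y ∈ VV Nf S (A * m + B), cyl y) ≤ ENNReal.ofReal ((2:ℝ)⁻¹^(m+1)) := by
      refine (measure_biUnion_le ρ (Set.to_countable _) _).trans ((hM _).trans ?_)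
      refine ENNReal.ofReal_le_ofReal ?_
      rw [pow_add, pow_mul, pow_succ]
      have h3 : (q^A)^m ≤ (2:ℝ)⁻¹^m := pow_le_pow_left₀ (by positivity) hA.le m
      have h4 : C * q^B ≤ 2⁻¹ := by
        have := (lt_div_iff₀ hC).1 hB
        linarith
      calc C * ((q^A)^m * q^B) = (q^A)^m * (C * q^B) := by ring
        _ ≤ _ := mul_le_mul h3 h4 (by positivity) (by positivity)
    have h2 : ρ (cyl (fill m)) ≤ ENNReal.ofReal ((2:ℝ)⁻¹^(m+1)) := by
      rw [← ofReal_measureReal]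
      exact ENNReal.ofReal_le_ofReal (hfill m)
    refine (add_le_add h1 h2).trans ?_
    rw [← ENNReal.ofReal_add (by positivity) (by positivity), pow_succ, ← mul_add]
    norm_num
    rw [one_div, ENNReal.ofReal_inv_of_pos (by norm_num)]
    simp
  have h0 := hml _ htest
  refine le_antisymm ?_ zero_le
  rw [← h0]
  refine le_iInf fun m => measure_mono fun Z hZ => ?_
  obtain ⟨y, hy, hZy⟩ := cover (Nf := Nf) hmono hZ (A * m + B)
  obtain ⟨c, hc, hcy⟩ := chain_of_mem_VV hy
  obtain ⟨i, rfl⟩ := hccs c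
  refine Set.mem_iUnion.2 ⟨i, ?_⟩
  simp only [σ, hc, cond_true, hcy]
  exact hZy

end CT

namespace CT
open MeasureTheory Filter

theorem covering_pointwise (F : ℕ → Cantor → ℝ) (Good : ℕ → Set Cantor) (t c : ℝ) (hc : 0 ≤ c)
    (hF0 : ∀ Z, F 0 Z ≤ 0)
    (hgood : ∀ n, 1 ≤ n → ∀ L, ∀ Z ∈ Good n, F (n + L) Z ≤ t * n + F L (shift^[n] Z))
    (hbad : ∀ L Z, F (L + 1) Z ≤ t + c + F L (shift Z)) (M : ℕ) (B : Set Cantor)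
    (hB : ∀ Z, Z ∉ B → ∃ n, 1 ≤ n ∧ n ≤ M ∧ Z ∈ Good n) (L : ℕ) (Z : Cantor) :
    F L Z ≤ t * L + c * ∑ i ∈ Finset.range L, B.indicator (fun _ => (1:ℝ)) (shift^[i] Z) + c * M := by
  have hind : ∀ Z, 0 ≤ B.indicator (fun _ => (1:ℝ)) Z := fun Z =>
    Set.indicator_nonneg (fun _ _ => zero_le_one) _
  have htriv : ∀ L Z, F L Z ≤ (t + c) * L := by
    intro L
    induction L with
    | zero => intro Z; simpa using hF0 Z
    | succ L ih => intro Z; have := hbad L Z; have := ih (shift Z); push_cast; linarith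
  induction L using Nat.strong_induction_on generalizing Z with
  | _ L ih =>
    have hs0 : 0 ≤ c * ∑ i ∈ Finset.range L, B.indicator (fun _ => (1:ℝ)) (shift^[i] Z) :=
      mul_nonneg hc (Finset.sum_nonneg fun i _ => hind _)
    rcases Nat.lt_or_ge L M with hLM | hLM
    · have h1 := htriv L Z
      have : c * (L:ℝ) ≤ c * M := mul_le_mul_of_nonneg_left (by exact_mod_cast hLM.le) hc
      linarith
    · by_cases hZ : Z ∈ B
      · rcases L with _ | L
        · have := hF0 Z
          have h2 : 0 ≤ c * (M:ℝ) := by positivity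
          simp; linarith
        · have h1 := hbad L Z
          have h2 := ih L (by omega) (shift Z)
          rw [Finset.sum_range_succ']
          simp only [Function.iterate_succ_apply, Function.iterate_zero_apply]
          rw [Set.indicator_of_mem hZ]
          push_cast
          linarith
      · obtain ⟨n, hn1, hnM, hZn⟩ := hB Z hZ
        obtain ⟨L', rfl⟩ : ∃ L', L = n + L' := ⟨L - n, by omega⟩
        have h1 := hgood n hn1 L' Z hZn
        have h2 := ih L' (by omega) (shift^[n] Z)
        rw [Finset.sum_range_add]
        have h3 : ∀ i, shift^[i] (shift^[n] Z) = shift^[n + i] Z := fun i => by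
          rw [← Function.iterate_add_apply, add_comm]
        simp only [h3] at h2
        have h4 : 0 ≤ c * ∑ i ∈ Finset.range n, B.indicator (fun _ => (1:ℝ)) (shift^[i] Z) :=
          mul_nonneg hc (Finset.sum_nonneg fun i _ => hind _)
        push_cast
        linarith

theorem covering {ρ : Measure Cantor} [IsProbabilityMeasure ρ] (h : MeasurePreserving shift ρ ρ)
    (F : ℕ → Cantor → ℝ) (Good : ℕ → Set Cantor) (t c : ℝ) (hc : 0 ≤ c)
    (hF0 : ∀ Z, F 0 Z ≤ 0)
    (hgood : ∀ n, 1 ≤ n → ∀ L, ∀ Z ∈ Good n, F (n + L) Z ≤ t * n + F L (shift^[n] Z))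
    (hbad : ∀ L Z, F (L + 1) Z ≤ t + c + F L (shift Z))
    (hFi : ∀ L, Integrable (F L) ρ) (hGm : ∀ n, MeasurableSet (Good n))
    (hfull : ρ (⋃ n, ⋃ (_ : 1 ≤ n), Good n) = 1) {η : ℝ} (hη : 0 < η) :
    ∃ M' : ℝ, ∀ L : ℕ, ∫ Z, F L Z ∂ρ ≤ (t + η) * L + M' := by
  let D : ℕ → Set Cantor := fun M => ⋃ n, ⋃ (_ : 1 ≤ n ∧ n ≤ M), Good n
  have hDm : ∀ M, MeasurableSet (D M) := fun M =>
    MeasurableSet.iUnion fun n => MeasurableSet.iUnion fun _ => hGm n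
  have hDmono : Monotone D := by
    intro a b hab
    refine Set.iUnion_mono fun n => Set.iUnion_subset fun hn => ?_
    exact Set.subset_iUnion_of_subset ⟨hn.1, hn.2.trans hab⟩ subset_rfl
  have hDU : (⋃ M, D M) = ⋃ n, ⋃ (_ : 1 ≤ n), Good n := by
    ext Z
    simp only [D, Set.mem_iUnion]
    constructor
    · rintro ⟨M, n, hn, hZ⟩; exact ⟨n, hn.1, hZ⟩
    · rintro ⟨n, hn, hZ⟩; exact ⟨n, n, ⟨hn, le_rfl⟩, hZ⟩
  have ht := tendsto_measure_iUnion_atTop (μ := ρ) hDmono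
  rw [hDU, hfull] at ht
  have ht2 : Tendsto (fun M => ρ.real (D M)ᶜ) atTop (nhds 0) := by
    have : Tendsto (fun M => 1 - ρ.real (D M)) atTop (nhds (1 - 1)) := by
      refine tendsto_const_nhds.sub ?_
      have := (ENNReal.tendsto_toReal (by simp : (1:ENNReal) ≠ ⊤)).comp ht
      rw [ENNReal.toReal_one] at this
      exact this
    rw [sub_self] at this
    refine this.congr fun M => ?_
    rw [measureReal_compl (hDm M)]; simp
  obtain ⟨M, hM⟩ := (ht2.eventually (gt_mem_nhds (show (0:ℝ) < η / (c + 1) by positivity))).exists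
  refine ⟨c * M, fun L => ?_⟩
  have hp := covering_pointwise F Good t c hc hF0 hgood hbad M (D M)ᶜ (by
    intro Z hZ
    have : Z ∈ D M := by simpa using hZ
    simp only [D, Set.mem_iUnion] at this
    obtain ⟨n, hn, hZ⟩ := this
    exact ⟨n, hn.1, hn.2, hZ⟩) L
  have e : ∀ Z, ∑ i ∈ Finset.range L, (D M)ᶜ.indicator (fun _ => (1:ℝ)) (shift^[i] Z) = L * freq (D M)ᶜ L Z := by
    intro Z
    unfold freq
    rcases Nat.eq_zero_or_pos L with rfl | hL
    · simp
    · rw [← mul_assoc, mul_inv_cancel₀ (by positivity), one_mul]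
  simp only [e] at hp
  have hfi : Integrable (freq (D M)ᶜ L) ρ := integrable_freq (hDm M).compl L
  have hr : Integrable (fun Z => t * L + c * (L * freq (D M)ᶜ L Z) + c * M) ρ :=
    ((integrable_const _).add ((hfi.const_mul _).const_mul _)).add (integrable_const _)
  have h1 := integral_mono (hFi L) hr hp
  refine h1.trans ?_
  have e1 : Integrable (fun Z => c * (L * freq (D M)ᶜ L Z)) ρ := (hfi.const_mul _).const_mul _
  have e2 : Integrable (fun Z => t * L + c * (L * freq (D M)ᶜ L Z)) ρ := (integrable_const _).add e1
  rw [integral_add e2 (integrable_const _), integral_add (integrable_const _) e1, integral_const_mul,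
    integral_const_mul]
  simp only [integral_const, probReal_univ, one_smul]
  have h2 : c * ρ.real (D M)ᶜ ≤ η := by
    have h3 := (lt_div_iff₀ (by linarith : 0 < c + 1)).1 hM
    have : 0 ≤ ρ.real (D M)ᶜ := measureReal_nonneg
    nlinarith
  have h3 : (∫ Z, freq (D M)ᶜ L Z ∂ρ) * L ≤ ρ.real (D M)ᶜ * L := by
    rcases Nat.eq_zero_or_pos L with rfl | hL
    · simp
    · rw [integral_freq h (hDm M).compl hL]
  have h4 : c * (L * ∫ Z, freq (D M)ᶜ L Z ∂ρ) ≤ η * L := by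
    calc c * (L * ∫ Z, freq (D M)ᶜ L Z ∂ρ) = c * ((∫ Z, freq (D M)ᶜ L Z ∂ρ) * L) := by ring
      _ ≤ c * (ρ.real (D M)ᶜ * L) := mul_le_mul_of_nonneg_left h3 hc
      _ = (c * ρ.real (D M)ᶜ) * L := by ring
      _ ≤ _ := mul_le_mul_of_nonneg_right h2 (by positivity)
  have e3 : ∫ Z, (L : ℝ) * freq (D M)ᶜ L Z ∂ρ = L * ∫ Z, freq (D M)ᶜ L Z ∂ρ := integral_const_mul _ _
  rw [e3]
  linarith

end CT

namespace CT
open MeasureTheory Filter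

/-- sum over strings of length n -/
noncomputable def SS (n : ℕ) (f : BStr → ℝ) : ℝ := ∑ v : Fin n → Bool, f (List.ofFn v)

theorem SS_zero (f : BStr → ℝ) : SS 0 f = f [] := by simp [SS]

theorem SS_succ (n : ℕ) (f : BStr → ℝ) :
    SS (n+1) f = SS n (fun x => f (false :: x)) + SS n (fun x => f (true :: x)) := by
  unfold SS
  rw [← sum_strs, ← sum_strs n (fun x => f (false :: x)), ← sum_strs n (fun x => f (true :: x))]
  simp only [strs, List.map_append, List.sum_append, List.map_map, Function.comp_def]

theorem SS_add (m n : ℕ) (f : BStr → ℝ) : SS (m + n) f = SS m (fun y => SS n (fun z => f (y ++ z))) := by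
  induction m generalizing f with
  | zero => simp [SS_zero]
  | succ m ih => rw [show m + 1 + n = (m + n) + 1 by ring, SS_succ, SS_succ, ih, ih]; rfl

theorem SS_congr {n : ℕ} {f g : BStr → ℝ} (h : ∀ x, x.length = n → f x = g x) : SS n f = SS n g :=
  Finset.sum_congr rfl fun v _ => h _ (by simp)

theorem SS_mono {n : ℕ} {f g : BStr → ℝ} (h : ∀ x, x.length = n → f x ≤ g x) : SS n f ≤ SS n g :=
  Finset.sum_le_sum fun v _ => h _ (by simp)

theorem SS_nonneg {n : ℕ} {f : BStr → ℝ} (h : ∀ x, x.length = n → 0 ≤ f x) : 0 ≤ SS n f :=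
  Finset.sum_nonneg fun v _ => h _ (by simp)

theorem SS_mul_left (n : ℕ) (c : ℝ) (f : BStr → ℝ) : SS n (fun x => c * f x) = c * SS n f :=
  (Finset.mul_sum _ _ _).symm

theorem SS_mul_right (n : ℕ) (c : ℝ) (f : BStr → ℝ) : SS n (fun x => f x * c) = SS n f * c :=
  (Finset.sum_mul _ _ _).symm

theorem SS_addf (n : ℕ) (f g : BStr → ℝ) : SS n (fun x => f x + g x) = SS n f + SS n g :=
  Finset.sum_add_distrib

theorem SS_sum {ι : Type*} (n : ℕ) (s : Finset ι) (f : ι → BStr → ℝ) :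
    SS n (fun x => ∑ i ∈ s, f i x) = ∑ i ∈ s, SS n (f i) := Finset.sum_comm

theorem SS_prob (ρ : Measure Cantor) [IsProbabilityMeasure ρ] (n : ℕ) :
    SS n (fun x => ρ.real (cyl x)) = 1 := by
  have := integral_seg ρ (fun _ => 1) n
  simp only [one_mul] at this
  unfold SS
  rw [show (∑ v : Fin n → Bool, ρ.real (cyl (List.ofFn v))) = _ from this.symm]
  simp

/-- total weight of parsings -/
noncomputable def QQ (w : BStr → ℝ) : BStr → ℝ
  | [] => 1
  | b :: x => ∑ l : Fin (x.length + 1), w (b :: x.take l) * QQ w (x.drop l)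
termination_by x => x.length
decreasing_by simp

theorem QQ_nonneg {w : BStr → ℝ} (hw : ∀ x, 0 ≤ w x) (x : BStr) : 0 ≤ QQ w x := by
  induction h : x.length using Nat.strong_induction_on generalizing x with
  | _ n ih =>
    rcases x with _ | ⟨b, x⟩
    · rw [QQ]; norm_num
    · rw [QQ]
      refine Finset.sum_nonneg fun l _ => mul_nonneg (hw _) (ih _ ?_ _ rfl)
      simp at h ⊢; omega

theorem QQ_append {w : BStr → ℝ} (hw : ∀ x, 0 ≤ w x) (y x : BStr) (hy : y ≠ []) :
    w y * QQ w x ≤ QQ w (y ++ x) := by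
  rcases y with _ | ⟨b, y⟩
  · exact (hy rfl).elim
  · rw [List.cons_append, QQ]
    have := Finset.single_le_sum (f := fun l : Fin ((y ++ x).length + 1) =>
      w (b :: (y ++ x).take l) * QQ w ((y ++ x).drop l))
      (fun l _ => mul_nonneg (hw _) (QQ_nonneg hw _)) (Finset.mem_univ ⟨y.length, by simp⟩)
    simpa using this

theorem QQ_sum {w : BStr → ℝ} (hw : ∀ x, 0 ≤ w x)
    (hW : ∀ L, ∑ l ∈ Finset.range L, SS (l+1) w ≤ 1) (L : ℕ) : SS L (QQ w) ≤ 1 := by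
  induction L using Nat.strong_induction_on with
  | _ L ih =>
    rcases L with _ | L
    · rw [SS_zero, QQ]
    · have e : SS (L+1) (QQ w) = SS (L+1) (fun x => ∑ l ∈ Finset.range (L+1), w (x.take (l+1)) * QQ w (x.drop (l+1))) := by
        refine SS_congr fun x hx => ?_
        rcases x with _ | ⟨b, x⟩
        · simp at hx
        · have hx' : x.length = L := by simpa using hx
          rw [QQ, hx']
          rw [Fin.sum_univ_eq_sum_range (fun l => w (b :: x.take l) * QQ w (x.drop l)) (L+1)]
          rfl
      rw [e, SS_sum]
      refine le_trans (Finset.sum_le_sum fun l hl => ?_) (hW (L+1))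
      have hl := Finset.mem_range.1 hl
      have e2 : L + 1 = (l + 1) + (L - l) := by omega
      rw [e2, SS_add]
      refine SS_mono fun y hy => ?_
      have e3 : SS (L - l) (fun z => w ((y ++ z).take (l+1)) * QQ w ((y ++ z).drop (l+1))) = w y * SS (L - l) (QQ w) := by
        rw [← SS_mul_left]
        refine SS_congr fun z _ => ?_
        rw [← hy]; simp
      rw [e3]
      exact mul_le_of_le_one_right (hw _) (ih _ (by omega))

/-- Gibbs inequality -/
theorem gibbs (ρ : Measure Cantor) [IsProbabilityMeasure ρ] {Q : BStr → ℝ} (hQ : ∀ x, 0 < Q x) {L : ℕ} (hL : 0 < L)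
    (hs : SS L Q ≤ 1) : L * entropyAt ρ L ≤ ∫ Z, - Real.logb 2 (Q (seg Z L)) ∂ρ := by
  rw [integral_seg ρ (fun x => - Real.logb 2 (Q x))]
  have hL' : (L:ℝ) ≠ 0 := by positivity
  have e : (L:ℝ) * entropyAt ρ L = SS L (fun x => - (ρ.real (cyl x) * Real.logb 2 (ρ.real (cyl x)))) := by
    unfold entropyAt SS
    rw [Finset.sum_neg_distrib, ← mul_assoc]
    have : (L:ℝ) * -(1 / (L:ℝ)) = -1 := by field_simp
    rw [this, neg_one_mul]; rfl
  rw [e]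
  have hln : 0 < Real.log 2 := Real.log_pos (by norm_num)
  have key : SS L (fun x => - (ρ.real (cyl x) * Real.logb 2 (ρ.real (cyl x)))) ≤
      SS L (fun x => (- Real.logb 2 (Q x)) * ρ.real (cyl x) + (Q x + (-1) * ρ.real (cyl x)) * (Real.log 2)⁻¹) := by
    refine SS_mono fun x _ => ?_
    have p0 : 0 ≤ ρ.real (cyl x) := measureReal_nonneg
    have q0 := hQ x
    rcases p0.eq_or_lt with h0 | hp
    · rw [← h0]; simp; positivity
    · have h1 := Real.log_le_sub_one_of_pos (div_pos q0 hp)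
      rw [Real.log_div q0.ne' hp.ne'] at h1
      have h2 : ρ.real (cyl x) * (Real.log (Q x) - Real.log (ρ.real (cyl x))) ≤ Q x - ρ.real (cyl x) := by
        have := mul_le_mul_of_nonneg_left h1 p0
        refine this.trans (le_of_eq ?_)
        field_simp
      have h3 := mul_le_mul_of_nonneg_right h2 (inv_nonneg.2 hln.le)
      unfold Real.logb
      simp only [div_eq_mul_inv]
      linarith
  refine key.trans ?_
  rw [SS_addf, SS_mul_right, SS_addf, SS_mul_left, SS_prob]
  have : (SS L Q + -1 * 1) * (Real.log 2)⁻¹ ≤ 0 :=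
    mul_nonpos_of_nonpos_of_nonneg (by linarith) (inv_nonneg.2 hln.le)
  have e4 : SS L (fun x => (- Real.logb 2 (Q x)) * ρ.real (cyl x)) =
    ∑ v : Fin L → Bool, -Real.logb 2 (Q (List.ofFn v)) * (ρ (cyl (List.ofFn v))).toReal := rfl
  rw [e4]
  linarith

open Classical in
theorem lower_measure {ρ : Measure Cantor} [IsProbabilityMeasure ρ] (h : MeasurePreserving shift ρ ρ)
    {s : ℝ} (hs : Tendsto (entropyAt ρ) atTop (nhds s)) (D : Set BStr) {t : ℝ} (hts : t < s)
    (hD : ∀ n, SS n (fun x => if x ∈ D then 1 else 0) ≤ 2 * (2:ℝ) ^ (t * n)) :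
    ∃ N : ℕ, ρ {Z | ∃ n, N ≤ n ∧ seg Z n ∈ D} < 1 := by
  set t' := (t + s) / 2 with ht'
  set θ := (2:ℝ) ^ (t - t') with hθ
  have hθ0 : 0 < θ := by positivity
  have hθ1 : θ < 1 := Real.rpow_lt_one_of_one_lt_of_neg (by norm_num) (by linarith)
  obtain ⟨N, hN⟩ := exists_pow_lt_of_lt_one (show (0:ℝ) < (3/8) * (1 - θ) by nlinarith) hθ1
  refine ⟨N, ?_⟩
  by_contra hcon
  have hfull : ρ {Z | ∃ n, N ≤ n ∧ seg Z n ∈ D} = 1 := le_antisymm prob_le_one (not_lt.1 hcon)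
  -- WLOG the lengths are positive
  have hN0 : N ≠ 0 := by
    rintro rfl
    simp at hN
    nlinarith
  let w : BStr → ℝ := fun y => (if y.length = 1 then 1/8 else 0) +
    (if y ∈ D then 1 else 0) * (if N ≤ y.length then (2:ℝ) ^ (-(t' * y.length)) else 0)
  have hw : ∀ x, 0 ≤ w x := by
    intro x; simp only [w]
    refine add_nonneg (by split_ifs <;> norm_num) (mul_nonneg (by split_ifs <;> norm_num) ?_)
    split_ifs <;> positivity
  have hWl : ∀ l : ℕ, SS (l+1) w ≤ (if l = 0 then 1/4 else 0) + (if N ≤ l + 1 then 2 * θ^(l+1) else 0) := by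
    intro l
    have e : SS (l+1) w = SS (l+1) (fun y => (if l + 1 = 1 then 1/8 else 0)) +
        SS (l+1) (fun y => if y ∈ D then 1 else 0) * (if N ≤ l + 1 then (2:ℝ) ^ (-(t' * (l+1:ℕ))) else 0) := by
      rw [← SS_mul_right, ← SS_addf]
      refine SS_congr fun x hx => ?_
      simp only [w, hx]
    rw [e]
    refine add_le_add ?_ ?_
    · rcases Nat.eq_zero_or_pos l with rfl | hl
      · simp [SS]; norm_num
      · rw [if_neg (by omega), if_neg (by omega)]; simp [SS]
    · split_ifs
      · refine (mul_le_mul_of_nonneg_right (hD (l+1)) (by positivity)).trans (le_of_eq ?_)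
        rw [mul_assoc, ← Real.rpow_add (by norm_num), hθ, ← Real.rpow_natCast, ← Real.rpow_mul (by norm_num)]
        congr 2; ring
      · simp
  have hW : ∀ L, ∑ l ∈ Finset.range L, SS (l+1) w ≤ 1 := by
    intro L
    refine (Finset.sum_le_sum fun l _ => hWl l).trans ?_
    rw [Finset.sum_add_distrib]
    have h1 : ∑ l ∈ Finset.range L, (if l = 0 then (1:ℝ)/4 else 0) ≤ 1/4 := by
      rw [Finset.sum_ite_eq' (Finset.range L) 0]
      split_ifs <;> norm_num
    have h2 : ∑ l ∈ Finset.range L, (if N ≤ l + 1 then 2 * θ^(l+1) else 0) ≤ 3/4 := by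
      have e1 : ∑ l ∈ Finset.range L, (if N ≤ l + 1 then 2 * θ^(l+1) else 0) ≤
          ∑ n ∈ Finset.range (L+1), (if N ≤ n then 2 * θ^n else 0) := by
        rw [Finset.sum_range_succ' _ L]
        have : 0 ≤ (if N ≤ 0 then 2 * θ^0 else 0) := by split_ifs <;> positivity
        linarith
      refine e1.trans ?_
      rw [← Finset.sum_filter]
      have e2 : (Finset.range (L+1)).filter (fun n => N ≤ n) = Finset.Ico N (L+1) := by
        ext n; simp; omega
      rw [e2, ← Finset.mul_sum]
      have := geom_sum_Ico_le_of_lt_one (m := N) (n := L+1) hθ0.le hθ1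
      have h3 : θ^N / (1 - θ) ≤ 3/8 := by
        rw [div_le_iff₀ (by linarith)]; exact hN.le
      linarith
    linarith
  have hw1 : ∀ b : Bool, 1/8 ≤ w [b] := by
    intro b; simp only [w, List.length_singleton, if_true]
    exact le_add_of_nonneg_right (mul_nonneg (by split_ifs <;> norm_num) (by split_ifs <;> positivity))
  have hcons : ∀ b x, 1/8 * QQ w x ≤ QQ w (b :: x) := fun b x =>
    (mul_le_mul_of_nonneg_right (hw1 b) (QQ_nonneg hw x)).trans (QQ_append hw [b] x (by simp))
  have hpos : ∀ x, 0 < QQ w x := by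
    intro x
    induction x with
    | nil => rw [QQ]; norm_num
    | cons b x ih => have := hcons b x; linarith
  let F : ℕ → Cantor → ℝ := fun L Z => - Real.logb 2 (QQ w (seg Z L))
  have h8 : Real.logb 2 (1/8) = -3 := by
    rw [show (1/8:ℝ) = 2 ^ (-3:ℝ) by norm_num [Real.rpow_neg], Real.logb_rpow (by norm_num) (by norm_num)]
  have hstep : ∀ (k q' q : ℝ), 0 < k → 0 < q → k * q ≤ q' → -Real.logb 2 q' ≤ - Real.logb 2 k - Real.logb 2 q := by
    intro k q' q hk hq hle
    have := Real.logb_le_logb_of_le (b := 2) (by norm_num) (by positivity) hle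
    rw [Real.logb_mul hk.ne' hq.ne'] at this
    linarith
  set c := 3 + |t'| with hc
  obtain ⟨M', hM'⟩ := covering h F (fun n => {Z | N ≤ n ∧ seg Z n ∈ D}) t' c (by positivity)
    (fun Z => by simp [F, seg, QQ])
    (by
      intro n hn L Z hZ
      have hl : N ≤ (seg Z n).length := by rw [seg_length]; exact hZ.1
      have h1 := QQ_append hw (seg Z n) (seg (shift^[n] Z) L) (by
        intro h0; have := congrArg List.length h0; rw [seg_length] at this; simp at this; omega)
      rw [← seg_add] at h1
      have h2 : (2:ℝ) ^ (-(t' * n)) ≤ w (seg Z n) := by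
        simp only [w]
        rw [if_pos hZ.2, if_pos hl, seg_length, one_mul]
        have : (0:ℝ) ≤ if n = 1 then 1/8 else 0 := by split_ifs <;> norm_num
        linarith
      have h3 := hstep ((2:ℝ) ^ (-(t' * n))) _ _ (by positivity) (hpos _)
        ((mul_le_mul_of_nonneg_right h2 (QQ_nonneg hw _)).trans h1)
      rw [Real.logb_rpow (by norm_num) (by norm_num)] at h3
      simp only [F]; linarith)
    (by
      intro L Z
      simp only [F]; rw [seg_succ]
      have h1 := hstep (1/8) _ _ (by norm_num) (hpos _) (hcons (Z 0) (seg (shift Z) L))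
      rw [h8] at h1
      have := neg_abs_le t'
      linarith)
    (fun L => integrable_seg ρ (fun x => - Real.logb 2 (QQ w x)) L)
    (fun n => measurableSet_seg (fun x => N ≤ n ∧ x ∈ D) n)
    (by
      rw [← hfull]; congr 1; ext Z
      simp only [Set.mem_iUnion, Set.mem_ofPred_eq]
      constructor
      · rintro ⟨n, _, hh⟩; exact ⟨n, hh⟩
      · rintro ⟨n, hh⟩; exact ⟨n, by omega, hh⟩)
    (show 0 < (s - t') / 2 by linarith)
  have h5 : ∀ᶠ L : ℕ in atTop, entropyAt ρ L ≤ t' + (s - t')/2 + M' / L := by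
    filter_upwards [eventually_gt_atTop 0] with L hL
    have hL' : (0:ℝ) < L := by exact_mod_cast hL
    have := (gibbs ρ hpos hL (QQ_sum hw hW L)).trans (hM' L)
    rw [← sub_nonneg]
    have e : t' + (s - t')/2 + M' / L - entropyAt ρ L = ((t' + (s - t')/2) * L + M' - L * entropyAt ρ L) / L := by
      field_simp
    rw [e]; exact div_nonneg (by linarith) hL'.le
  have h6 : Tendsto (fun L : ℕ => t' + (s - t')/2 + M' / (L:ℝ)) atTop (nhds (t' + (s - t')/2 + 0)) :=
    tendsto_const_nhds.add (tendsto_const_div_atTop_nhds_zero_nat M')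
  have := le_of_tendsto_of_tendsto hs h6 h5
  linarith

end CT

namespace CT
open MeasureTheory Filter

theorem cpx_le {U : BStr →. BStr} {x q : BStr} (h : x ∈ U q) : cpx U x ≤ q.length :=
  Nat.sInf_le ⟨q, rfl, h⟩

theorem cpx_spec {U : BStr →. BStr} {x q : BStr} (h : x ∈ U q) :
    ∃ p : BStr, p.length = cpx U x ∧ x ∈ U p :=
  Nat.sInf_mem (s := {n | ∃ q : BStr, q.length = n ∧ x ∈ U q}) ⟨_, q, rfl, h⟩

theorem plain_le {U : BStr →. BStr} (hU : UniversalPlain U) {M : BStr →. BStr} (hM : Partrec M) :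
    ∃ c : ℕ, ∀ p x, x ∈ M p → cpx U x ≤ p.length + c := by
  obtain ⟨c, hc⟩ := hU.2 M hM
  refine ⟨c, fun p x h => ?_⟩
  obtain ⟨q, h1, h2⟩ := hc p x h
  exact (cpx_le h2).trans h1

theorem plain_id {U : BStr →. BStr} (hU : UniversalPlain U) :
    ∃ c : ℕ, ∀ x, cpx U x ≤ x.length + c := by
  obtain ⟨c, hc⟩ := plain_le hU (M := fun p => Part.some p) Computable.id.partrec
  exact ⟨c, fun x => hc x x (Part.mem_some _)⟩

theorem plain_spec {U : BStr →. BStr} (hU : UniversalPlain U) (x : BStr) :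
    ∃ p : BStr, p.length = cpx U x ∧ x ∈ U p := by
  obtain ⟨c, hc⟩ := hU.2 (fun p => Part.some p) Computable.id.partrec
  obtain ⟨q, _, h2⟩ := hc x x (Part.mem_some _)
  exact cpx_spec h2

theorem plain_drop {U : BStr →. BStr} (hU : UniversalPlain U) (i : ℕ) :
    ∃ c : ℕ, ∀ x : BStr, cpx U (x.drop i) ≤ cpx U x + c := by
  have hM : Partrec (fun p => (U p).map (fun x : BStr => x.drop i)) :=
    hU.1.map (drop (Computable.const i) Computable.snd).to₂
  obtain ⟨c, hc⟩ := plain_le hU hM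
  refine ⟨c, fun x => ?_⟩
  obtain ⟨p, h1, h2⟩ := plain_spec hU x
  rw [← h1]
  exact hc p _ (Part.mem_map _ h2)

/-- stages of a partial computable function -/
theorem stages {U : BStr →. BStr} (hU : Partrec U) :
    ∃ R : ℕ → BStr × BStr → Bool, Computable₂ R ∧
      (∀ k l q, k ≤ l → R k q = true → R l q = true) ∧
      ∀ q x, x ∈ U q ↔ ∃ k, R k (q, x) = true := by
  obtain ⟨c, hc⟩ := Nat.Partrec.Code.exists_code.1 hU
  refine ⟨fun k p => decide (Nat.Partrec.Code.evaln k c (Encodable.encode p.1) =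
    some (Encodable.encode p.2)), ?_, ?_, ?_⟩
  · have h1 : Computable fun a : ℕ × BStr × BStr => Nat.Partrec.Code.evaln a.1 c (Encodable.encode a.2.1) :=
      (Nat.Partrec.Code.primrec_evaln.to_comp.comp
        (((Computable.fst (α := ℕ) (β := BStr × BStr)).pair (Computable.const c)).pair
        (Computable.encode.comp (Computable.fst.comp Computable.snd))) :)
    have h2 : Computable fun a : ℕ × BStr × BStr => some (Encodable.encode a.2.2) :=
      Computable.option_some.comp (Computable.encode.comp (Computable.snd.comp Computable.snd))
    exact deq h1 h2
  · intro k l q hkl h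
    rw [decide_eq_true_eq] at h ⊢
    exact Nat.Partrec.Code.evaln_mono hkl h
  · intro q x
    have h1 : x ∈ U q ↔ Encodable.encode x ∈ Nat.Partrec.Code.eval c (Encodable.encode q) := by
      rw [hc]; simp
    rw [h1, Nat.Partrec.Code.evaln_complete]
    simp [Option.mem_def]

/-- the set of compressible strings -/
def Dset (U : BStr →. BStr) (a b : ℕ) : Set BStr := {x | ∃ q : BStr, b * q.length < a * x.length ∧ x ∈ U q}

open Classical in
theorem Dset_count (U : BStr →. BStr) (a b : ℕ) (hb : 0 < b) (n : ℕ) :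
    SS n (fun x => if x ∈ Dset U a b then 1 else 0) ≤ 2 * (2:ℝ) ^ (((a:ℝ)/b) * n) := by
  set J := ⌈((a:ℝ)/b) * n⌉₊ with hJ
  have hb' : (0:ℝ) < b := by exact_mod_cast hb
  have h1 : SS n (fun x => if x ∈ Dset U a b then 1 else 0) ≤
      SS n (fun x => ∑ j ∈ Finset.range J, SS j (fun q => if x ∈ U q then 1 else 0)) := by
    refine SS_mono fun x hx => ?_
    have h0 : ∀ j, 0 ≤ SS j (fun q => if x ∈ U q then (1:ℝ) else 0) := fun j =>
      SS_nonneg fun q _ => by split_ifs <;> norm_num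
    split_ifs with h
    · obtain ⟨q, hq, hx'⟩ := h
      rw [hx] at hq
      have hj : q.length ∈ Finset.range J := by
        rw [Finset.mem_range, hJ, Nat.lt_ceil]
        have : (b:ℝ) * q.length < a * n := by exact_mod_cast hq
        rw [div_mul_eq_mul_div, lt_div_iff₀ hb']; linarith
      refine le_trans ?_ (Finset.single_le_sum (fun j _ => h0 j) hj)
      have := Finset.single_le_sum (f := fun v : Fin q.length → Bool => if x ∈ U (List.ofFn v) then (1:ℝ) else 0)
        (fun v _ => by split_ifs <;> norm_num) (Finset.mem_univ q.get)
      simp only [List.ofFn_get, hx', if_true] at this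
      exact this
    · exact Finset.sum_nonneg fun j _ => h0 j
  refine h1.trans ?_
  rw [SS_sum]
  have h2 : ∀ j, SS n (fun x => SS j (fun q => if x ∈ U q then (1:ℝ) else 0)) ≤ 2 ^ j := by
    intro j
    have e : SS n (fun x => SS j (fun q => if x ∈ U q then (1:ℝ) else 0)) =
      SS j (fun q => SS n (fun x => if x ∈ U q then (1:ℝ) else 0)) := Finset.sum_comm
    rw [e]
    have h3 : ∀ q, SS n (fun x => if x ∈ U q then (1:ℝ) else 0) ≤ 1 := by
      intro q
      by_cases hq : ∃ v : Fin n → Bool, List.ofFn v ∈ U q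
      · obtain ⟨v, hv⟩ := hq
        unfold SS
        rw [Finset.sum_eq_single v]
        · exact (if_pos hv).le
        · intro w _ hw
          refine if_neg ?_
          intro h
          exact hw (List.ofFn_injective (Part.mem_unique h hv))
        · simp
      · push Not at hq
        unfold SS
        rw [Finset.sum_eq_zero fun v _ => if_neg (hq v)]; norm_num
    refine (SS_mono (g := fun _ => 1) fun q _ => h3 q).trans ?_
    simp [SS]
  refine (Finset.sum_le_sum fun j _ => h2 j).trans ?_
  have h4 : ∑ j ∈ Finset.range J, (2:ℝ)^j ≤ 2 ^ J := by
    rw [geom_sum_eq (by norm_num)]; linarith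
  refine h4.trans ?_
  have h5 : (J:ℝ) ≤ ((a:ℝ)/b) * n + 1 := (Nat.ceil_lt_add_one (by positivity)).le
  rw [← Real.rpow_natCast]
  refine (Real.rpow_le_rpow_of_exponent_le (by norm_num) h5).trans ?_
  rw [Real.rpow_add (by norm_num), Real.rpow_one, mul_comm]

theorem strAt_length {n i : ℕ} (h : i < 2 ^ n) : (strAt n i).length = n := by
  have h' : i < (strs n).length := by rw [length_strs]; exact h
  apply mem_strs.1
  unfold strAt
  rw [List.getD_eq_getElem _ _ h']
  exact List.getElem_mem _

theorem exists_strAt (q : BStr) : ∃ i < 2 ^ q.length, strAt q.length i = q := by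
  obtain ⟨i, hi, h⟩ := List.getElem_of_mem (mem_strs.2 (rfl : q.length = q.length))
  refine ⟨i, by rwa [length_strs] at hi, ?_⟩
  unfold strAt
  rw [List.getD_eq_getElem _ _ hi, h]

theorem Dset_stages {U : BStr →. BStr} (hU : Partrec U) (a b : ℕ) :
    ∃ P : ℕ → BStr → Bool, Computable₂ P ∧ (∀ k l x, k ≤ l → P k x = true → P l x = true) ∧
      ∀ x, x ∈ Dset U a b ↔ ∃ k, P k x = true := by
  obtain ⟨R, hR, hmono, hiff⟩ := stages hU
  let P : ℕ → BStr → Bool := fun k x => decide (∃ j < k, decide (∃ i < 2 ^ j,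
    (decide (b * j < a * x.length) && R k (strAt j i, x)) = true) = true)
  refine ⟨P, ?_, ?_, ?_⟩
  · have d1 : Computable fun p : ((ℕ × BStr) × ℕ) × ℕ => p.1.2 := Computable.snd.comp Computable.fst
    have d2 : Computable fun p : ((ℕ × BStr) × ℕ) × ℕ => p.2 := Computable.snd
    have d3 : Computable fun p : ((ℕ × BStr) × ℕ) × ℕ => p.1.1.1 :=
      Computable.fst.comp (Computable.fst.comp Computable.fst)
    have d4 : Computable fun p : ((ℕ × BStr) × ℕ) × ℕ => p.1.1.2 :=
      Computable.snd.comp (Computable.fst.comp Computable.fst)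
    have hs := computable_strAt.comp d1 d2
    have c1 : Computable fun p : ((ℕ × BStr) × ℕ) × ℕ => R p.1.1.1 (strAt p.1.2 p.2, p.1.1.2) :=
      (hR.comp d3 (hs.pair d4) :)
    have c2 : Computable fun p : ((ℕ × BStr) × ℕ) × ℕ => decide (b * p.1.2 < a * p.1.1.2.length) :=
      dlt (mul (Computable.const b) (Computable.snd.comp Computable.fst))
        (mul (Computable.const a) (length (Computable.snd.comp (Computable.fst.comp Computable.fst))))
    have c3 : Computable₂ fun (p : (ℕ × BStr) × ℕ) (i : ℕ) =>
      (decide (b * p.2 < a * p.1.2.length) && R p.1.1 (strAt p.2 i, p.1.2)) := band c2 c1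
    have c4 := bex c3 (g := fun p => 2 ^ p.2) (pow2 Computable.snd)
    have c5 : Computable₂ fun (p : ℕ × BStr) (j : ℕ) => decide (∃ i < 2 ^ j,
      (decide (b * j < a * p.2.length) && R p.1 (strAt j i, p.2)) = true) := c4
    exact bex c5 (g := fun p => p.1) Computable.fst
  · intro k l x hkl h
    simp only [P, decide_eq_true_eq, Bool.and_eq_true] at h ⊢
    obtain ⟨j, hj, i, hi, h1, h2⟩ := h
    exact ⟨j, by omega, i, hi, h1, hmono _ _ _ hkl h2⟩
  · intro x
    simp only [P, decide_eq_true_eq, Bool.and_eq_true]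
    constructor
    · rintro ⟨q, hq, hx⟩
      obtain ⟨k, hk⟩ := (hiff q x).1 hx
      obtain ⟨i, hi, hiq⟩ := exists_strAt q
      exact ⟨k + q.length + 1, q.length, by omega, i, hi, hq, by
        rw [hiq]; exact hmono _ _ _ (by omega) hk⟩
    · rintro ⟨k, j, _, i, hi, h1, h2⟩
      refine ⟨strAt j i, ?_, (hiff _ _).2 ⟨k, h2⟩⟩
      rwa [strAt_length hi]

theorem lower_ae {U : BStr →. BStr} (hU : UniversalPlain U) {ρ μ : Measure Cantor} [IsProbabilityMeasure ρ]
    (hcomp : ComputableMeasure ρ) (herg : Ergodic shift ρ)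
    {s : ℝ} (hs : Tendsto (entropyAt ρ) atTop (nhds s)) (hml : MLAC μ ρ) (a b : ℕ) (hb : 0 < b)
    (hts : (a:ℝ)/b < s) :
    ∀ᵐ Z ∂μ, ∃ C : ℝ, ∀ᶠ n : ℕ in atTop, ((a:ℝ)/b) * n - C ≤ cpx U (seg Z n) := by
  obtain ⟨N, hN⟩ := lower_measure herg.toMeasurePreserving hs (Dset U a b) hts (Dset_count U a b hb)
  obtain ⟨P, hP, hPm, hPi⟩ := Dset_stages hU.1 a b
  let S : BStr → Bool := fun x => decide (∃ l < x.length + 1, (decide (N ≤ l) && P x.length (x.take l)) = true)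
  have hS : Computable S := by
    have c1 : Computable fun p : BStr × ℕ => P p.1.length (p.1.take p.2) :=
      (hP.comp (length Computable.fst) (take Computable.snd Computable.fst) :)
    have c2 : Computable₂ fun (x : BStr) (l : ℕ) => (decide (N ≤ l) && P x.length (x.take l)) :=
      band (dle (Computable.const N) Computable.snd) c1
    exact bex c2 (add (length Computable.id) (Computable.const 1))
  have hmono : ∀ x y : BStr, x <+: y → S x = true → S y = true := by
    intro x y hxy h
    simp only [S, decide_eq_true_eq, Bool.and_eq_true] at h ⊢
    obtain ⟨l, hl, h1, h2⟩ := h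
    have hlen := hxy.length_le
    refine ⟨l, by omega, h1, hPm _ _ _ hlen ?_⟩
    obtain ⟨z, rfl⟩ := hxy
    rwa [List.take_append_of_le_length (by omega)]
  have hopn : opn S = {Z | ∃ n, N ≤ n ∧ seg Z n ∈ Dset U a b} := by
    ext Z
    simp only [opn, Set.mem_ofPred_eq, S, decide_eq_true_eq, Bool.and_eq_true, seg_length]
    constructor
    · rintro ⟨n, l, hl, h1, h2⟩
      rw [seg_take Z (by omega)] at h2
      exact ⟨l, h1, (hPi _).2 ⟨_, h2⟩⟩
    · rintro ⟨l, h1, h2⟩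
      obtain ⟨k, hk⟩ := (hPi _).1 h2
      refine ⟨k + l, l, by omega, h1, ?_⟩
      rw [seg_take Z (by omega)]
      exact hPm _ _ _ (by omega) hk
  have hk := kucera hcomp herg hml hS hmono (by rw [hopn]; exact hN)
  have hae : ∀ᵐ Z ∂μ, ¬ ∀ i, shift^[i] Z ∈ opn S := by
    rw [ae_iff]; simpa using hk
  filter_upwards [hae] with Z hZ
  push Not at hZ
  obtain ⟨i, hi⟩ := hZ
  rw [hopn] at hi
  simp only [Set.mem_ofPred_eq, not_exists, not_and] at hi
  obtain ⟨c, hc⟩ := plain_drop hU i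
  refine ⟨((a:ℝ)/b) * i + c, ?_⟩
  filter_upwards [eventually_ge_atTop (N + i)] with n hn
  have h1 := hi (n - i) (by omega)
  have h2 := hc (seg Z n)
  rw [seg_drop] at h2
  obtain ⟨q, hq1, hq2⟩ := plain_spec hU (seg (shift^[i] Z) (n - i))
  have h3 : a * (n - i) ≤ b * cpx U (seg (shift^[i] Z) (n - i)) := by
    by_contra hlt
    refine h1 ⟨q, ?_, hq2⟩
    rw [hq1, seg_length]; omega
  have hb' : (0:ℝ) < b := by exact_mod_cast hb
  have h4 : (a:ℝ) * (n - i) ≤ b * cpx U (seg (shift^[i] Z) (n - i)) := by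
    rw [← Nat.cast_sub (by omega)]; exact_mod_cast h3
  have h5 : ((a:ℝ)/b) * (n - i) ≤ cpx U (seg (shift^[i] Z) (n - i)) := by
    rw [div_mul_eq_mul_div, div_le_iff₀ hb']; linarith
  have h6 : (cpx U (seg (shift^[i] Z) (n - i)) : ℝ) ≤ cpx U (seg Z n) + c := by exact_mod_cast h2
  linarith

end CT

namespace CT
open MeasureTheory Filter

/-- number of leading ones -/
def lead (p : BStr) : ℕ := p.idxOf false

theorem computable_lead : Computable lead := by
  have := Primrec.list_idxOf.comp (Primrec.const (α := BStr) false) (Primrec.id (α := BStr))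
  exact this.to_comp

/-- header parsing -/
def hA (p : BStr) : ℕ := lead p
def hB (p : BStr) : ℕ := lead (p.drop (lead p + 1))
def hR (p : BStr) : BStr := (p.drop (lead p + 1)).drop (hB p + 1)
def hN (p : BStr) : ℕ := hA p * hA p + hB p

theorem computable_hA : Computable hA := computable_lead
theorem computable_hB : Computable hB :=
  (computable_lead.comp (drop (add computable_lead (Computable.const 1)) Computable.id) :)
theorem computable_hR : Computable hR :=
  (drop (add computable_hB (Computable.const 1)) (drop (add computable_lead (Computable.const 1)) Computable.id) :)
theorem computable_hN : Computable hN :=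
  (add (mul computable_hA computable_hA) computable_hB :)

/-- self-delimiting header for n -/
def hdr (n : ℕ) : BStr := List.replicate (Nat.sqrt n) true ++ false ::
  (List.replicate (n - Nat.sqrt n * Nat.sqrt n) true ++ [false])

theorem lead_rep (a : ℕ) (y : BStr) : lead (List.replicate a true ++ false :: y) = a := by
  unfold lead
  rw [List.idxOf_append_of_notMem (by simp)]; simp

theorem hdr_app (n : ℕ) (y : BStr) : hdr n ++ y = List.replicate (Nat.sqrt n) true ++ false ::
  (List.replicate (n - Nat.sqrt n * Nat.sqrt n) true ++ false :: y) := by simp [hdr]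

theorem drop_rep (a : ℕ) (y : BStr) : (List.replicate a true ++ false :: y).drop (a + 1) = y := by
  rw [List.drop_append]; simp

theorem hA_hdr (n : ℕ) (y : BStr) : hA (hdr n ++ y) = Nat.sqrt n := by
  rw [hdr_app, hA, lead_rep]

theorem hB_hdr (n : ℕ) (y : BStr) : hB (hdr n ++ y) = n - Nat.sqrt n * Nat.sqrt n := by
  rw [hdr_app, hB, lead_rep, drop_rep, lead_rep]

theorem hR_hdr (n : ℕ) (y : BStr) : hR (hdr n ++ y) = y := by
  unfold hR; rw [hB_hdr, hdr_app, lead_rep, drop_rep, drop_rep]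

theorem hN_hdr (n : ℕ) (y : BStr) : hN (hdr n ++ y) = n := by
  unfold hN; rw [hA_hdr, hB_hdr]
  have := Nat.sqrt_le n
  omega

theorem hdr_length (n : ℕ) : (hdr n).length = Nat.sqrt n + (n - Nat.sqrt n * Nat.sqrt n) + 2 := by
  simp [hdr]; omega

theorem hdr_length_le (n : ℕ) : (hdr n).length ≤ 3 * Nat.sqrt n + 2 := by
  rw [hdr_length]
  have := Nat.sqrt_le_add n
  omega

theorem lead_stable {p q : BStr} (h : p <+: q) (hl : lead p < p.length) : lead q = lead p := by
  obtain ⟨z, rfl⟩ := h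
  unfold lead at *
  exact List.idxOf_append_of_mem (List.idxOf_lt_length_iff.1 hl)

/-- prefix-free version of the plain machine -/
def KM (U : BStr →. BStr) : BStr →. BStr := fun p =>
  bif decide (p.length = hA p + hB p + 2 + hN p) then U (hR p) else Part.none

theorem KM_partrec {U : BStr →. BStr} (hU : Partrec U) : Partrec (KM U) := by
  have c1 : Computable fun p : BStr => decide (p.length = hA p + hB p + 2 + hN p) :=
    deq (length Computable.id) (add (add (add computable_hA computable_hB) (Computable.const 2)) computable_hN)
  exact Partrec.cond c1 (hU.comp computable_hR) Partrec.none

theorem KM_pfree (U : BStr →. BStr) : PrefixFreeDom (KM U) := by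
  have key : ∀ p, (KM U p).Dom → p.length = hA p + hB p + 2 + hN p := by
    intro p hp
    by_contra h
    unfold KM at hp
    simp only [h, decide_false, cond_false, Part.not_none_dom] at hp
  intro p q hp hq hpq
  have h1 := key p hp
  have h2 := key q hq
  have eA : hA q = hA p := lead_stable hpq (by unfold hA at h1; omega)
  have eA' : lead q = lead p := eA
  have eB : hB q = hB p := by
    unfold hB
    rw [eA']
    refine lead_stable (hpq.drop _) ?_
    show hB p < _
    rw [List.length_drop]; unfold hA at h1; omega
  refine hpq.eq_of_length ?_
  unfold hN at h1 h2
  rw [h1, h2, eA, eB]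

theorem K_le_C {U UK : BStr →. BStr} (hU : UniversalPlain U) (hUK : UniversalPrefixFree UK) :
    ∃ c : ℕ, ∀ x, cpx UK x ≤ cpx U x + 3 * Nat.sqrt (cpx U x) + c := by
  obtain ⟨c, hc⟩ := hUK.2.2 (KM U) (KM_partrec hU.1) (KM_pfree U)
  refine ⟨c + 2, fun x => ?_⟩
  obtain ⟨y, h1, h2⟩ := plain_spec hU x
  have h3 : x ∈ KM U (hdr (cpx U x) ++ y) := by
    unfold KM
    rw [hA_hdr, hB_hdr, hN_hdr, hR_hdr, List.length_append, hdr_length, h1]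
    simpa using h2
  obtain ⟨q, hq1, hq2⟩ := hc _ _ h3
  have h4 := cpx_le hq2
  have h5 := hdr_length_le (cpx U x)
  rw [List.length_append, h1] at hq1
  omega

theorem C_le_K {U UK : BStr →. BStr} (hU : UniversalPlain U) (hUK : UniversalPrefixFree UK) :
    ∃ c : ℕ, ∀ x, cpx U x ≤ cpx UK x + c := by
  obtain ⟨c, hc⟩ := plain_le hU hUK.1
  refine ⟨c, fun x => ?_⟩
  obtain ⟨c', hc'⟩ := hUK.2.2 (KM U) (KM_partrec hU.1) (KM_pfree U)
  obtain ⟨y, h1, h2⟩ := plain_spec hU x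
  have h3 : x ∈ KM U (hdr (cpx U x) ++ y) := by
    unfold KM
    rw [hA_hdr, hB_hdr, hN_hdr, hR_hdr, List.length_append, hdr_length, h1]
    simpa using h2
  obtain ⟨q, _, hq2⟩ := hc' _ _ h3
  obtain ⟨p, hp1, hp2⟩ := cpx_spec hq2
  rw [← hp1]
  exact hc p x hp2

/-- rank -/
def rank (A : BStr → Bool) (n j : ℕ) : ℕ := ∑ i ∈ Finset.range j, bif A (strAt n i) then 1 else 0

theorem rank_lt {A : BStr → Bool} {n i j : ℕ} (hij : i < j) (hi : A (strAt n i) = true) :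
    rank A n i < rank A n j := by
  have h1 : rank A n (i+1) = rank A n i + 1 := by
    unfold rank; rw [Finset.sum_range_succ, hi]; rfl
  have h2 : rank A n (i+1) ≤ rank A n j :=
    Finset.sum_le_sum_of_subset (Finset.range_mono hij)
  omega

theorem strAt_inj {n i j : ℕ} (hi : i < 2 ^ n) (hj : j < 2 ^ n) (h : strAt n i = strAt n j) : i = j := by
  have hi' : i < (strs n).length := by rw [length_strs]; exact hi
  have hj' : j < (strs n).length := by rw [length_strs]; exact hj
  unfold strAt at h
  rw [List.getD_eq_getElem _ _ hi', List.getD_eq_getElem _ _ hj'] at h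
  exact (nodup_strs n).getElem_inj_iff.1 h

/-- upper bound on complexity of elements of a computable set -/
theorem plain_set {U : BStr →. BStr} (hU : UniversalPlain U) {A : BStr → Bool} (hA' : Computable A) :
    ∃ c : ℕ, ∀ n J : ℕ, rank A n (2 ^ n) ≤ 2 ^ J → ∀ x : BStr, x.length = n → A x = true →
      cpx U x ≤ J + 3 * Nat.sqrt n + c := by
  let P : BStr → ℕ → Bool := fun p j =>
    A (strAt (hN p) j) && decide (strAt (hR p).length (rank A (hN p) j) = hR p)
  have hP : Computable₂ P := by
    have d1 : Computable fun p : BStr × ℕ => hN p.1 := (computable_hN.comp (Computable.fst (α := BStr) (β := ℕ)) :)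
    have d2 : Computable fun p : BStr × ℕ => hR p.1 := (computable_hR.comp (Computable.fst (α := BStr) (β := ℕ)) :)
    have d3 : Computable fun p : BStr × ℕ => p.2 := Computable.snd
    have e1 := computable_strAt.comp d1 d3
    have e2 : Computable fun p : BStr × ℕ => A (strAt (hN p.1) p.2) := (hA'.comp e1 :)
    have e3 : Computable₂ fun (p : BStr × ℕ) (i : ℕ) => bif A (strAt (hN p.1) i) then 1 else 0 := by
      have f1 : Computable fun q : (BStr × ℕ) × ℕ => hN q.1.1 := (d1.comp (Computable.fst (α := BStr × ℕ) (β := ℕ)) :)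
      have f2 : Computable fun q : (BStr × ℕ) × ℕ => q.2 := Computable.snd
      have f3 := computable_strAt.comp f1 f2
      have f4 : Computable fun q : (BStr × ℕ) × ℕ => A (strAt (hN q.1.1) q.2) := (hA'.comp f3 :)
      exact Computable.cond f4 (Computable.const 1) (Computable.const 0)
    have e4 : Computable fun p : BStr × ℕ => rank A (hN p.1) p.2 := sum e3 d3
    have e5 := computable_strAt.comp (length d2) e4
    exact band e2 (deq e5 d2)
  let M : BStr →. BStr := fun p => (Nat.rfind (fun j => Part.some (P p j))).map (fun j => strAt (hN p) j)
  have hM : Partrec M := by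
    have h1 : Partrec fun a => Nat.rfind (fun n => Part.some (P a n)) := Partrec.rfind hP.partrec₂
    have d1 : Computable fun p : BStr × ℕ => hN p.1 := (computable_hN.comp (Computable.fst (α := BStr) (β := ℕ)) :)
    have d3 : Computable fun p : BStr × ℕ => p.2 := Computable.snd
    have e1 : Computable₂ fun (p : BStr) (j : ℕ) => strAt (hN p) j := computable_strAt.comp d1 d3
    exact h1.map e1
  obtain ⟨c, hc⟩ := plain_le hU hM
  refine ⟨c + 2, fun n J hJ x hx hAx => ?_⟩
  obtain ⟨j, hj, hjx⟩ := exists_strAt x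
  rw [hx] at hj hjx
  have hAj : A (strAt n j) = true := by rw [hjx]; exact hAx
  have hr : rank A n j < 2 ^ J := (rank_lt hj hAj).trans_le hJ
  set y := strAt J (rank A n j) with hy
  have hyl : y.length = J := strAt_length hr
  have hmem : x ∈ M (hdr n ++ y) := by
    refine (Part.mem_map_iff _).2 ⟨j, ?_, by rw [hN_hdr, hjx]⟩
    refine Nat.mem_rfind.2 ⟨?_, fun {m} hm => ?_⟩
    · simp only [P, hN_hdr, hR_hdr, hyl, hAj]; simp [hy]
    · simp only [P, hN_hdr, hR_hdr, hyl, Part.mem_some_iff]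
      rw [eq_comm, Bool.eq_false_iff]
      intro hcon
      rw [Bool.and_eq_true, decide_eq_true_eq] at hcon
      have h1 := rank_lt hm hcon.1
      have := strAt_inj (h1.trans hr) hr hcon.2
      omega
  have h1 := hc _ _ hmem
  rw [List.length_append, hyl] at h1
  have h2 := hdr_length_le n
  omega

theorem rank_eq_SS (A : BStr → Bool) (n : ℕ) : (rank A n (2 ^ n) : ℝ) = SS n (fun x => if A x = true then 1 else 0) := by
  unfold SS rank
  rw [← sum_idx_strs n (fun x => if A x = true then (1:ℝ) else 0)]
  push_cast
  refine Finset.sum_congr rfl fun i _ => ?_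
  unfold strAt
  cases A ((strs n).getD i []) <;> simp

end CT

namespace CT
open MeasureTheory Filter

/-- block entropy -/
noncomputable def hh (ρ : Measure Cantor) (n : ℕ) : ℝ :=
  SS n (fun x => - (ρ.real (cyl x) * Real.logb 2 (ρ.real (cyl x))))

theorem hh_eq (ρ : Measure Cantor) {L : ℕ} (hL : 0 < L) : hh ρ L = L * entropyAt ρ L := by
  have hL' : (L:ℝ) ≠ 0 := by positivity
  unfold hh entropyAt SS
  rw [Finset.sum_neg_distrib, ← mul_assoc]
  have : (L:ℝ) * -(1 / (L:ℝ)) = -1 := by field_simp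
  rw [this, neg_one_mul]; rfl

theorem exists_k {ρ : Measure Cantor} [IsProbabilityMeasure ρ] {s : ℝ}
    (hs : Tendsto (entropyAt ρ) atTop (nhds s)) {ε : ℝ} (hε : 0 < ε) :
    ∃ k, hh ρ (k+1) - hh ρ k ≤ s + ε := by
  by_contra hcon
  push Not at hcon
  have h0 : hh ρ 0 = 0 := by
    unfold hh; rw [SS_zero, cyl_nil]; simp
  have h1 : ∀ n : ℕ, (n:ℝ) * (s + ε) ≤ hh ρ n := by
    intro n
    induction n with
    | zero => rw [h0]; simp
    | succ n ih => have := hcon n; push_cast; linarith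
  have h2 : ∀ᶠ n : ℕ in atTop, s + ε ≤ entropyAt ρ n := by
    filter_upwards [eventually_gt_atTop 0] with n hn
    have := h1 n
    rw [hh_eq ρ hn] at this
    exact le_of_mul_le_mul_left this (by exact_mod_cast hn)
  have := ge_of_tendsto hs h2
  linarith

/-- smoothed backward conditional probability -/
noncomputable def qq (ρ : Measure Cantor) (η : ℝ) (x : BStr) : ℝ :=
  (ρ.real (cyl x) + η) / (ρ.real (cyl x.tail) + 2 * η)

theorem cyl_add_real {ρ : Measure Cantor} [IsProbabilityMeasure ρ] (h : MeasurePreserving shift ρ ρ) (x : BStr) :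
    ρ.real (cyl (false :: x)) + ρ.real (cyl (true :: x)) = ρ.real (cyl x) := by
  have := cyl_cons_add h x
  simp only [Measure.real]
  rw [← this, ENNReal.toReal_add (measure_ne_top _ _) (measure_ne_top _ _)]

theorem qq_pos {ρ : Measure Cantor} {η : ℝ} (hη : 0 < η) (x : BStr) : 0 < qq ρ η x := by
  have h1 : 0 ≤ ρ.real (cyl x) := measureReal_nonneg
  have h2 : 0 ≤ ρ.real (cyl x.tail) := measureReal_nonneg
  unfold qq; positivity

theorem qq_sum {ρ : Measure Cantor} [IsProbabilityMeasure ρ] (h : MeasurePreserving shift ρ ρ)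
    {η : ℝ} (hη : 0 < η) (x : BStr) : qq ρ η (false :: x) + qq ρ η (true :: x) = 1 := by
  have h1 := cyl_add_real h x
  have h2 : 0 ≤ ρ.real (cyl x) := measureReal_nonneg
  unfold qq
  simp only [List.tail_cons]
  rw [← add_div, div_eq_one_iff_eq (by positivity)]
  linarith

theorem tendsto_plog {p : ℝ} (hp : 0 ≤ p) (c : ℝ) :
    Tendsto (fun η : ℝ => p * Real.logb 2 (p + c * η)) (nhds 0) (nhds (p * Real.logb 2 p)) := by
  rcases hp.eq_or_lt with rfl | hp
  · simp
  · have h1 : Tendsto (fun η : ℝ => p + c * η) (nhds 0) (nhds p) := by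
      have : Continuous (fun η : ℝ => p + c * η) := by fun_prop
      simpa using this.tendsto 0
    unfold Real.logb
    exact ((h1.log hp.ne').div_const _).const_mul p

theorem qq_tendsto {ρ : Measure Cantor} [IsProbabilityMeasure ρ] (h : MeasurePreserving shift ρ ρ) (k : ℕ) :
    ∀ ε > 0, ∃ η > 0, SS (k+1) (fun x => (- Real.logb 2 (qq ρ η x)) * ρ.real (cyl x)) ≤
      hh ρ (k+1) - hh ρ k + ε := by
  intro ε hε
  let f : ℝ → ℝ := fun η => - SS (k+1) (fun x => ρ.real (cyl x) * Real.logb 2 (ρ.real (cyl x) + 1 * η)) +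
    SS k (fun x => ρ.real (cyl x) * Real.logb 2 (ρ.real (cyl x) + 2 * η))
  have hf : Tendsto f (nhds 0) (nhds (hh ρ (k+1) - hh ρ k)) := by
    have e : hh ρ (k+1) - hh ρ k = - SS (k+1) (fun x => ρ.real (cyl x) * Real.logb 2 (ρ.real (cyl x))) +
        SS k (fun x => ρ.real (cyl x) * Real.logb 2 (ρ.real (cyl x))) := by
      unfold hh SS; simp only [Finset.sum_neg_distrib]; ring
    rw [e]
    unfold f SS
    exact (tendsto_finsetSum _ fun v _ => tendsto_plog measureReal_nonneg 1).neg.add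
      (tendsto_finsetSum _ fun v _ => tendsto_plog measureReal_nonneg 2)
  have h1 : ∀ᶠ η in nhdsWithin (0:ℝ) (Set.Ioi 0), f η < hh ρ (k+1) - hh ρ k + ε :=
    (hf.mono_left nhdsWithin_le_nhds).eventually (gt_mem_nhds (by linarith))
  obtain ⟨η, h2, hη⟩ := (h1.and self_mem_nhdsWithin).exists
  have hη : 0 < η := hη
  refine ⟨η, hη, le_trans (le_of_eq ?_) h2.le⟩
  have e1 : SS (k+1) (fun x => (- Real.logb 2 (qq ρ η x)) * ρ.real (cyl x)) =
      SS (k+1) (fun x => (-1) * (ρ.real (cyl x) * Real.logb 2 (ρ.real (cyl x) + 1 * η)) +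
        ρ.real (cyl x) * Real.logb 2 (ρ.real (cyl x.tail) + 2 * η)) := by
    refine SS_congr fun x _ => ?_
    have h3 : 0 ≤ ρ.real (cyl x) := measureReal_nonneg
    have h4 : 0 ≤ ρ.real (cyl x.tail) := measureReal_nonneg
    unfold qq
    rw [Real.logb_div (by positivity) (by positivity)]; ring_nf
  rw [e1, SS_addf, SS_mul_left]
  have e2 : SS (k+1) (fun x => ρ.real (cyl x) * Real.logb 2 (ρ.real (cyl x.tail) + 2 * η)) =
      SS k (fun x => ρ.real (cyl x) * Real.logb 2 (ρ.real (cyl x) + 2 * η)) := by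
    rw [SS_succ, ← SS_addf]
    refine SS_congr fun x _ => ?_
    simp only [List.tail_cons]
    rw [← add_mul, cyl_add_real h]
  rw [e2]; simp only [f]; ring

/-- tables are computable -/
theorem exists_table (k : ℕ) (g : BStr → ℕ) :
    ∃ g' : BStr → ℕ, Computable g' ∧ ∀ x, x.length = k → g' x = g x := by
  refine ⟨fun x => (((strs k).map g).getD (@List.idxOf BStr instBEqOfDecidableEq x (strs k)) 0), ?_, ?_⟩
  · have h1 := Primrec.list_idxOf₁ (strs k)
    have h2 := (Primrec.list_getD (0:ℕ)).comp (Primrec.const ((strs k).map g)) h1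
    exact h2.to_comp
  · intro x hx
    have hm : x ∈ strs k := mem_strs.2 hx
    have hl : @List.idxOf BStr instBEqOfDecidableEq x (strs k) < ((strs k).map g).length := by
      rw [List.length_map]; exact (@List.idxOf_lt_length_iff BStr instBEqOfDecidableEq _ _ _).2 hm
    show ((strs k).map g).getD (@List.idxOf BStr instBEqOfDecidableEq x (strs k)) 0 = _
    rw [List.getD_eq_getElem _ _ hl, List.getElem_map, @List.getElem_idxOf BStr instBEqOfDecidableEq]

/-- code length -/
def cost (k : ℕ) (g : BStr → ℕ) (x : BStr) : ℕ :=
  ∑ i ∈ Finset.range (x.length - k), g ((x.drop i).take (k+1))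

theorem cost_nil (k : ℕ) (g : BStr → ℕ) : cost k g [] = 0 := by simp [cost]

theorem cost_cons (k : ℕ) (g : BStr → ℕ) (b : Bool) (x : BStr) :
    cost k g (b :: x) = (if k ≤ x.length then g ((b :: x).take (k+1)) else 0) + cost k g x := by
  unfold cost
  split_ifs with h
  · rw [List.length_cons, show x.length + 1 - k = (x.length - k) + 1 by omega, Finset.sum_range_succ']
    simp [add_comm]
  · rw [List.length_cons, show x.length + 1 - k = 0 by omega, show x.length - k = 0 by omega]; simp

theorem computable_cost (k : ℕ) {g : BStr → ℕ} (hg : Computable g) : Computable (cost k g) := by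
  have h1 : Computable₂ fun (x : BStr) (i : ℕ) => g ((x.drop i).take (k+1)) := by
    have d : Computable fun p : BStr × ℕ => (p.1.drop p.2).take (k+1) :=
      take (Computable.const _) (drop Computable.snd Computable.fst)
    exact (hg.comp d :)
  exact sum h1 (sub (length Computable.id) (Computable.const k))

theorem cost_append (k : ℕ) (g : BStr → ℕ) (y x : BStr) : cost k g y + cost k g x ≤ cost k g (y ++ x) := by
  induction y with
  | nil => simp [cost_nil]
  | cons b y ih =>
    rw [List.cons_append, cost_cons, cost_cons]
    by_cases h : k ≤ y.length
    · rw [if_pos h, if_pos (by rw [List.length_append]; omega)]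
      have e : (b :: (y ++ x)).take (k+1) = (b :: y).take (k+1) := by
        rw [← List.cons_append, List.take_append_of_le_length (by simp; omega)]
      rw [e]; omega
    · rw [if_neg h]; omega

theorem cost_kraft (k : ℕ) (g : BStr → ℕ) (r : ℝ) (hr : 0 ≤ r)
    (hg : ∀ w : BStr, w.length = k → r ^ g (false :: w) + r ^ g (true :: w) ≤ 1) (n : ℕ) :
    SS n (fun x => r ^ cost k g x) ≤ 2 ^ min n k := by
  induction n with
  | zero => simp [SS_zero, cost_nil]
  | succ n ih =>
    have h0 : 0 ≤ SS n (fun x => r ^ cost k g x) := SS_nonneg fun _ _ => by positivity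
    rw [SS_succ, ← SS_addf]
    by_cases h : k ≤ n
    · refine le_trans (SS_mono (g := fun x => r ^ cost k g x) fun x hx => ?_) (ih.trans ?_)
      · rw [cost_cons, cost_cons, if_pos (by omega), if_pos (by omega), pow_add, pow_add, ← add_mul]
        refine mul_le_of_le_one_left (by positivity) ?_
        simp only [List.take_succ_cons]
        exact hg _ (by rw [List.length_take]; omega)
      · rw [min_eq_right h, min_eq_right (by omega)]
    · refine le_trans (SS_mono (g := fun x => 2 * r ^ cost k g x) fun x hx => ?_) ?_
      · rw [cost_cons, cost_cons, if_neg (by omega), if_neg (by omega), zero_add]; linarith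
      · rw [SS_mul_left]
        rw [min_eq_left (by omega)] at ih
        rw [min_eq_left (by omega), pow_succ]; linarith

theorem integral_shift {ρ : Measure Cantor} [IsProbabilityMeasure ρ] (h : MeasurePreserving shift ρ ρ)
    (F : BStr → ℝ) (n : ℕ) : ∫ Z, F (seg (shift Z) n) ∂ρ = ∫ Z, F (seg Z n) ∂ρ := by
  have h1 := integral_map (μ := ρ) (φ := shift) h.aemeasurable (f := fun Z => F (seg Z n))
    (by rw [h.map_eq]; exact (integrable_seg ρ F n).aestronglyMeasurable)
  rw [h.map_eq] at h1
  exact h1.symm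

theorem integrable_seg_shift {ρ : Measure Cantor} [IsProbabilityMeasure ρ] (h : MeasurePreserving shift ρ ρ)
    (F : BStr → ℝ) (n : ℕ) : Integrable (fun Z => F (seg (shift Z) n)) ρ :=
  h.integrable_comp_of_integrable (integrable_seg ρ F n)

theorem cost_integral {ρ : Measure Cantor} [IsProbabilityMeasure ρ] (h : MeasurePreserving shift ρ ρ)
    (k : ℕ) (g : BStr → ℕ) (L : ℕ) :
    ∫ Z, (cost k g (seg Z L) : ℝ) ∂ρ ≤ L * ∫ Z, (g (seg Z (k+1)) : ℝ) ∂ρ := by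
  induction L with
  | zero => simp [seg, cost_nil]
  | succ L ih =>
    have h1 : ∀ Z, (cost k g (seg Z (L+1)) : ℝ) ≤ (g (seg Z (k+1)) : ℝ) + cost k g (seg (shift Z) L) := by
      intro Z
      rw [seg_succ, cost_cons]
      push_cast
      refine add_le_add ?_ le_rfl
      split_ifs with hk
      · rw [seg_length] at hk
        rw [← seg_succ, seg_take Z (by omega)]
      · simp
    refine (integral_mono (integrable_seg ρ (fun x => (cost k g x : ℝ)) (L+1))
      ((integrable_seg ρ (fun x => (g x : ℝ)) (k+1)).add
        (integrable_seg_shift h (fun x => (cost k g x : ℝ)) L)) h1).trans ?_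
    have e := integral_add (integrable_seg ρ (fun x => (g x : ℝ)) (k+1))
        (integrable_seg_shift h (fun x => (cost k g x : ℝ)) L)
    rw [integral_shift h (fun x => (cost k g x : ℝ)) L] at e
    refine (le_of_eq e).trans ?_
    push_cast
    linarith

theorem cost_measure {ρ : Measure Cantor} [IsProbabilityMeasure ρ] (h : MeasurePreserving shift ρ ρ)
    (k : ℕ) (g : BStr → ℕ) (m : ℕ) (hm : ∫ Z, (g (seg Z (k+1)) : ℝ) ∂ρ < m) :
    ρ {Z | ∃ n, 1 ≤ n ∧ m * n < cost k g (seg Z n)} < 1 := by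
  by_contra hcon
  have hfull : ρ {Z | ∃ n, 1 ≤ n ∧ m * n < cost k g (seg Z n)} = 1 :=
    le_antisymm prob_le_one (not_lt.1 hcon)
  set I := ∫ Z, (g (seg Z (k+1)) : ℝ) ∂ρ with hI
  obtain ⟨M', hM'⟩ := covering h (fun L Z => -(cost k g (seg Z L) : ℝ))
    (fun n => {Z | m * n < cost k g (seg Z n)}) (-(m:ℝ)) m (by positivity)
    (fun Z => by simp [seg, cost_nil])
    (by
      intro n _ L Z hZ
      have h1 := cost_append k g (seg Z n) (seg (shift^[n] Z) L)
      rw [← seg_add] at h1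
      have h2 : m * n < cost k g (seg Z n) := hZ
      have h3 : (m * n + cost k g (seg (shift^[n] Z) L) : ℝ) ≤ cost k g (seg Z (n + L)) := by
        exact_mod_cast (by omega : m * n + cost k g (seg (shift^[n] Z) L) ≤ cost k g (seg Z (n + L)))
      linarith)
    (by
      intro L Z
      rw [seg_succ, cost_cons]
      push_cast
      have : (0:ℝ) ≤ if k ≤ (seg (shift Z) L).length then (g ((Z 0 :: seg (shift Z) L).take (k+1)) : ℝ) else 0 := by
        split_ifs <;> positivity
      linarith)
    (fun L => integrable_seg ρ (fun x => -(cost k g x : ℝ)) L)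
    (fun n => measurableSet_seg (fun x => m * n < cost k g x) n)
    (by
      rw [← hfull]; congr 1; ext Z
      simp only [Set.mem_iUnion, Set.mem_ofPred_eq, exists_prop])
    (show 0 < (m - I) / 2 by linarith)
  obtain ⟨L, hL⟩ := exists_nat_gt (M' / ((m - I)/2))
  rw [div_lt_iff₀ (by linarith)] at hL
  have h1 := hM' L
  rw [integral_neg] at h1
  have h2 := cost_integral h k g L
  rw [← hI] at h2
  nlinarith

end CT

namespace CT
open MeasureTheory Filter

theorem sqrt_small {δ : ℝ} (hδ : 0 < δ) (C : ℝ) (c1 : ℕ) :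
    ∀ᶠ n : ℕ in atTop, C + 3 * (Nat.sqrt (n + c1) : ℝ) ≤ δ * n := by
  obtain ⟨N, hN⟩ := exists_nat_gt ((C + 9/(2*δ) + (δ/2)*c1) / (δ/2))
  filter_upwards [eventually_ge_atTop N] with n hn
  have hn' : (N:ℝ) ≤ n := by exact_mod_cast hn
  have h1 : C + 9/(2*δ) + (δ/2)*c1 < (δ/2) * n := by
    have := hN.trans_le hn'
    rw [div_lt_iff₀ (by linarith)] at this
    linarith
  have h2 : (Nat.sqrt (n + c1) : ℝ) * Nat.sqrt (n + c1) ≤ n + c1 := by exact_mod_cast Nat.sqrt_le (n + c1)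
  set v := (Nat.sqrt (n + c1) : ℝ)
  have h3 : 3 * v ≤ (δ/2) * (v * v) + 9/(2*δ) := by
    have h4 : (δ/2) * (v * v) + 9/(2*δ) - 3 * v = (δ/2) * (v - 3/δ)^2 := by field_simp; ring
    have h5 : 0 ≤ (δ/2) * (v - 3/δ)^2 := by positivity
    linarith
  have h4 : (δ/2) * (v * v) ≤ (δ/2) * (n + c1) := mul_le_mul_of_nonneg_left h2 (by linarith)
  linarith

theorem cost_ae {ρ μ : Measure Cantor} [IsProbabilityMeasure ρ]
    (hcomp : ComputableMeasure ρ) (herg : Ergodic shift ρ) (hml : MLAC μ ρ)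
    (k : ℕ) {g : BStr → ℕ} (hg : Computable g) (m : ℕ) (hm : ∫ Z, (g (seg Z (k+1)) : ℝ) ∂ρ < m) :
    ∀ᵐ Z ∂μ, ∀ᶠ n : ℕ in atTop, cost k g (seg Z n) ≤ (m + 1) * n := by
  have hlt := cost_measure herg.toMeasurePreserving k g m hm
  let S : BStr → Bool := fun x => decide (∃ l < x.length + 1,
    (decide (1 ≤ l) && decide (m * l < cost k g (x.take l))) = true)
  have hS : Computable S := by
    have d : Computable fun p : BStr × ℕ => p.1.take p.2 := take Computable.snd Computable.fst
    have c1 : Computable fun p : BStr × ℕ => cost k g (p.1.take p.2) := ((computable_cost k hg).comp d :)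
    have c2 : Computable₂ fun (x : BStr) (l : ℕ) =>
        (decide (1 ≤ l) && decide (m * l < cost k g (x.take l))) :=
      band (dle (Computable.const 1) Computable.snd) (dlt (mul (Computable.const m) Computable.snd) c1)
    exact bex c2 (add (length Computable.id) (Computable.const 1))
  have hmono : ∀ x y : BStr, x <+: y → S x = true → S y = true := by
    intro x y hxy h
    simp only [S, decide_eq_true_eq, Bool.and_eq_true] at h ⊢
    obtain ⟨l, hl, h1, h2⟩ := h
    have hlen := hxy.length_le
    refine ⟨l, by omega, h1, ?_⟩
    obtain ⟨z, rfl⟩ := hxy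
    rwa [List.take_append_of_le_length (by omega)]
  have hopn : opn S = {Z | ∃ n, 1 ≤ n ∧ m * n < cost k g (seg Z n)} := by
    ext Z
    simp only [opn, Set.mem_ofPred_eq, S, decide_eq_true_eq, Bool.and_eq_true, seg_length]
    constructor
    · rintro ⟨n, l, hl, h1, h2⟩
      rw [seg_take Z (by omega)] at h2
      exact ⟨l, h1, h2⟩
    · rintro ⟨l, h1, h2⟩
      refine ⟨l, l, by omega, h1, ?_⟩
      rwa [seg_take Z le_rfl]
  have hk := kucera hcomp herg hml hS hmono (by rw [hopn]; exact hlt)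
  have hae : ∀ᵐ Z ∂μ, ¬ ∀ i, shift^[i] Z ∈ opn S := by
    rw [ae_iff]; simpa using hk
  -- bound on g
  obtain ⟨G, hG⟩ : ∃ G, ∀ x : BStr, x.length = k + 1 → g x ≤ G := by
    refine ⟨((strs (k+1)).map g).sum, fun x hx => ?_⟩
    exact List.single_le_sum (by simp) _ (List.mem_map_of_mem (mem_strs.2 hx))
  have hpre : ∀ (i : ℕ) (Z : Cantor) (n : ℕ), cost k g (seg Z (n + i)) ≤ i * G + cost k g (seg (shift^[i] Z) n) := by
    intro i
    induction i with
    | zero => intro Z n; simp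
    | succ i ih =>
      intro Z n
      rw [← add_assoc, seg_succ, cost_cons, Function.iterate_succ_apply]
      have h1 := ih (shift Z) n
      have h2 : (if k ≤ (seg (shift Z) (n + i)).length then g ((Z 0 :: seg (shift Z) (n + i)).take (k+1)) else 0) ≤ G := by
        split_ifs with h
        · exact hG _ (by rw [List.length_take, List.length_cons]; omega)
        · omega
      rw [add_mul]; omega
  filter_upwards [hae] with Z hZ
  push Not at hZ
  obtain ⟨i, hi⟩ := hZ
  rw [hopn] at hi
  simp only [Set.mem_ofPred_eq, not_exists, not_and, not_lt] at hi
  filter_upwards [eventually_ge_atTop (i * G + i + 1)] with n hn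
  have h1 := hpre i Z (n - i)
  have hle : i ≤ n := le_trans (by omega) hn
  rw [Nat.sub_add_cancel hle] at h1
  have h2 := hi (n - i) (by omega)
  have h3 : m * (n - i) ≤ m * n := Nat.mul_le_mul_left _ (by omega)
  rw [add_mul]; omega

theorem upper_ae {U : BStr →. BStr} (hU : UniversalPlain U) {ρ μ : Measure Cantor} [IsProbabilityMeasure ρ]
    (hcomp : ComputableMeasure ρ) (herg : Ergodic shift ρ)
    {s : ℝ} (hs : Tendsto (entropyAt ρ) atTop (nhds s)) (hml : MLAC μ ρ) {ε : ℝ} (hε : 0 < ε) :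
    ∀ᵐ Z ∂μ, ∀ᶠ n : ℕ in atTop, (cpx U (seg Z n) : ℝ) ≤ (s + ε) * n := by
  have hmp := herg.toMeasurePreserving
  obtain ⟨k, hk⟩ := exists_k hs (show 0 < ε/8 by linarith)
  obtain ⟨η, hη, hq⟩ := qq_tendsto hmp k (ε/8) (by linarith)
  obtain ⟨D, hD⟩ := exists_nat_gt (3 / (ε/4))
  have hD0 : (0:ℝ) < D := lt_trans (by positivity) hD
  rw [div_lt_iff₀ (by linarith)] at hD
  obtain ⟨g, hgc, hg⟩ := exists_table (k+1) (fun x => ⌈D * (- Real.logb 2 (qq ρ η x))⌉₊)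
  have hq1 : ∀ x : BStr, x.length = k + 1 → qq ρ η x ≤ 1 := by
    intro x hx
    rcases x with _ | ⟨b, x⟩
    · simp at hx
    · have h1 := qq_sum hmp hη x
      have h2 := qq_pos (ρ := ρ) hη (false :: x)
      have h3 := qq_pos (ρ := ρ) hη (true :: x)
      cases b <;> linarith
  have hl0 : ∀ x : BStr, x.length = k + 1 → 0 ≤ - Real.logb 2 (qq ρ η x) := by
    intro x hx
    have := Real.logb_nonpos (b := 2) (by norm_num) (qq_pos (ρ := ρ) hη x).le (hq1 x hx)
    linarith
  have hI : ∫ Z, (g (seg Z (k+1)) : ℝ) ∂ρ ≤ D * (s + ε/4) + 1 := by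
    have h1 : ∫ Z, (g (seg Z (k+1)) : ℝ) ∂ρ ≤ ∫ Z, (D * (- Real.logb 2 (qq ρ η (seg Z (k+1)))) + 1) ∂ρ := by
      refine integral_mono (integrable_seg ρ (fun x => (g x : ℝ)) (k+1))
        (integrable_seg ρ (fun x => D * (- Real.logb 2 (qq ρ η x)) + 1) (k+1)) fun Z => ?_
      simp only
      rw [hg _ (seg_length _ _)]
      exact (Nat.ceil_lt_add_one (mul_nonneg hD0.le (hl0 _ (seg_length _ _)))).le
    refine h1.trans ?_
    rw [integral_add ((integrable_seg ρ (fun x => D * (- Real.logb 2 (qq ρ η x))) (k+1))) (integrable_const _),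
      integral_const_mul, integral_seg ρ (fun x => - Real.logb 2 (qq ρ η x))]
    have h2 : ∑ v : Fin (k+1) → Bool, -Real.logb 2 (qq ρ η (List.ofFn v)) * (ρ (cyl (List.ofFn v))).toReal ≤ s + ε/4 := by
      refine le_trans hq ?_
      linarith
    have h3 := mul_le_mul_of_nonneg_left h2 hD0.le
    simp
    simp at h3
    linarith
  set I := ∫ Z, (g (seg Z (k+1)) : ℝ) ∂ρ with hIdef
  have hI0 : 0 ≤ I := integral_nonneg fun Z => by positivity
  set m := ⌊I⌋₊ + 1 with hm
  have hmI : I < m := by rw [hm]; push_cast; exact Nat.lt_floor_add_one I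
  have hmI' : (m:ℝ) ≤ I + 1 := by rw [hm]; push_cast; linarith [Nat.floor_le hI0]
  have hae := cost_ae hcomp herg hml k hgc m hmI
  let A : BStr → Bool := fun x => decide (cost k g x ≤ (m+1) * x.length)
  have hA : Computable A := by
    exact dle (computable_cost k hgc) (mul (Computable.const _) (length Computable.id))
  obtain ⟨c, hc⟩ := plain_set hU hA
  set r := (2:ℝ) ^ (-(1/(D:ℝ))) with hr
  have hr0 : 0 < r := by positivity
  have hr1 : r ≤ 1 := Real.rpow_le_one_of_one_le_of_nonpos (by norm_num) (by
    have : 0 < 1/(D:ℝ) := by positivity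
    linarith)
  have hrg : ∀ x : BStr, x.length = k + 1 → r ^ g x ≤ qq ρ η x := by
    intro x hx
    have h1 : D * (- Real.logb 2 (qq ρ η x)) ≤ g x := by rw [hg x hx]; exact Nat.le_ceil _
    rw [hr, ← Real.rpow_natCast, ← Real.rpow_mul (by norm_num)]
    have h2 : -(1/(D:ℝ)) * g x ≤ Real.logb 2 (qq ρ η x) := by
      have h3 : - Real.logb 2 (qq ρ η x) ≤ g x / D := by rw [le_div_iff₀ hD0]; linarith
      have e : -(1/(D:ℝ)) * g x = - (g x / D) := by ring
      linarith
    refine (Real.rpow_le_rpow_of_exponent_le (by norm_num) h2).trans (le_of_eq ?_)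
    exact Real.rpow_logb (by norm_num) (by norm_num) (qq_pos hη x)
  have hcount : ∀ n : ℕ, rank A n (2 ^ n) ≤ 2 ^ ⌈(k:ℝ) + (m+1) * n / D⌉₊ := by
    intro n
    have h1 : SS n (fun x => if A x = true then 1 else 0) * r ^ ((m+1)*n) ≤ 2 ^ k := by
      rw [← SS_mul_right]
      refine (SS_mono (g := fun x => r ^ cost k g x) fun x hx => ?_).trans
        ((cost_kraft k g r hr0.le ?_ n).trans (pow_le_pow_right₀ (by norm_num) (min_le_right _ _)))
      · split_ifs with h
        · rw [one_mul]
          simp only [A, decide_eq_true_eq, hx] at h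
          exact pow_le_pow_of_le_one hr0.le hr1 h
        · rw [zero_mul]; positivity
      · intro w hw
        have h2 := hrg (false :: w) (by simp [hw])
        have h3 := hrg (true :: w) (by simp [hw])
        have := qq_sum hmp hη w
        linarith
    rw [← rank_eq_SS] at h1
    have h2 : (rank A n (2^n) : ℝ) ≤ (2:ℝ) ^ ((k:ℝ) + (m+1) * n / D) := by
      rw [Real.rpow_add (by norm_num), Real.rpow_natCast]
      have e : r ^ ((m+1)*n) * (2:ℝ) ^ (((m:ℝ)+1) * n / D) = 1 := by
        rw [hr, ← Real.rpow_natCast, ← Real.rpow_mul (by norm_num), ← Real.rpow_add (by norm_num)]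
        push_cast
        rw [show -(1/(D:ℝ)) * (((m:ℝ)+1)*n) + ((m:ℝ)+1) * n / D = 0 by ring, Real.rpow_zero]
      have h3 := mul_le_mul_of_nonneg_right h1 (show (0:ℝ) ≤ (2:ℝ) ^ (((m:ℝ)+1) * n / D) by positivity)
      rw [mul_assoc, e, mul_one] at h3
      exact h3
    have h3 : (rank A n (2^n) : ℝ) ≤ (2:ℝ) ^ (⌈(k:ℝ) + (m+1) * n / D⌉₊ : ℝ) :=
      h2.trans (Real.rpow_le_rpow_of_exponent_le (by norm_num) (Nat.le_ceil _))
    rw [Real.rpow_natCast] at h3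
    exact_mod_cast h3
  have hmD : ((m:ℝ) + 1) / D ≤ s + ε/2 := by
    rw [div_le_iff₀ hD0]
    nlinarith
  filter_upwards [hae] with Z hZ
  filter_upwards [hZ, sqrt_small (show 0 < ε/2 by linarith) (k + 1 + c) 0] with n h1 h2
  have h3 := hc n _ (hcount n) (seg Z n) (seg_length _ _) (by
    simp only [A, decide_eq_true_eq, seg_length]; exact h1)
  have h4 : (cpx U (seg Z n) : ℝ) ≤ ⌈(k:ℝ) + (m+1) * n / D⌉₊ + 3 * Nat.sqrt n + c := by exact_mod_cast h3
  have h5 := (Nat.ceil_lt_add_one (show 0 ≤ (k:ℝ) + (m+1) * n / D by positivity)).le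
  have h6 : ((m:ℝ)+1) * n / D ≤ (s + ε/2) * n := by
    rw [mul_div_right_comm]
    exact mul_le_mul_of_nonneg_right hmD (by positivity)
  rw [add_zero] at h2
  linarith

theorem tendsto_ae {U : BStr →. BStr} (hU : UniversalPlain U) {ρ μ : Measure Cantor} [IsProbabilityMeasure ρ]
    (hcomp : ComputableMeasure ρ) (herg : Ergodic shift ρ)
    {s : ℝ} (hs : Tendsto (entropyAt ρ) atTop (nhds s)) (hml : MLAC μ ρ) :
    ∀ᵐ Z ∂μ, Tendsto (fun n : ℕ => (cpx U (seg Z n) : ℝ) / n) atTop (nhds s) := by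
  have h1 : ∀ᵐ Z ∂μ, ∀ j : ℕ, ∀ᶠ n : ℕ in atTop, (cpx U (seg Z n) : ℝ) ≤ (s + 1/((j:ℝ)+1)) * n :=
    ae_all_iff.2 fun j => upper_ae hU hcomp herg hs hml (by positivity)
  have h2 : ∀ᵐ Z ∂μ, ∀ p : {p : ℕ × ℕ // 0 < p.2 ∧ (p.1:ℝ)/p.2 < s}, ∃ C : ℝ, ∀ᶠ n : ℕ in atTop,
      ((p.1.1:ℝ)/p.1.2) * n - C ≤ cpx U (seg Z n) :=
    ae_all_iff.2 fun p => lower_ae hU hcomp herg hs hml p.1.1 p.1.2 p.2.1 p.2.2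
  filter_upwards [h1, h2] with Z hu hl
  refine tendsto_order.2 ⟨fun l hls => ?_, fun u hsu => ?_⟩
  · rcases lt_or_ge l 0 with h0 | h0
    · exact Eventually.of_forall fun n => lt_of_lt_of_le h0 (by positivity)
    · obtain ⟨q, hq1, hq2⟩ := exists_rat_btwn hls
      have hq0 : 0 < q := by exact_mod_cast lt_of_le_of_lt h0 hq1
      have e : ((q.num.toNat:ℕ):ℝ) / (q.den:ℝ) = (q:ℝ) := by
        have e1 : ((q.num.toNat : ℕ) : ℤ) = q.num := Int.toNat_of_nonneg (Rat.num_nonneg.2 hq0.le)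
        have e2 : ((q.num.toNat:ℕ):ℝ) = (q.num : ℝ) := by exact_mod_cast congrArg (fun z : ℤ => (z:ℝ)) e1
        rw [e2]; exact (Rat.cast_def q).symm
      obtain ⟨C, hC⟩ := hl ⟨(q.num.toNat, q.den), q.den_pos, by simp only; rw [e]; exact hq2⟩
      simp only [e] at hC
      obtain ⟨N, hN⟩ := exists_nat_gt (C / (q - l))
      rw [div_lt_iff₀ (by linarith)] at hN
      filter_upwards [hC, eventually_ge_atTop N, eventually_gt_atTop 0] with n hn hnN hn0
      have hn0' : (0:ℝ) < n := by exact_mod_cast hn0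
      have hnN' : (N:ℝ) ≤ n := by exact_mod_cast hnN
      rw [lt_div_iff₀ hn0']
      have := mul_le_mul_of_nonneg_right hnN' (show (0:ℝ) ≤ q - l by linarith)
      nlinarith
  · obtain ⟨j, hj⟩ := exists_nat_one_div_lt (show 0 < u - s by linarith)
    filter_upwards [hu j, eventually_gt_atTop 0] with n hn hn0
    have hn0' : (0:ℝ) < n := by exact_mod_cast hn0
    rw [div_lt_iff₀ hn0']
    refine hn.trans_lt ?_
    exact mul_lt_mul_of_pos_right (by linarith) hn0'

theorem avg_eq (U : BStr →. BStr) (μ : Measure Cantor) [IsProbabilityMeasure μ] (n : ℕ) :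
    avgCpx U μ n = ∫ Z, (cpx U (seg Z n) : ℝ) ∂μ :=
  (integral_seg μ (fun x => (cpx U x : ℝ)) n).symm

theorem tendsto_C {U : BStr →. BStr} (hU : UniversalPlain U) {ρ μ : Measure Cantor} [IsProbabilityMeasure ρ]
    [IsProbabilityMeasure μ] (hcomp : ComputableMeasure ρ) (herg : Ergodic shift ρ)
    {s : ℝ} (hs : Tendsto (entropyAt ρ) atTop (nhds s)) (hml : MLAC μ ρ) :
    Tendsto (fun n => avgCpx U μ n / (n : ℝ)) atTop (nhds s) := by
  obtain ⟨c, hc⟩ := plain_id hU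
  have h := tendsto_integral_of_dominated_convergence (μ := μ)
    (F := fun n Z => (cpx U (seg Z n) : ℝ) / n) (f := fun _ => s) (fun _ => (1:ℝ) + c)
    (fun n => (integrable_seg μ (fun x => (cpx U x : ℝ) / n) n).aestronglyMeasurable)
    (integrable_const _)
    (fun n => Eventually.of_forall fun Z => by
      rw [Real.norm_of_nonneg (by positivity)]
      rcases Nat.eq_zero_or_pos n with rfl | hn
      · simp; positivity
      · have hn1 : (1:ℝ) ≤ n := by exact_mod_cast hn
        have h1 := hc (seg Z n)
        rw [seg_length] at h1
        have h2 : (cpx U (seg Z n) : ℝ) ≤ n + c := by exact_mod_cast h1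
        rw [div_le_iff₀ (by linarith)]
        have : (c:ℝ) ≤ c * n := le_mul_of_one_le_right (by positivity) hn1
        linarith)
    (tendsto_ae hU hcomp herg hs hml)
  simp only [integral_const, probReal_univ, one_smul] at h
  refine h.congr fun n => ?_
  rw [avg_eq, integral_div]

theorem tendsto_K {U UK : BStr →. BStr} (hU : UniversalPlain U) (hUK : UniversalPrefixFree UK)
    {μ : Measure Cantor} [IsProbabilityMeasure μ] {s : ℝ}
    (h : Tendsto (fun n => avgCpx U μ n / (n : ℝ)) atTop (nhds s)) :
    Tendsto (fun n => avgCpx UK μ n / (n : ℝ)) atTop (nhds s) := by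
  obtain ⟨c, hc⟩ := plain_id hU
  obtain ⟨c1, hc1⟩ := C_le_K hU hUK
  obtain ⟨c2, hc2⟩ := K_le_C hU hUK
  have h1 : ∀ n, avgCpx U μ n - c1 ≤ avgCpx UK μ n := by
    intro n
    rw [avg_eq, avg_eq]
    have := integral_mono (integrable_seg μ (fun x => (cpx U x : ℝ)) n)
      (integrable_seg μ (fun x => (cpx UK x : ℝ) + c1) n) (fun Z => by
        have := hc1 (seg Z n); simp only; exact_mod_cast this)
    rw [integral_add (integrable_seg μ (fun x => (cpx UK x : ℝ)) n) (integrable_const _)] at this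
    simp at this
    linarith
  have h2 : ∀ n, avgCpx UK μ n ≤ avgCpx U μ n + (c2 + 3 * (Nat.sqrt (n + c) : ℝ)) := by
    intro n
    rw [avg_eq, avg_eq]
    have := integral_mono (integrable_seg μ (fun x => (cpx UK x : ℝ)) n)
      (integrable_seg μ (fun x => (cpx U x : ℝ) + (c2 + 3 * (Nat.sqrt (n + c) : ℝ))) n) (fun Z => by
        have h3 := hc2 (seg Z n)
        have h4 := hc (seg Z n)
        rw [seg_length] at h4
        have h5 := Nat.sqrt_le_sqrt h4
        have h6 : cpx UK (seg Z n) ≤ cpx U (seg Z n) + (c2 + 3 * Nat.sqrt (n + c)) := by omega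
        simp only; exact_mod_cast h6)
    rw [integral_add (integrable_seg μ (fun x => (cpx U x : ℝ)) n) (integrable_const _)] at this
    simpa using this
  refine tendsto_order.2 ⟨fun l hl => ?_, fun u hu => ?_⟩
  · have h3 : Tendsto (fun n : ℕ => avgCpx U μ n / (n : ℝ) - c1 / n) atTop (nhds (s - 0)) :=
      h.sub (tendsto_const_div_atTop_nhds_zero_nat _)
    rw [sub_zero] at h3
    filter_upwards [h3.eventually (lt_mem_nhds hl)] with n hn
    refine hn.trans_le ?_
    rw [← sub_div]
    exact div_le_div_of_nonneg_right (h1 n) (by positivity)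
  · filter_upwards [h.eventually (gt_mem_nhds (show s < (s + u)/2 by linarith)),
      sqrt_small (show 0 < (u - s)/2 by linarith) c2 c, eventually_gt_atTop 0] with n hn hn2 hn0
    have hn0' : (0:ℝ) < n := by exact_mod_cast hn0
    rw [div_lt_iff₀ hn0'] at hn ⊢
    have := h2 n
    nlinarith

end CT

/-- for a computable shift-invariant ergodic measure `ρ` with
entropy `H(ρ) = s` and any measure `μ ≪_ML ρ`, both `K(μ↾n)/n` and `C(μ↾n)/n`
converge to `H(ρ)`. -/
theorem avg_complexity_tendsto_entropy
    (U UK : BStr →. BStr) (hU : UniversalPlain U) (hUK : UniversalPrefixFree UK)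
    (ρ : Measure Cantor) [IsProbabilityMeasure ρ]
    (hcomp : ComputableMeasure ρ) (herg : Ergodic shift ρ)
    (s : ℝ) (hs : Tendsto (entropyAt ρ) atTop (nhds s))
    (μ : Measure Cantor) [IsProbabilityMeasure μ] (hml : MLAC μ ρ) :
    Tendsto (fun n => avgCpx UK μ n / (n : ℝ)) atTop (nhds s) ∧
    Tendsto (fun n => avgCpx U μ n / (n : ℝ)) atTop (nhds s) := by
  have hC := CT.tendsto_C hU hcomp herg hs hml
  exact ⟨CT.tendsto_K hU hUK hC, hC⟩
end

section
/- Every strongly C-trivial Borel probability measure on 2^ℕ is strongly K-trivial. -/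
open MeasureTheory Filter

/-- `μ` is strongly trivial for the complexity notion given by the machine
`U`: `μ = Σ_s α_s δ_{A_s}` is a (finite or countable) convex combination of
Dirac measures on sequences `A_s` that are trivial via constants `b_s`
(`cpx(A_s↾n) ≤ cpx(n) + b_s` for all `n`) with `Σ_s α_s·b_s < ∞`. -/
def StronglyTrivial (U : BStr →. BStr) (μ : Measure Cantor) : Prop :=
  ∃ (A : ℕ → Cantor) (α : ℕ → ENNReal) (b : ℕ → ℕ),
    (∑' s, α s) = 1 ∧
    μ = Measure.sum (fun s => α s • Measure.dirac (A s)) ∧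
    (∀ s n, cpx U (seg (A s) n) ≤ cpxN U n + b s) ∧
    (∑' s, α s * (b s : ENNReal)) ≠ ⊤


/-! ### Strings of a given length -/

/-- All binary strings of length `n`. -/
def strs (n : ℕ) : List BStr :=
  Nat.rec [[]] (fun _ l => l.map (List.cons true) ++ l.map (List.cons false)) n

theorem strs_succ (n : ℕ) :
    strs (n + 1) = (strs n).map (List.cons true) ++ (strs n).map (List.cons false) := rfl

theorem mem_strs (n : ℕ) (l : BStr) : l ∈ strs n ↔ l.length = n := by
  induction n generalizing l with
  | zero => simp [strs]
  | succ n ih =>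
    rw [strs_succ]
    cases l with
    | nil => simp
    | cons b l => cases b <;> simp [ih]

theorem length_strs (n : ℕ) : (strs n).length = 2 ^ n := by
  induction n with
  | zero => simp [strs]
  | succ n ih => rw [strs_succ]; simp [ih, pow_succ]; ring

theorem nodup_strs (n : ℕ) : (strs n).Nodup := by
  induction n with
  | zero => simp [strs]
  | succ n ih =>
    rw [strs_succ, List.nodup_append]
    refine ⟨ih.map (List.cons_injective), ih.map (List.cons_injective), ?_⟩
    simp

theorem primrec_strs : Primrec strs := by
  have h : Primrec₂ (fun (_ : ℕ) (l : List BStr) =>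
      l.map (List.cons true) ++ l.map (List.cons false)) :=
    Primrec.list_append.comp
      (Primrec.list_map Primrec.snd (Primrec.list_cons.comp (Primrec.const true) Primrec.snd).to₂)
      (Primrec.list_map Primrec.snd (Primrec.list_cons.comp (Primrec.const false) Primrec.snd).to₂)
  exact Primrec.nat_rec₁ _ h

/-- Strings of length at most `m`. -/
def strsLe (m : ℕ) : Finset BStr :=
  (Finset.range (m + 1)).biUnion (fun k => (strs k).toFinset)

theorem mem_strsLe (m : ℕ) (l : BStr) : l ∈ strsLe m ↔ l.length ≤ m := by
  simp [strsLe, mem_strs]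

theorem card_strsLe (m : ℕ) : (strsLe m).card ≤ 2 ^ (m + 1) := by
  refine Finset.card_biUnion_le.trans ?_
  have h : ∀ k ∈ Finset.range (m + 1), ((strs k).toFinset).card = 2 ^ k := fun k _ => by
    rw [List.toFinset_card_of_nodup (nodup_strs k), length_strs]
  rw [Finset.sum_congr rfl h]
  exact (Nat.geomSum_lt le_rfl (by simp)).le

/-- Value of a binary string. -/
def bval (l : BStr) : ℕ := l.foldr (fun b n => 2 * n + cond b 1 0) 0

theorem primrec_bval : Primrec bval := by
  unfold bval
  refine Primrec.list_foldr (h := fun _ (p : Bool × ℕ) => 2 * p.2 + cond p.1 1 0)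
    Primrec.id (Primrec.const 0) ?_
  exact Primrec.nat_add.comp
    (Primrec.nat_mul.comp (Primrec.const 2) (Primrec.snd.comp Primrec.snd))
    (Primrec.cond (Primrec.fst.comp Primrec.snd) (Primrec.const 1) (Primrec.const 0))

theorem bval_surj (k i : ℕ) (h : i < 2 ^ k) : ∃ l : BStr, l.length = k ∧ bval l = i := by
  induction k generalizing i with
  | zero => exact ⟨[], rfl, by simp [bval] at *; omega⟩
  | succ k ih =>
    obtain ⟨l, hl, hv⟩ := ih (i / 2) (by rw [pow_succ] at h; omega)
    refine ⟨(i % 2 == 1) :: l, by simp [hl], ?_⟩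
    have : bval ((i % 2 == 1) :: l) = 2 * bval l + cond (i % 2 == 1) 1 0 := rfl
    rw [this, hv]
    rcases Nat.mod_two_eq_zero_or_one i with h | h <;> simp [h] <;> omega

/-! ### Enumeration without repetitions -/

/-- Insert an optional element in a list when it is new. -/
def insOpt (l : List BStr) (o : Option BStr) : List BStr :=
  o.casesOn l (fun x => if x ∈ l then l else l ++ [x])

/-- The list of the distinct elements enumerated before stage `t`. -/
def enumL (e : ℕ → Option BStr) (t : ℕ) : List BStr :=
  Nat.rec [] (fun t l => insOpt l (e t)) t

theorem enumL_succ (e : ℕ → Option BStr) (t : ℕ) : enumL e (t + 1) = insOpt (enumL e t) (e t) := rfl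

theorem insOpt_pre (l : List BStr) (o : Option BStr) : l <+: insOpt l o := by
  cases o with
  | none => exact List.prefix_rfl
  | some x =>
    simp only [insOpt]
    split_ifs
    · exact List.prefix_rfl
    · exact List.prefix_append _ _

theorem enumL_mono (e : ℕ → Option BStr) {s t : ℕ} (h : s ≤ t) : enumL e s <+: enumL e t := by
  induction t, h using Nat.le_induction with
  | base => exact List.prefix_rfl
  | succ t _ ih => exact ih.trans (insOpt_pre _ _)

theorem enumL_nodup (e : ℕ → Option BStr) (t : ℕ) : (enumL e t).Nodup := by
  induction t with
  | zero => exact List.nodup_nil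
  | succ t ih =>
    rw [enumL_succ]
    cases e t with
    | none => exact ih
    | some x =>
      simp only [insOpt]
      split_ifs with h
      · exact ih
      · rw [List.nodup_append]
        refine ⟨ih, by simp, ?_⟩
        intro a ha b hb
        simp at hb
        rintro rfl
        exact h (hb ▸ ha)

theorem enumL_sound (e : ℕ → Option BStr) (t : ℕ) : ∀ x ∈ enumL e t, ∃ s, x ∈ e s := by
  induction t with
  | zero => intro x hx; cases hx
  | succ t ih =>
    intro x hx
    rw [enumL_succ] at hx
    cases h : e t with
    | none => rw [h] at hx; exact ih x hx
    | some y =>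
      rw [h] at hx
      simp only [insOpt] at hx
      split_ifs at hx
      · exact ih x hx
      · rcases List.mem_append.1 hx with hx | hx
        · exact ih x hx
        · exact ⟨t, by rw [h]; simpa using (List.mem_singleton.1 hx).symm⟩

theorem enumL_complete (e : ℕ → Option BStr) (t : ℕ) (x : BStr) (h : x ∈ e t) :
    x ∈ enumL e (t + 1) := by
  rw [enumL_succ, Option.mem_def.1 h]
  simp only [insOpt]
  split_ifs with h'
  · exact h'
  · simp

theorem primrec_insOpt : Primrec₂ insOpt := by
  have hmem : PrimrecRel (fun (l : List BStr) (x : BStr) => ∃ a ∈ l, a = x) :=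
    PrimrecRel.exists_mem_list Primrec.eq
  have hmem' : PrimrecPred (fun p : (List BStr × Option BStr) × BStr => p.2 ∈ p.1.1) :=
    (hmem.comp (Primrec.fst.comp Primrec.fst) Primrec.snd).of_eq (by simp)
  refine Primrec.option_casesOn Primrec.snd Primrec.fst ?_
  exact Primrec.ite hmem' (Primrec.fst.comp Primrec.fst)
    (Primrec.list_concat.comp (Primrec.fst.comp Primrec.fst) Primrec.snd)

theorem exists_enum {α : Type} [Primcodable α] (e : α → ℕ → Option BStr) (he : Primrec₂ e) :
    ∃ f : α → ℕ →. BStr, Partrec₂ f ∧ ∀ a N,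
      (∀ F : Finset BStr, (∀ x ∈ F, ∃ t, x ∈ e a t) → F.card ≤ N) →
      ∀ t x, x ∈ e a t → ∃ i < N, x ∈ f a i := by
  refine ⟨fun a i => Nat.rfindOpt (fun t => (enumL (e a) t)[i]?), ?_, ?_⟩
  · have h1 : Primrec₂ (fun a t => enumL (e a) t) := by
      refine (Primrec.nat_rec (f := fun _ : α => ([] : List BStr))
        (g := fun a (p : ℕ × List BStr) => insOpt p.2 (e a p.1)) (Primrec.const []) ?_)
      exact primrec_insOpt.comp (Primrec.snd.comp Primrec.snd)
        (he.comp Primrec.fst (Primrec.fst.comp Primrec.snd))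
    refine Partrec.rfindOpt (f := fun (p : α × ℕ) t => (enumL (e p.1) t)[p.2]?) ?_
    exact (Primrec.list_getElem?.comp
      (h1.comp (Primrec.fst.comp Primrec.fst) Primrec.snd)
      (Primrec.snd.comp Primrec.fst)).to_comp
  · intro a N hN t x hx
    have hm := enumL_complete (e a) t x hx
    obtain ⟨i, hi, hxi⟩ := List.getElem_of_mem hm
    refine ⟨i, ?_, ?_⟩
    · have := hN (enumL (e a) (t + 1)).toFinset (fun y hy =>
        enumL_sound (e a) (t + 1) y (List.mem_toFinset.1 hy))
      rw [List.toFinset_card_of_nodup (enumL_nodup _ _)] at this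
      omega
    · rw [Nat.rfindOpt_mono]
      · exact ⟨t + 1, by simp [List.getElem?_eq_getElem hi, hxi]⟩
      · intro y m n hmn hy
        obtain ⟨w, hw⟩ := enumL_mono (e a) hmn
        have hlt : i < (enumL (e a) m).length := (List.getElem?_eq_some_iff.1 hy).1
        rw [← hw, List.getElem?_append_left hlt]
        exact hy

/-! ### Stages of a machine -/

theorem exists_stage (U : BStr →. BStr) (hU : Partrec U) :
    ∃ u : ℕ → BStr → Option BStr, Primrec₂ u ∧
      (∀ q x, x ∈ U q ↔ ∃ s, x ∈ u s q) ∧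
      (∀ s t q x, s ≤ t → x ∈ u s q → x ∈ u t q) := by
  obtain ⟨c, hc⟩ := Nat.Partrec.Code.exists_code.1 hU
  refine ⟨fun s q => (Nat.Partrec.Code.evaln s c (Encodable.encode q)).bind Encodable.decode,
    ?_, ?_, ?_⟩
  · refine Primrec.option_bind ?_ (Primrec.decode.comp Primrec.snd).to₂
    exact Nat.Partrec.Code.primrec_evaln.comp
      (Primrec.pair (Primrec.pair Primrec.fst (Primrec.const c))
        (Primrec.encode.comp Primrec.snd))
  · intro q x
    have h1 : x ∈ U q ↔ Encodable.encode x ∈ c.eval (Encodable.encode q) := by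
      rw [hc]; simp
    constructor
    · intro h
      obtain ⟨s, hs⟩ := Nat.Partrec.Code.evaln_complete.1 (h1.1 h)
      exact ⟨s, by simp [Option.mem_def.1 hs]⟩
    · rintro ⟨s, hs⟩
      obtain ⟨y, hy, hyx⟩ := Option.bind_eq_some_iff.1 hs
      have := Nat.Partrec.Code.evaln_sound hy
      rw [hc] at this
      simp at this
      obtain ⟨a, ha, rfl⟩ := this
      simp at hyx
      exact hyx ▸ ha
  · intro s t q x hst h
    obtain ⟨y, hy, hyx⟩ := Option.bind_eq_some_iff.1 h
    exact Option.bind_eq_some_iff.2 ⟨y, Nat.Partrec.Code.evaln_mono hst hy, hyx⟩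

/-! ### The candidate sets -/

/-- `w = (x, s, qs)` witnesses that `x` is a candidate for `a = (n, B)`. -/
def Wit (u : ℕ → BStr → Option BStr) (a : ℕ × ℕ) (w : BStr × ℕ × List BStr) : Prop :=
  ∀ p ∈ strs a.1, ∃ q ∈ w.2.2, q.length ≤ a.1 + a.2 ∧
    (u w.2.1 q).map List.length = some (Encodable.encode p) ∧
    (u w.2.1 q).map (List.take a.1) = some w.1

theorem primrec_wit (u : ℕ → BStr → Option BStr) (hu : Primrec₂ u) : PrimrecRel (Wit u) := by
  have h0 : PrimrecRel (fun (q : BStr) (z : BStr × (ℕ × ℕ) × (BStr × ℕ × List BStr)) =>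
      q.length ≤ z.2.1.1 + z.2.1.2 ∧
      (u z.2.2.2.1 q).map List.length = some (Encodable.encode z.1) ∧
      (u z.2.2.2.1 q).map (List.take z.2.1.1) = some z.2.2.1) := by
    have hz : Primrec (fun v : BStr × (BStr × (ℕ × ℕ) × (BStr × ℕ × List BStr)) => v.2.2.1) :=
      Primrec.fst.comp (Primrec.snd.comp Primrec.snd)
    have hw : Primrec (fun v : BStr × (BStr × (ℕ × ℕ) × (BStr × ℕ × List BStr)) => v.2.2.2) :=
      Primrec.snd.comp (Primrec.snd.comp Primrec.snd)
    have huu : Primrec (fun v : BStr × (BStr × (ℕ × ℕ) × (BStr × ℕ × List BStr)) =>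
        u v.2.2.2.2.1 v.1) :=
      hu.comp (Primrec.fst.comp (Primrec.snd.comp hw)) Primrec.fst
    refine PrimrecPred.and ?_ (PrimrecPred.and ?_ ?_)
    · exact Primrec.nat_le.comp (Primrec.list_length.comp Primrec.fst)
        (Primrec.nat_add.comp (Primrec.fst.comp hz) (Primrec.snd.comp hz))
    · exact Primrec.eq.comp
        (Primrec.option_map huu (Primrec.list_length.comp Primrec.snd).to₂)
        (Primrec.option_some.comp (Primrec.encode.comp (Primrec.fst.comp Primrec.snd)))
    · exact Primrec.eq.comp
        (Primrec.option_map huu (Primrec.list_take.comp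
          (Primrec.fst.comp (hz.comp Primrec.fst)) Primrec.snd).to₂)
        (Primrec.option_some.comp (Primrec.fst.comp hw))
  have h1 : PrimrecRel (fun (p : BStr) (z : (ℕ × ℕ) × (BStr × ℕ × List BStr)) =>
      ∃ q ∈ z.2.2.2, q.length ≤ z.1.1 + z.1.2 ∧
      (u z.2.2.1 q).map List.length = some (Encodable.encode p) ∧
      (u z.2.2.1 q).map (List.take z.1.1) = some z.2.1) :=
    h0.exists_mem_list.comp
      (Primrec.snd.comp (Primrec.snd.comp (Primrec.snd.comp Primrec.snd))) Primrec.id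
  exact h1.forall_mem_list.comp (primrec_strs.comp (Primrec.fst.comp Primrec.fst)) Primrec.id

theorem wit_card (U : BStr →. BStr) (u : ℕ → BStr → Option BStr)
    (hs : ∀ q x, x ∈ U q ↔ ∃ s, x ∈ u s q) (n B : ℕ) (F : Finset BStr)
    (hF : ∀ x ∈ F, ∃ s qs, Wit u (n, B) (x, s, qs)) : F.card ≤ 2 ^ (B + 1) := by
  classical
  have key : ∀ z : BStr × BStr, ∃ q : BStr, z ∈ F ×ˢ (strs n).toFinset →
      q.length ≤ n + B ∧ ∃ y ∈ U q, y.length = Encodable.encode z.2 ∧ y.take n = z.1 := by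
    rintro ⟨x, p⟩
    by_cases hz : (x, p) ∈ F ×ˢ (strs n).toFinset
    · simp only [Finset.mem_product, List.mem_toFinset] at hz
      obtain ⟨s, qs, hw⟩ := hF x hz.1
      obtain ⟨q, -, h1, h2, h3⟩ := hw p hz.2
      refine ⟨q, fun _ => ⟨h1, ?_⟩⟩
      obtain ⟨y, hy, hy2⟩ := Option.map_eq_some_iff.1 h2
      obtain ⟨y', hy', hy3⟩ := Option.map_eq_some_iff.1 h3
      have e : y' = y := by
        have := hy'.symm.trans hy
        exact Option.some.inj this
      subst e
      exact ⟨y', (hs q y').2 ⟨s, hy⟩, hy2, hy3⟩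
    · exact ⟨[], fun h => absurd h hz⟩
  choose g hg using key
  have hcard : (F ×ˢ (strs n).toFinset).card ≤ (strsLe (n + B)).card := by
    refine Finset.card_le_card_of_injOn g ?_ ?_
    · intro z hz
      exact (mem_strsLe _ _).2 (hg z hz).1
    · rintro ⟨x, p⟩ hz ⟨x', p'⟩ hz' he
      obtain ⟨-, y, hy, h1, h2⟩ := hg _ hz
      obtain ⟨-, y', hy', h1', h2'⟩ := hg _ hz'
      rw [he] at hy
      have e := Part.mem_unique hy hy'
      subst e
      have hp : p = p' := Encodable.encode_injective (h1.symm.trans h1')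
      have hx : x = x' := h2.symm.trans h2'
      rw [hp, hx]
  rw [Finset.card_product, List.toFinset_card_of_nodup (nodup_strs n), length_strs] at hcard
  have h2 := hcard.trans (card_strsLe (n + B))
  have h3 : (2 : ℕ) ^ (n + B + 1) = 2 ^ (B + 1) * 2 ^ n := by rw [← pow_add]; congr 1; omega
  rw [h3] at h2
  exact Nat.le_of_mul_le_mul_right h2 (by positivity)

/-- The candidates for `(n, B)` are uniformly enumerable by indices below `2^(B+1)`. -/
theorem exists_cand (U : BStr →. BStr) (hU : Partrec U) :
    ∃ f : ℕ × ℕ → ℕ →. BStr, Partrec₂ f ∧ ∀ n B (x : BStr),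
      (∀ p : BStr, p.length = n → ∃ q : BStr, q.length ≤ n + B ∧
        ∃ y ∈ U q, y.length = Encodable.encode p ∧ y.take n = x) →
      ∃ i < 2 ^ (B + 1), x ∈ f (n, B) i := by
  classical
  obtain ⟨u, hu, hs, hm⟩ := exists_stage U hU
  let e : ℕ × ℕ → ℕ → Option BStr := fun a t =>
    (Encodable.decode (α := BStr × ℕ × List BStr) t).bind
      (fun w => if Wit u a w then some w.1 else none)
  have he : Primrec₂ e := by
    refine Primrec.option_bind (Primrec.decode.comp Primrec.snd) ?_
    exact Primrec.ite ((primrec_wit u hu).comp (Primrec.fst.comp Primrec.fst) Primrec.snd)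
      (Primrec.option_some.comp (Primrec.fst.comp Primrec.snd)) (Primrec.const none)
  obtain ⟨f, hf, hfe⟩ := exists_enum e he
  refine ⟨f, hf, ?_⟩
  intro n B x hx
  have hx' : ∃ s qs, Wit u (n, B) (x, s, qs) := by
    choose! q hq y hy h1 h2 using hx
    have : ∀ p : BStr, ∃ s, p.length = n → y p ∈ u s (q p) := by
      intro p
      by_cases hp : p.length = n
      · obtain ⟨s, hs'⟩ := (hs _ _).1 (hy p hp)
        exact ⟨s, fun _ => hs'⟩
      · exact ⟨0, fun h => absurd h hp⟩
    choose st hst using this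
    refine ⟨(strs n).toFinset.sup st, (strs n).map q, ?_⟩
    intro p hp
    have hpn : p.length = n := (mem_strs _ _).1 hp
    have hmem := hm _ _ _ _ (Finset.le_sup (f := st) (List.mem_toFinset.2 hp)) (hst p hpn)
    refine ⟨q p, List.mem_map_of_mem hp, hq p hpn, ?_, ?_⟩
    · simp only [Option.mem_def.1 hmem, Option.map_some, h1 p hpn]
    · simp only [Option.mem_def.1 hmem, Option.map_some, h2 p hpn]
  obtain ⟨s, qs, hw⟩ := hx'
  refine hfe (n, B) _ ?_ (Encodable.encode (x, s, qs)) x ?_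
  · intro F hF
    refine wit_card U u hs n B F ?_
    intro z hz
    obtain ⟨t, ht⟩ := hF z hz
    obtain ⟨w, -, hw2⟩ := Option.bind_eq_some_iff.1 ht
    split_ifs at hw2 with hW
    obtain ⟨w1, w2, w3⟩ := w
    cases hw2
    exact ⟨w2, w3, hW⟩
  · show (Encodable.decode (α := BStr × ℕ × List BStr) (Encodable.encode (x, s, qs))).bind
      (fun w => if Wit u (n, B) w then some w.1 else none) = some x
    rw [Encodable.encodek, Option.bind_some, if_pos hw]

/-! ### The prefix-free machine -/

theorem findIdx_rep (B : ℕ) (w : BStr) :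
    (List.replicate B true ++ false :: w).findIdx (fun b => !b) = B := by
  induction B with
  | zero => simp [List.findIdx_cons]
  | succ B ih => simp [List.replicate_succ, List.findIdx_cons, ih]

theorem exists_machine (UK : BStr →. BStr) (hp : Partrec UK) (hpf : PrefixFreeDom UK)
    (f : ℕ × ℕ → ℕ →. BStr) (hf : Partrec₂ f) :
    ∃ M : BStr →. BStr, Partrec M ∧ PrefixFreeDom M ∧
      ∀ (p y x : BStr) (B i : ℕ), i < 2 ^ (B + 1) → y ∈ UK p → x ∈ f (y.length, B) i →
        ∃ r : BStr, r.length = p.length + 2 * B + 2 ∧ x ∈ M r := by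
  let k : BStr → ℕ := fun r => r.findIdx (fun b => !b)
  have hk : Primrec k := Primrec.list_findIdx Primrec.id (Primrec.not.comp Primrec.snd).to₂
  have hk1 : Primrec (fun r => k r + 1) := Primrec.succ.comp hk
  have hk2 : Primrec (fun r => 2 * k r + 2) :=
    Primrec.nat_add.comp (Primrec.nat_mul.comp (Primrec.const 2) hk) (Primrec.const 2)
  let M : BStr →. BStr := fun r =>
    bif decide (2 * k r + 2 ≤ r.length) then
      (UK (r.drop (2 * k r + 2))).bind (fun y =>
        f (y.length, k r) (bval ((r.drop (k r + 1)).take (k r + 1))))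
    else Part.none
  have hdom : ∀ r, (M r).Dom → 2 * k r + 2 ≤ r.length ∧ (UK (r.drop (2 * k r + 2))).Dom := by
    intro r h
    by_cases hr : 2 * k r + 2 ≤ r.length
    · simp only [M, hr, decide_true, cond_true] at h
      exact ⟨hr, h.1⟩
    · simp [M, hr] at h
  refine ⟨M, ?_, ?_, ?_⟩
  · refine Partrec.cond ?_ ?_ Partrec.none
    · exact (PrimrecPred.decide (Primrec.nat_le.comp hk2 Primrec.list_length)).to_comp
    · refine Partrec.bind (hp.comp (Primrec.list_drop.comp hk2 Primrec.id).to_comp) ?_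
      refine hf.comp
        (Primrec.pair (Primrec.list_length.comp Primrec.snd) (hk.comp Primrec.fst)).to_comp ?_
      exact ((primrec_bval.comp (Primrec.list_take.comp hk1
        (Primrec.list_drop.comp hk1 Primrec.id))).comp Primrec.fst).to_comp
  · rintro r r' h h' ⟨w, rfl⟩
    obtain ⟨h1, h2⟩ := hdom _ h
    obtain ⟨h1', h2'⟩ := hdom _ h'
    have hkk : k (r ++ w) = k r := by
      simp only [k, List.findIdx_append]
      rw [if_pos]
      have : k r < r.length := by omega
      exact this
    rw [hkk, List.drop_append_of_le_length h1] at h2'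
    have := hpf _ _ h2 h2' (List.prefix_append _ _)
    simpa using this
  · intro p y x B i hi hy hx
    obtain ⟨l, hl, hv⟩ := bval_surj (B + 1) i hi
    let r : BStr := (List.replicate B true ++ [false]) ++ (l ++ p)
    have hpre : (List.replicate B true ++ [false]).length = B + 1 := by simp
    have hkr : k r = B := by
      have := findIdx_rep B (l ++ p)
      simpa [k, r] using this
    have hlen : r.length = p.length + 2 * B + 2 := by
      simp [r, hl]; omega
    have hd1 : r.drop (B + 1) = l ++ p := by
      simp only [r]
      rw [List.drop_left' hpre]
    have hd2 : r.drop (2 * B + 2) = p := by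
      have : 2 * B + 2 = (B + 1) + (B + 1) := by omega
      rw [this, ← List.drop_drop, hd1, List.drop_left' hl]
    refine ⟨r, hlen, ?_⟩
    have hr : 2 * k r + 2 ≤ r.length := by omega
    simp only [M, hr, decide_true, cond_true]
    rw [hkr, hd2, hd1, List.take_left' hl, hv]
    exact Part.mem_bind hy hx

/-! ### Complexity -/

theorem cpx_le (U : BStr →. BStr) (x q : BStr) (h : x ∈ U q) : cpx U x ≤ q.length :=
  Nat.sInf_le ⟨q, rfl, h⟩

theorem cpx_spec (U : BStr →. BStr) (x q : BStr) (h : x ∈ U q) :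
    ∃ q' : BStr, q'.length = cpx U x ∧ x ∈ U q' :=
  Nat.sInf_mem (s := {n | ∃ q : BStr, q.length = n ∧ x ∈ U q}) ⟨_, q, rfl, h⟩

theorem primrec_numStr : Primrec numStr := by
  refine (Primrec.list_map (f := List.range) (g := fun _ _ => false)
    Primrec.list_range (Primrec.const false).to₂).of_eq ?_
  intro n
  simp [numStr]

theorem plain_spec (U : BStr →. BStr) (hU : UniversalPlain U) (x : BStr) :
    ∃ q' : BStr, q'.length = cpx U x ∧ x ∈ U q' := by
  obtain ⟨c, hc⟩ := hU.2 (fun p => Part.some p) Computable.id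
  obtain ⟨q, -, hq⟩ := hc x x (Part.mem_some x)
  exact cpx_spec U x q hq

theorem pf_spec (UK : BStr →. BStr) (hUK : UniversalPrefixFree UK) (n : ℕ) :
    ∃ q' : BStr, q'.length = cpxN UK n ∧ numStr n ∈ UK q' := by
  let M : BStr →. BStr := fun r =>
    bif decide (r = List.map (!·) (numStr (r.length - 1)) ++ [false]) then
      Part.some (numStr (r.length - 1)) else Part.none
  have hn : Primrec (fun r : BStr => numStr (r.length - 1)) :=
    primrec_numStr.comp (Primrec.nat_sub.comp Primrec.list_length (Primrec.const 1))
  have hM : Partrec M := by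
    refine Partrec.cond ?_ hn.to_comp Partrec.none
    refine (PrimrecPred.decide (Primrec.eq.comp Primrec.id ?_)).to_comp
    exact Primrec.list_append.comp
      (Primrec.list_map hn (Primrec.not.comp Primrec.snd).to₂) (Primrec.const [false])
  have hd : ∀ r, (M r).Dom → ∃ m, r = List.replicate m true ++ [false] := by
    intro r h
    by_cases hr : r = List.map (!·) (numStr (r.length - 1)) ++ [false]
    · exact ⟨r.length - 1, by simpa [numStr] using hr⟩
    · simp only [M, hr, decide_false, cond_false] at h
      exact h.elim
  have hpf : PrefixFreeDom M := by
    intro p q h h' hpq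
    obtain ⟨m, rfl⟩ := hd _ h
    obtain ⟨m', rfl⟩ := hd _ h'
    obtain ⟨w, hw⟩ := hpq
    have h1 := findIdx_rep m w
    have h2 := findIdx_rep m' []
    rw [← hw] at h2
    simp only [List.append_assoc, List.singleton_append] at h2
    rw [← h1.symm.trans h2]
  obtain ⟨c, hc⟩ := hUK.2.2 M hM hpf
  obtain ⟨q, -, hq⟩ := hc (List.replicate n true ++ [false]) (numStr n) (by
    simp [M, numStr])
  exact cpx_spec UK _ q hq

theorem seg_take (A : Cantor) (n m : ℕ) (h : n ≤ m) : (seg A m).take n = seg A n := by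
  apply List.ext_getElem?
  intro i
  simp only [seg, List.getElem?_take, List.getElem?_ofFn]
  split_ifs <;> first | rfl | omega

/-- The key estimate: C-triviality via `b` gives K-triviality via `2 * b + d`. -/
theorem key_bound (U UK : BStr →. BStr) (hU : UniversalPlain U) (hUK : UniversalPrefixFree UK) :
    ∃ d : ℕ, ∀ (A : Cantor) (b : ℕ), (∀ n, cpx U (seg A n) ≤ cpxN U n + b) →
      ∀ n, cpx UK (seg A n) ≤ cpxN UK n + (2 * b + d) := by
  obtain ⟨f, hf, hfc⟩ := exists_cand U hU.1
  obtain ⟨M, hM, hMpf, hMx⟩ := exists_machine UK hUK.1 hUK.2.1 f hf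
  obtain ⟨c, hc⟩ := hUK.2.2 M hM hMpf
  obtain ⟨c', hc'⟩ := hU.2 (fun p => Part.some (numStr (Encodable.encode p)))
    (primrec_numStr.comp Primrec.encode).to_comp
  refine ⟨2 * c' + 2 + c, ?_⟩
  intro A b hA n
  obtain ⟨i, hi, hx⟩ := hfc n (b + c') (seg A n) (by
    intro p hp
    obtain ⟨q, hq, hqU⟩ := plain_spec U hU (seg A (Encodable.encode p))
    refine ⟨q, ?_, _, hqU, by simp [seg], ?_⟩
    · obtain ⟨q', hq', hq'U⟩ := hc' p _ (Part.mem_some _)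
      have h1 := cpx_le U _ _ hq'U
      have h2 := hA (Encodable.encode p)
      unfold cpxN at h2
      omega
    · exact seg_take _ _ _ (hp ▸ Encodable.length_le_encode p))
  obtain ⟨p, hp, hpU⟩ := pf_spec UK hUK n
  obtain ⟨r, hr, hrM⟩ := hMx p (numStr n) (seg A n) (b + c') i hi hpU (by
    simpa [numStr] using hx)
  obtain ⟨q, hq, hqU⟩ := hc r _ hrM
  have := cpx_le UK _ _ hqU
  omega

/-- every strongly C-trivial measure is strongly K-trivial. -/
theorem stronglyC_trivial_implies_stronglyK_trivial
    (U UK : BStr →. BStr) (hU : UniversalPlain U) (hUK : UniversalPrefixFree UK)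
    (μ : Measure Cantor) [IsProbabilityMeasure μ]
    (hC : StronglyTrivial U μ) :
    StronglyTrivial UK μ := by
  obtain ⟨d, hd⟩ := key_bound U UK hU hUK
  obtain ⟨A, α, b, h1, h2, h3, h4⟩ := hC
  refine ⟨A, α, fun s => 2 * b s + d, h1, h2, fun s n => hd (A s) (b s) (h3 s) n, ?_⟩
  have : ∀ s, α s * ((2 * b s + d : ℕ) : ENNReal) = 2 * (α s * (b s : ENNReal)) + α s * d := by
    intro s
    push_cast
    ring
  simp only [this]
  rw [ENNReal.tsum_add, ENNReal.tsum_mul_left, ENNReal.tsum_mul_right, h1, one_mul]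
  exact ENNReal.add_ne_top.2 ⟨ENNReal.mul_ne_top (by simp) h4, by simp⟩
end
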